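/- Let n ≥ 1, c > 0, α > 0, β > 0, ε > 0, T > 0, and let m ∈ ℕ satisfy m ≥ ⌊n/2⌋ + 3. Let u : [0,T] × ℝⁿ → ℝ be a smooth spatially-Schwartz solution of the inviscid Kuznetsov equation ∂_t²u − c²Δu = αε·∂_t u·∂_t²u + βε·∇u·∇∂_t u, and assume ‖∂_t u(t,·)‖_{L^∞(ℝⁿ)} ≤ 1/(2αε) for all t ∈ [0,T]. Then, with B = (3 + 2c²)/min(1/2, c²), there exists a constant D_m > 0, depending only on m, n and c, such that for all t ∈ [0,T]: E_m[u](t) ≤ B·E_m[u](0) + D_m·max(α,β)·ε·∫₀ᵗ E_{m−1}[u](τ)^{1/2}·E_m[u](τ) dτ. -/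

import Mathlib

/-!
The proof is the energy method for quasilinear wave equations. Differentiating the equation along a
word of at most `m` space-time directions shows that every derivative `v = ∂^w u` solves the
linearised equation `(1 - αε ∂_t u) ∂_t² v - βε ∇u · ∇∂_t v - c² Δv = f`, where `f` is a sum of
products `∂^p u ∂^q u` with `1 ≤ |p|, |q| ≤ m + 1` and `|p| + |q| ≤ m + 3` (`exists_src`).
By the smallness condition the coefficient `1 - αε ∂_t u` lies in `[1/2, 3/2]`, so a weighted sum of
the quadratic energies of all these `v` (`FE`, the integral of `eN`) lies between
`min (1/2) (c²) E_m` and `(3/2 + 2c²) E_m`; the weights `wt` are chosen so that a mixed derivative is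
counted with total weight between one and two in the gradient parts, independently of `n`.
Its time derivative consists of integrals of products
`∂^p u ∂^q u ∂^r u`; these are bounded by `√E_{m-1} E_m` (`trilinear`) using Cauchy–Schwarz and the
Sobolev product estimate `‖f g‖_{L²} ≲ ‖f‖_{H^a} ‖g‖_{H^b}` for `a + b > n/2` (`bilinear`), which is
proved with the Fourier transform. Integrating in time gives the claim, with a constant depending
only on `m`, `n` and `c`.

There is one point where this argument needs care: the hypothesis only says that each time slice
is Schwartz, with no uniformity in time, so neither differentiating `∫ eN` under the integral sign
nor the boundedness of `t ↦ E_m(t)` (without which the time integral in the statement could take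
its junk value) is available for free. Both come from finite speed of propagation.
The energy identity is first integrated against a smooth cutoff supported in a cube shrinking at
speed `Λ` (`cut`, `local_energy`); the cutoff absorbs the flux as soon as the gradient of `u` is
bounded on its support. Far from the origin the initial energy on any cube of fixed size is tiny,
and a continuous induction in time, combining Grönwall's inequality (`local_gronwall`) with Sobolev
embedding on unit cubes (`box_sobolev`), shows that there all derivatives of `u` stay bounded
(`exterior_bound`). Together with compactness this bounds every derivative on the whole strip
(`strip_bound`), after which one fixed speed `Λ` works for cubes of any size, and letting their size
tend to infinity removes the cutoff (`Em_bounded`, `FE_growth`).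
-/

open MeasureTheory Real

noncomputable section

/-- Spatial partial derivative in direction `i`. -/
def pd {n : ℕ} (i : Fin n) (f : (Fin n → ℝ) → ℝ) : (Fin n → ℝ) → ℝ :=
  fun x => fderiv ℝ f x (Pi.single i 1)

/-- Iterated spatial derivative `∂_{x₁}^{A₁} ⋯ ∂_{x_n}^{A_n}` along the multi-index `A`. -/
def pdMulti {n : ℕ} (A : Fin n → ℕ) (f : (Fin n → ℝ) → ℝ) : (Fin n → ℝ) → ℝ :=
  (List.finRange n).foldr (fun i g => (pd i)^[A i] g) f

/-- Squared `L²(ℝⁿ)` norm. -/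
def L2sq {n : ℕ} (f : (Fin n → ℝ) → ℝ) : ℝ := ∫ x, (f x) ^ 2

/-- `L^p(ℝⁿ)` norm. -/
def LpNorm {n : ℕ} (p : ℝ) (f : (Fin n → ℝ) → ℝ) : ℝ := (∫ x, |f x| ^ p) ^ p⁻¹

/-- `L^∞(ℝⁿ)` (sup) norm. -/
def supNorm {n : ℕ} (f : (Fin n → ℝ) → ℝ) : ℝ := ⨆ x, |f x|

/-- The finite set of spatial multi-indices of total order at most `k`. -/
def multiIdx (n k : ℕ) : Finset (Fin n → ℕ) :=
  (Fintype.piFinset fun _ : Fin n => Finset.range (k + 1)).filter fun A => (∑ i, A i) ≤ k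

/-- Squared Sobolev `H^k(ℝⁿ)` norm: the sum of the squared `L²` norms of all spatial
derivatives of order at most `k`. -/
def Hsq {n : ℕ} (k : ℕ) (f : (Fin n → ℝ) → ℝ) : ℝ := ∑ A ∈ multiIdx n k, L2sq (pdMulti A f)

/-- Squared `H^k` norm of the spatial gradient (sum over the components). -/
def gradHsq {n : ℕ} (k : ℕ) (f : (Fin n → ℝ) → ℝ) : ℝ := ∑ i, Hsq k (pd i f)

/-- Time derivative `∂_t u`. -/
def dt {n : ℕ} (u : ℝ → (Fin n → ℝ) → ℝ) : ℝ → (Fin n → ℝ) → ℝ :=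
  fun t x => deriv (fun s => u s x) t

/-- Iterated time derivative `∂_t^k u`. -/
def dtIter {n : ℕ} (k : ℕ) (u : ℝ → (Fin n → ℝ) → ℝ) : ℝ → (Fin n → ℝ) → ℝ :=
  fun t x => iteratedDeriv k (fun s => u s x) t

/-- Spatial Laplacian `Δu`. -/
def lap {n : ℕ} (u : ℝ → (Fin n → ℝ) → ℝ) : ℝ → (Fin n → ℝ) → ℝ :=
  fun t x => ∑ i, pd i (pd i (u t)) x

/-- Euclidean inner product of the spatial gradients, `∇u · ∇v`. -/
def gradDot {n : ℕ} (u v : ℝ → (Fin n → ℝ) → ℝ) : ℝ → (Fin n → ℝ) → ℝ :=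
  fun t x => ∑ i, pd i (u t) x * pd i (v t) x

/-- Squared norm of the spatial gradient, `|∇u|²`. -/
def gradSq {n : ℕ} (u : ℝ → (Fin n → ℝ) → ℝ) : ℝ → (Fin n → ℝ) → ℝ :=
  fun t x => ∑ i, (pd i (u t) x) ^ 2

/-- A function on `ℝⁿ` is Schwartz if it underlies a `SchwartzMap`. -/
def IsSchwartz {n : ℕ} (f : (Fin n → ℝ) → ℝ) : Prop :=
  ∃ g : SchwartzMap (Fin n → ℝ) ℝ, ⇑g = f

/-- A space-time function is smooth spatially-Schwartz if it is jointly smooth and all its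
time derivatives `∂_t^k u (t, ·)` are Schwartz functions of the space variable. -/
def SmoothSchwartz {n : ℕ} (u : ℝ → (Fin n → ℝ) → ℝ) : Prop :=
  ContDiff ℝ (⊤ : ℕ∞) (fun p : ℝ × (Fin n → ℝ) => u p.1 p.2) ∧
  ∀ (k : ℕ) (t : ℝ), IsSchwartz fun x => dtIter k u t x

/-- The energy `E_m[u](t)` for the inviscid Kuznetsov equation. -/
def Em {n : ℕ} (m : ℕ) (u : ℝ → (Fin n → ℝ) → ℝ) (t : ℝ) : ℝ :=
  gradHsq m (u t) + ∑ i ∈ Finset.Icc 1 (m + 1), Hsq (m + 1 - i) fun x => dtIter i u t x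

/-- The inviscid Kuznetsov equation at time `t`. -/
def InviscidKuznetsov {n : ℕ} (c α β ε : ℝ) (u : ℝ → (Fin n → ℝ) → ℝ) (t : ℝ) : Prop :=
  ∀ x, dtIter 2 u t x - c ^ 2 * lap u t x =
    α * ε * dt u t x * dtIter 2 u t x + β * ε * gradDot u (dt u) t x

/-! ### Space-time derivatives along words -/

/-- The coordinate direction in `ℝ × ℝⁿ`: `none` is time, `some j` is the `j`-th space axis. -/
def dir {n : ℕ} : Option (Fin n) → ℝ × (Fin n → ℝ)
  | none => (1, 0)
  | some j => (0, Pi.single j 1)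

/-- Space-time partial derivative in a coordinate direction. -/
def D {n : ℕ} (d : Option (Fin n)) (f : ℝ × (Fin n → ℝ) → ℝ) : ℝ × (Fin n → ℝ) → ℝ :=
  fun p => fderiv ℝ f p (dir d)

/-- Iterated space-time derivative along a word of directions. -/
def Dw {n : ℕ} (w : List (Option (Fin n))) (f : ℝ × (Fin n → ℝ) → ℝ) : ℝ × (Fin n → ℝ) → ℝ :=
  w.foldr D f

/-- The word of spatial directions belonging to a multi-index. -/
def wordOf {n : ℕ} (A : Fin n → ℕ) : List (Option (Fin n)) :=
  (List.finRange n).flatMap fun i => List.replicate (A i) (some i)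

section calculus
variable {n : ℕ} {f g : ℝ × (Fin n → ℝ) → ℝ}

@[simp] lemma Dw_nil : Dw [] f = f := rfl
@[simp] lemma Dw_cons (d) (w) : Dw (d :: w) f = D d (Dw w f) := rfl
lemma Dw_append (w w') : Dw (w ++ w') f = Dw w (Dw w' f) := by
  simp [Dw, List.foldr_append]

lemma D_smooth (d) (hf : ContDiff ℝ (⊤ : ℕ∞) f) : ContDiff ℝ (⊤ : ℕ∞) (D d f) := by
  have : ContDiff ℝ (⊤ : ℕ∞) (fderiv ℝ f) := hf.fderiv_right (by simp)
  exact this.clm_apply contDiff_const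

lemma Dw_smooth (w) (hf : ContDiff ℝ (⊤ : ℕ∞) f) : ContDiff ℝ (⊤ : ℕ∞) (Dw w f) := by
  induction w with
  | nil => exact hf
  | cons d w ih => exact D_smooth d ih

lemma Dw_cont (w) (hf : ContDiff ℝ (⊤ : ℕ∞) f) : Continuous (Dw w f) := (Dw_smooth w hf).continuous

lemma D_add (d) (hf : ContDiff ℝ (⊤ : ℕ∞) f) (hg : ContDiff ℝ (⊤ : ℕ∞) g) :
    D d (fun p => f p + g p) = fun p => D d f p + D d g p := by
  funext p
  have h1 := (hf.differentiable (by simp)) p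
  have h2 := (hg.differentiable (by simp)) p
  have := (h1.hasFDerivAt.add h2.hasFDerivAt).fderiv
  simp only [D]
  erw [this]; rfl

lemma D_mul (d) (hf : ContDiff ℝ (⊤ : ℕ∞) f) (hg : ContDiff ℝ (⊤ : ℕ∞) g) :
    D d (fun p => f p * g p) = fun p => D d f p * g p + f p * D d g p := by
  funext p
  have h1 := (hf.differentiable (by simp)) p
  have h2 := (hg.differentiable (by simp)) p
  have := (h1.hasFDerivAt.mul h2.hasFDerivAt).fderiv
  simp only [D]
  erw [this]; simp; ring

lemma D_const (d) (k : ℝ) : D d (fun _ : ℝ × (Fin n → ℝ) => k) = fun _ => 0 := by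
  funext p; simp [D]

lemma D_const_mul (d) (k : ℝ) (hf : ContDiff ℝ (⊤ : ℕ∞) f) :
    D d (fun p => k * f p) = fun p => k * D d f p := by
  rw [D_mul d contDiff_const hf, D_const]; simp

lemma D_sum {ι : Type*} (d) (s : Finset ι) (F : ι → ℝ × (Fin n → ℝ) → ℝ)
    (hF : ∀ i ∈ s, ContDiff ℝ (⊤ : ℕ∞) (F i)) :
    D d (fun p => ∑ i ∈ s, F i p) = fun p => ∑ i ∈ s, D d (F i) p := by
  funext p
  have := (HasFDerivAt.fun_sum (u := s) (A := F) (x := p)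
    (fun i hi => ((hF i hi).differentiable (by simp) p).hasFDerivAt)).fderiv
  simp only [D]
  rw [this]; simp

lemma D_comm (d d') (hf : ContDiff ℝ (⊤ : ℕ∞) f) : D d (D d' f) = D d' (D d f) := by
  funext p
  have hs : IsSymmSndFDerivAt ℝ f p :=
    hf.contDiffAt.isSymmSndFDerivAt (by simp; exact WithTop.coe_le_coe.2 le_top)
  have hd : DifferentiableAt ℝ (fderiv ℝ f) p :=
    ((hf.fderiv_right (m := (⊤ : ℕ∞)) (by simp)).differentiable (by simp)) p
  have key : ∀ v w, fderiv ℝ (fun q => fderiv ℝ f q v) p w = fderiv ℝ (fderiv ℝ f) p w v := by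
    intro v w
    rw [fderiv_clm_apply hd (differentiableAt_const v)]; simp
  change fderiv ℝ (fun q => fderiv ℝ f q (dir d')) p (dir d) =
    fderiv ℝ (fun q => fderiv ℝ f q (dir d)) p (dir d')
  rw [key, key]
  exact hs _ _

lemma Dw_perm {w w' : List (Option (Fin n))} (h : w.Perm w') (hf : ContDiff ℝ (⊤ : ℕ∞) f) :
    Dw w f = Dw w' f := by
  induction h with
  | nil => rfl
  | cons x _ ih => simp [ih]
  | swap x y l => simpa using D_comm _ _ (Dw_smooth l hf)
  | trans _ _ h1 h2 => exact h1.trans h2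

lemma hasDerivAt_time (hf : ContDiff ℝ (⊤ : ℕ∞) f) (t : ℝ) (x : Fin n → ℝ) :
    HasDerivAt (fun s => f (s, x)) (D none f (t, x)) t := by
  have h1 := (hf.differentiable (by simp) (t, x)).hasFDerivAt
  exact h1.comp_hasDerivAt t ((hasDerivAt_id t).prodMk (hasDerivAt_const t x))

lemma hasFDerivAt_slice (hf : ContDiff ℝ (⊤ : ℕ∞) f) (t : ℝ) (x : Fin n → ℝ) :
    HasFDerivAt (fun y => f (t, y))
      ((fderiv ℝ f (t, x)).comp (ContinuousLinearMap.inr ℝ ℝ (Fin n → ℝ))) x := by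
  have h1 := (hf.differentiable (by simp) (t, x)).hasFDerivAt
  exact h1.comp x (hasFDerivAt_prodMk_right t x)

lemma slice_smooth (hf : ContDiff ℝ (⊤ : ℕ∞) f) (t : ℝ) :
    ContDiff ℝ (⊤ : ℕ∞) (fun x => f (t, x)) := hf.comp (contDiff_const.prodMk contDiff_id)

lemma pd_slice (hf : ContDiff ℝ (⊤ : ℕ∞) f) (t : ℝ) (j : Fin n) :
    pd j (fun x => f (t, x)) = fun x => D (some j) f (t, x) := by
  funext x
  simp only [pd, D, dir]
  rw [(hasFDerivAt_slice hf t x).fderiv]; simp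

lemma pd_iter_slice (hf : ContDiff ℝ (⊤ : ℕ∞) f) (t : ℝ) (j : Fin n) (k : ℕ) :
    (pd j)^[k] (fun x => f (t, x)) = fun x => Dw (List.replicate k (some j)) f (t, x) := by
  induction k with
  | zero => rfl
  | succ k ih =>
    rw [Function.iterate_succ_apply', ih, pd_slice (Dw_smooth _ hf)]; rfl

lemma pdMulti_slice (hf : ContDiff ℝ (⊤ : ℕ∞) f) (t : ℝ) (A : Fin n → ℕ) :
    pdMulti A (fun x => f (t, x)) = fun x => Dw (wordOf A) f (t, x) := by
  unfold pdMulti wordOf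
  induction List.finRange n with
  | nil => rfl
  | cons i l ih =>
    rw [List.foldr_cons, ih, pd_iter_slice (Dw_smooth _ hf), List.flatMap_cons, Dw_append]

lemma dtIter_slice (u : ℝ → (Fin n → ℝ) → ℝ)
    (hu : ContDiff ℝ (⊤ : ℕ∞) (fun p : ℝ × (Fin n → ℝ) => u p.1 p.2)) (k : ℕ) (t : ℝ) :
    (fun x => dtIter k u t x) =
      fun x => Dw (List.replicate k none) (fun p : ℝ × (Fin n → ℝ) => u p.1 p.2) (t, x) := by
  induction k generalizing t with
  | zero => funext x; simp [dtIter]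
  | succ k ih =>
    funext x
    simp only [dtIter, iteratedDeriv_succ, List.replicate_succ, Dw_cons]
    have : iteratedDeriv k (fun s => u s x) = fun t => Dw (List.replicate k none)
      (fun p : ℝ × (Fin n → ℝ) => u p.1 p.2) (t, x) := by
        funext t; exact congrFun (ih t) x
    rw [this]
    exact (hasDerivAt_time (Dw_smooth _ hu) t x).deriv

lemma wordOf_length (A : Fin n → ℕ) : (wordOf A).length = ∑ i, A i := by
  simp [wordOf, List.length_flatMap, List.sum_ofFn, ← List.ofFn_eq_map]

lemma wordOf_count_none (A : Fin n → ℕ) : (wordOf A).count none = 0 := by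
  rw [List.count_eq_zero]; simp [wordOf]

lemma wordOf_count_some (A : Fin n → ℕ) (j : Fin n) : (wordOf A).count (some j) = A j := by
  rw [wordOf, List.count_flatMap]
  have : (List.count (some j) ∘ fun i => List.replicate (A i) (some i)) =
      fun i => if i = j then A i else 0 := by
    funext i; simp [List.count_replicate]
  rw [this, ← List.ofFn_eq_map, List.sum_ofFn]; simp

/-- Every word is, up to order, a spatial multi-index followed by time derivatives. -/
lemma word_perm (w : List (Option (Fin n))) :
    w.Perm (wordOf (fun j => w.count (some j)) ++ List.replicate (w.count none) none) := by
  rw [List.perm_iff_count]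
  rintro (_ | j)
  · simp [wordOf_count_none]
  · simp [wordOf_count_some, List.count_replicate]

end calculus

section schwartz
variable {n : ℕ}

lemma schwartz_pd {f : (Fin n → ℝ) → ℝ} (hf : IsSchwartz f) (j : Fin n) :
    IsSchwartz (pd j f) := by
  obtain ⟨g, rfl⟩ := hf
  exact ⟨LineDeriv.lineDerivOp (Pi.single j (1 : ℝ) : Fin n → ℝ) g, by
    funext x; rw [SchwartzMap.lineDerivOp_apply_eq_fderiv]; rfl⟩

lemma schwartz_Dw {u : ℝ → (Fin n → ℝ) → ℝ} (hu : SmoothSchwartz u)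
    (w : List (Option (Fin n))) (t : ℝ) :
    IsSchwartz fun x => Dw w (fun p : ℝ × (Fin n → ℝ) => u p.1 p.2) (t, x) := by
  rw [Dw_perm (word_perm w) hu.1]
  rw [Dw_append]
  have h0 := hu.2 (w.count none) t
  rw [dtIter_slice u hu.1] at h0
  have hs := Dw_smooth (List.replicate (w.count none) none) hu.1
  have hall : ∀ l : List (Option (Fin n)), none ∉ l → IsSchwartz fun x =>
      Dw l (Dw (List.replicate (w.count none) none) (fun p : ℝ × (Fin n → ℝ) => u p.1 p.2)) (t, x) := by
    intro l hl
    induction l with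
    | nil => exact h0
    | cons d l ih =>
      have ih := ih (fun h => hl (List.mem_cons_of_mem _ h))
      cases d with
      | none => simp at hl
      | some j =>
        have := schwartz_pd ih j
        rwa [pd_slice (Dw_smooth _ hs)] at this
  apply hall
  simp [wordOf]

end schwartz

/-! ### A bilinear Sobolev estimate -/

section bilinear

open scoped FourierTransform ENNReal SchwartzMap LineDeriv

/-- Cauchy–Schwarz for lower integrals. -/
lemma lintegral_mul_sq_le {α : Type*} [MeasurableSpace α] (μ : Measure α) {f g : α → ℝ≥0∞}
    (hf : AEMeasurable f μ) (hg : AEMeasurable g μ) :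
    (∫⁻ x, f x * g x ∂μ) ^ 2 ≤ (∫⁻ x, f x ^ 2 ∂μ) * ∫⁻ x, g x ^ 2 ∂μ := by
  have h := ENNReal.lintegral_mul_le_Lp_mul_Lq μ Real.HolderConjugate.two_two hf hg
  have h2 := pow_le_pow_left₀ (by simp) h 2
  refine h2.trans (le_of_eq ?_)
  rw [mul_pow, ← ENNReal.rpow_natCast, ← ENNReal.rpow_natCast, ← ENNReal.rpow_mul,
    ← ENNReal.rpow_mul]
  norm_num

/-- Cauchy–Schwarz with respect to the measure with density `P`. -/
lemma lintegral_weight_sq_le {α : Type*} [MeasurableSpace α] (μ : Measure α) {P H : α → ℝ≥0∞}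
    (hP : Measurable P) (hH : Measurable H) :
    (∫⁻ x, P x * H x ∂μ) ^ 2 ≤ (∫⁻ x, P x ∂μ) * ∫⁻ x, P x * H x ^ 2 ∂μ := by
  have h := lintegral_mul_sq_le (μ.withDensity P) (f := fun _ => 1) (g := H)
    aemeasurable_const hH.aemeasurable
  rw [lintegral_withDensity_eq_lintegral_mul _ hP (by fun_prop),
    lintegral_withDensity_eq_lintegral_mul _ hP (by fun_prop),
    lintegral_withDensity_eq_lintegral_mul _ hP (by fun_prop)] at h
  simpa using h

/-- Young's inequality `L¹ * L² ⊆ L²`. -/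
lemma young {V : Type*} [NormedAddCommGroup V] [InnerProductSpace ℝ V] [FiniteDimensional ℝ V]
    [MeasurableSpace V] [BorelSpace V] {P H : V → ℝ≥0∞} (hP : Measurable P) (hH : Measurable H) :
    ∫⁻ x, (∫⁻ y, P y * H (x - y)) ^ 2 ≤ (∫⁻ y, P y) ^ 2 * ∫⁻ y, H y ^ 2 := by
  calc ∫⁻ x, (∫⁻ y, P y * H (x - y)) ^ 2
      ≤ ∫⁻ x, (∫⁻ y, P y) * ∫⁻ y, P y * H (x - y) ^ 2 := by
        apply lintegral_mono; intro x
        exact lintegral_weight_sq_le volume hP (hH.comp (measurable_const.sub measurable_id))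
    _ = (∫⁻ y, P y) * ∫⁻ x, ∫⁻ y, P y * H (x - y) ^ 2 := by
        rw [lintegral_const_mul]
        apply Measurable.lintegral_prod_right'
          (f := fun p : V × V => P p.2 * H (p.1 - p.2) ^ 2)
        fun_prop
    _ = (∫⁻ y, P y) * ∫⁻ y, ∫⁻ x, P y * H (x - y) ^ 2 := by
        rw [lintegral_lintegral_swap]
        apply Measurable.aemeasurable
        fun_prop
    _ = (∫⁻ y, P y) * ∫⁻ y, P y * ∫⁻ x, H x ^ 2 := by
        congr 1; apply lintegral_congr; intro y
        rw [lintegral_const_mul _ (by fun_prop)]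
        congr 1
        exact lintegral_sub_right_eq_self (fun x => H x ^ 2) y
    _ = _ := by
        rw [lintegral_mul_const _ hP]; ring

variable {n : ℕ}

local notation "𝔼" n => EuclideanSpace ℝ (Fin n)

/-- Under the inverse Fourier transform, differentiation along `m` becomes multiplication by
`-2πi ⟨ξ, m⟩`. -/
lemma norm_fourierInv_iter (m : 𝔼 n) (k : ℕ) (f : 𝓢(𝔼 n, ℂ)) (ξ : 𝔼 n) :
    ‖𝓕⁻ ((fun h : 𝓢(𝔼 n, ℂ) => ∂_{m} h)^[k] f) ξ‖
      = (2 * π * |inner ℝ ξ m|) ^ k * ‖𝓕⁻ f ξ‖ := by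
  induction k with
  | zero => simp
  | succ k ih =>
    rw [Function.iterate_succ_apply', SchwartzMap.fourierInv_lineDerivOp_eq]
    have : (inner ℝ · m : (𝔼 n) → ℝ).HasTemperateGrowth := by fun_prop
    rw [smul_apply, SchwartzMap.smulLeftCLM_apply_apply this, norm_smul, norm_smul, ih]
    simp [abs_of_pos Real.pi_pos]
    ring

/-- The weight `(1 + ‖ξ‖)^{2a}` is controlled by pure powers of the coordinates; this is why only the
pure derivatives `∂_j^a` are needed below. -/
lemma weight_le (hn : 1 ≤ n) (a : ℕ) (ξ : 𝔼 n) :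
    (1 + ‖ξ‖) ^ (2 * a) ≤ 2 ^ (2 * a) * (1 + (n : ℝ) ^ a * ∑ j, |ξ j| ^ (2 * a)) := by
  have h1 : (1 + ‖ξ‖) ^ (2 * a) ≤ 2 ^ (2 * a) * (1 + ‖ξ‖ ^ (2 * a)) := by
    rcases le_total ‖ξ‖ 1 with h | h
    · calc (1 + ‖ξ‖) ^ (2 * a) ≤ 2 ^ (2 * a) := by gcongr; linarith
        _ ≤ _ := le_mul_of_one_le_right (by positivity) (by linarith [pow_nonneg (norm_nonneg ξ) (2*a)])
    · calc (1 + ‖ξ‖) ^ (2 * a) ≤ (2 * ‖ξ‖) ^ (2 * a) := by gcongr; linarith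
        _ = 2 ^ (2 * a) * ‖ξ‖ ^ (2 * a) := mul_pow _ _ _
        _ ≤ _ := by gcongr; linarith
  refine h1.trans ?_
  gcongr
  rw [pow_mul, EuclideanSpace.norm_sq_eq]
  have : Nonempty (Fin n) := ⟨⟨0, hn⟩⟩
  obtain ⟨j0, hj0⟩ := Finite.exists_max (fun j => ‖ξ j‖ ^ 2)
  calc (∑ i, ‖ξ i‖ ^ 2) ^ a ≤ (∑ _i : Fin n, ‖ξ j0‖ ^ 2) ^ a := by
        gcongr ?_ ^ a; exact Finset.sum_le_sum fun i _ => hj0 i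
    _ = (n : ℝ) ^ a * |ξ j0| ^ (2 * a) := by
        rw [Finset.sum_const, Finset.card_univ, Fintype.card_fin, nsmul_eq_mul, mul_pow, pow_mul,
          Real.norm_eq_abs]
    _ ≤ _ := by
        gcongr
        exact Finset.single_le_sum (f := fun j => |ξ j| ^ (2 * a)) (fun i _ => by positivity)
          (Finset.mem_univ j0)

/-- The squared `H^a` size of a Schwartz function seen through its pure derivatives only. -/
def Ssq (a : ℕ) (f : 𝓢(𝔼 n, ℂ)) : ℝ :=
  (∫ x, ‖f x‖ ^ 2) + ∑ j : Fin n, ∫ x, ‖((fun h : 𝓢(𝔼 n, ℂ) =>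
    ∂_{EuclideanSpace.single j (1 : ℝ)} h)^[a] f) x‖ ^ 2

lemma integrable_norm_sq (f : 𝓢(𝔼 n, ℂ)) : Integrable fun x => ‖f x‖ ^ 2 :=
  (f.memLp 2).integrable_norm_pow (by simp)

lemma integral_norm_sq_fourierInv (f : 𝓢(𝔼 n, ℂ)) :
    ∫ ξ, ‖𝓕⁻ f ξ‖ ^ 2 = ∫ x, ‖f x‖ ^ 2 := by
  rw [← SchwartzMap.integral_norm_sq_fourier (𝓕⁻ f)]; simp

lemma Ssq_nonneg (a : ℕ) (f : 𝓢(𝔼 n, ℂ)) : 0 ≤ Ssq a f := by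
  unfold Ssq; positivity

/-- By Plancherel, the weighted `L²` norm of the inverse Fourier transform is bounded by `Ssq`. -/
lemma weighted_fourier_le (hn : 1 ≤ n) (a : ℕ) : ∃ C > (0 : ℝ), ∀ f : 𝓢(𝔼 n, ℂ),
    ∫⁻ ξ : 𝔼 n, (ENNReal.ofReal ((1 + ‖ξ‖) ^ a) * ‖𝓕⁻ f ξ‖ₑ) ^ 2 ≤ ENNReal.ofReal (C * Ssq a f) := by
  refine ⟨2 ^ (2 * a) * (1 + (n : ℝ) ^ a), by positivity, fun f => ?_⟩
  set g : Fin n → 𝓢(𝔼 n, ℂ) := fun j => (fun h : 𝓢(𝔼 n, ℂ) =>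
    ∂_{EuclideanSpace.single j (1 : ℝ)} h)^[a] f with hg
  set h : (𝔼 n) → ℝ := fun ξ => 2 ^ (2 * a) * (‖𝓕⁻ f ξ‖ ^ 2 + (n : ℝ) ^ a *
    ∑ j, ‖𝓕⁻ (g j) ξ‖ ^ 2) with hh
  have hInteg : Integrable h :=
    ((integrable_norm_sq _).add ((integrable_finsetSum _
      fun j _ => integrable_norm_sq _).const_mul _)).const_mul _
  have hle : ∀ ξ, ((1 + ‖ξ‖) ^ a * ‖𝓕⁻ f ξ‖) ^ 2 ≤ h ξ := by
    intro ξ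
    have h1 := weight_le hn a ξ
    have h2 : ∀ j, |ξ j| ^ (2 * a) * ‖𝓕⁻ f ξ‖ ^ 2 ≤ ‖𝓕⁻ (g j) ξ‖ ^ 2 := by
      intro j
      rw [hg, norm_fourierInv_iter, mul_pow, ← pow_mul, mul_comm a 2]
      gcongr
      have : inner ℝ ξ (EuclideanSpace.single j (1 : ℝ)) = ξ j := by
        simp [EuclideanSpace.inner_single_right]
      rw [this]
      have := Real.pi_gt_three
      nlinarith [abs_nonneg (ξ j)]
    calc ((1 + ‖ξ‖) ^ a * ‖𝓕⁻ f ξ‖) ^ 2 = (1 + ‖ξ‖) ^ (2 * a) * ‖𝓕⁻ f ξ‖ ^ 2 := by ring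
      _ ≤ (2 ^ (2 * a) * (1 + (n : ℝ) ^ a * ∑ j, |ξ j| ^ (2 * a))) * ‖𝓕⁻ f ξ‖ ^ 2 := by gcongr
      _ = 2 ^ (2 * a) * (‖𝓕⁻ f ξ‖ ^ 2 + (n : ℝ) ^ a * ∑ j, |ξ j| ^ (2 * a) * ‖𝓕⁻ f ξ‖ ^ 2) := by
        rw [← Finset.sum_mul]; ring
      _ ≤ h ξ := by
        simp only [hh]; gcongr with j; exact h2 j
  calc ∫⁻ ξ : 𝔼 n, (ENNReal.ofReal ((1 + ‖ξ‖) ^ a) * ‖𝓕⁻ f ξ‖ₑ) ^ 2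
      ≤ ∫⁻ ξ, ENNReal.ofReal (h ξ) := by
        apply lintegral_mono; intro ξ
        beta_reduce
        rw [← ofReal_norm, ← ENNReal.ofReal_mul (by positivity),
          ← ENNReal.ofReal_pow (by positivity)]
        exact ENNReal.ofReal_le_ofReal (hle ξ)
    _ = ENNReal.ofReal (∫ ξ, h ξ) := by
        rw [ofReal_integral_eq_lintegral_ofReal hInteg
          (Filter.Eventually.of_forall fun ξ => (sq_nonneg _).trans (hle ξ))]
    _ ≤ _ := by
        apply ENNReal.ofReal_le_ofReal
        rw [hh, integral_const_mul, integral_add (integrable_norm_sq _)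
          ((integrable_finsetSum _ fun j _ => integrable_norm_sq _).const_mul _),
          integral_const_mul, integral_finsetSum _ fun j _ => integrable_norm_sq _]
        simp only [integral_norm_sq_fourierInv]
        rw [mul_assoc]
        have e1 : 0 ≤ ∫ x, ‖f x‖ ^ 2 := by positivity
        have e2 : 0 ≤ ∑ j, ∫ x, ‖g j x‖ ^ 2 := by positivity
        have e3 : (0 : ℝ) ≤ (n : ℝ) ^ a := by positivity
        have : Ssq a f = (∫ x, ‖f x‖ ^ 2) + ∑ j, ∫ x, ‖g j x‖ ^ 2 := rfl
        rw [this]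
        gcongr
        nlinarith [mul_nonneg e3 e1]

lemma ennreal_add_sq_le (x y : ℝ≥0∞) : (x + y) ^ 2 ≤ 4 * (x ^ 2 + y ^ 2) := by
  rcases le_total x y with h | h
  · calc (x + y) ^ 2 ≤ (y + y) ^ 2 := by gcongr
      _ = 4 * y ^ 2 := by ring
      _ ≤ _ := by gcongr; exact le_add_self
  · calc (x + y) ^ 2 ≤ (x + x) ^ 2 := by gcongr
      _ = 4 * x ^ 2 := by ring
      _ ≤ _ := by gcongr; exact le_self_add

/-- The product `f g` is the Fourier transform of the convolution of the inverse transforms `F`, `G`.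
In `F(η) G(ξ - η)` one splits off `J = (1 + |·|)^{-(a+b)}` at the smaller of the two frequencies; it is
square integrable because `2(a + b) > n`, so the factor carrying it lies in `L¹` and Young's
inequality applies. -/
lemma bilinear_complex (hn : 1 ≤ n) (a b : ℕ) (hab : n < 2 * (a + b)) :
    ∃ C > (0 : ℝ), ∀ f g : 𝓢(𝔼 n, ℂ), ∫ x, ‖f x * g x‖ ^ 2 ≤ C * (Ssq a f * Ssq b g) := by
  obtain ⟨C1, hC1, h1⟩ := weighted_fourier_le hn a
  obtain ⟨C2, hC2, h2⟩ := weighted_fourier_le hn b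
  set J : (𝔼 n) → ℝ≥0∞ := fun ξ => ENNReal.ofReal (((1 + ‖ξ‖) ^ (a + b))⁻¹) with hJ
  have hJm : Measurable J := by fun_prop
  have hJint : Integrable fun ξ : 𝔼 n => (1 + ‖ξ‖) ^ (-((2 * (a + b) : ℕ) : ℝ)) := by
    apply integrable_one_add_norm
    simp only [finrank_euclideanSpace, Fintype.card_fin]; exact_mod_cast hab
  set I : ℝ := ∫ ξ : 𝔼 n, (1 + ‖ξ‖) ^ (-((2 * (a + b) : ℕ) : ℝ)) with hI
  have hI0 : 0 ≤ I := integral_nonneg fun ξ => by positivity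
  have hJ2 : ∫⁻ ξ, J ξ ^ 2 = ENNReal.ofReal I := by
    rw [hI, ofReal_integral_eq_lintegral_ofReal hJint
      (Filter.Eventually.of_forall fun ξ => by positivity)]
    apply lintegral_congr; intro ξ
    rw [hJ, ← ENNReal.ofReal_pow (by positivity), Real.rpow_neg (by positivity),
      Real.rpow_natCast, inv_pow, ← pow_mul, mul_comm 2]
  refine ⟨8 * (I + 1) * C1 * C2, by positivity, fun f g => ?_⟩
  set F := 𝓕⁻ f with hF
  set G := 𝓕⁻ g with hG
  set K := SchwartzMap.convolution (ContinuousLinearMap.mul ℂ ℂ) F G with hK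
  set wF : (𝔼 n) → ℝ≥0∞ := fun ξ => ENNReal.ofReal ((1 + ‖ξ‖) ^ a) * ‖F ξ‖ₑ with hwF
  set wG : (𝔼 n) → ℝ≥0∞ := fun ξ => ENNReal.ofReal ((1 + ‖ξ‖) ^ b) * ‖G ξ‖ₑ with hwG
  have hFm : Measurable fun ξ => ‖F ξ‖ₑ := F.continuous.enorm.measurable
  have hGm : Measurable fun ξ => ‖G ξ‖ₑ := G.continuous.enorm.measurable
  have hwFm : Measurable wF := by fun_prop
  have hwGm : Measurable wG := by fun_prop
  -- the smaller of the two frequencies carries the decaying weight `J`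
  have hpt : ∀ η ζ, ‖F η‖ₑ * ‖G ζ‖ₑ ≤ (J η * wF η) * wG ζ + wF η * (J ζ * wG ζ) := by
    intro η ζ
    have hx : 1 ≤ 1 + ‖η‖ := by linarith [norm_nonneg η]
    have hy : 1 ≤ 1 + ‖ζ‖ := by linarith [norm_nonneg ζ]
    have key : ∀ x y : ℝ, 1 ≤ x → x ≤ y → 1 ≤ (x ^ (a + b))⁻¹ * x ^ a * y ^ b := by
      intro x y hx hxy
      have hx0 : 0 < x := by linarith
      calc (1 : ℝ) = (x ^ (a + b))⁻¹ * x ^ a * x ^ b := by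
            rw [mul_assoc, ← pow_add]; field_simp
        _ ≤ _ := by gcongr
    have key' : ∀ x y : ℝ, 1 ≤ y → y ≤ x → 1 ≤ (y ^ (a + b))⁻¹ * x ^ a * y ^ b := by
      intro x y hy hxy
      have hy0 : 0 < y := by linarith
      calc (1 : ℝ) = (y ^ (a + b))⁻¹ * y ^ a * y ^ b := by
            rw [mul_assoc, ← pow_add]; field_simp
        _ ≤ _ := by gcongr
    rcases le_total (1 + ‖η‖) (1 + ‖ζ‖) with h | h
    · refine le_trans ?_ le_self_add
      have := ENNReal.ofReal_le_ofReal (key _ _ hx h)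
      rw [ENNReal.ofReal_one, ENNReal.ofReal_mul (by positivity),
        ENNReal.ofReal_mul (by positivity)] at this
      calc ‖F η‖ₑ * ‖G ζ‖ₑ = 1 * (‖F η‖ₑ * ‖G ζ‖ₑ) := by simp
        _ ≤ _ := mul_le_mul_left this _
        _ = _ := by simp only [hJ, hwF, hwG]; ring
    · refine le_trans ?_ le_add_self
      have := ENNReal.ofReal_le_ofReal (key' _ _ hy h)
      rw [ENNReal.ofReal_one, ENNReal.ofReal_mul (by positivity),
        ENNReal.ofReal_mul (by positivity)] at this
      calc ‖F η‖ₑ * ‖G ζ‖ₑ = 1 * (‖F η‖ₑ * ‖G ζ‖ₑ) := by simp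
        _ ≤ _ := mul_le_mul_left this _
        _ = _ := by simp only [hJ, hwF, hwG]; ring
  have hconv : ∀ ξ, ‖K ξ‖ₑ ^ 2 ≤ 4 * ((∫⁻ η, (J η * wF η) * wG (ξ - η)) ^ 2
      + (∫⁻ η, (J η * wG η) * wF (ξ - η)) ^ 2) := by
    intro ξ
    have e1 : ‖K ξ‖ₑ ≤ (∫⁻ η, (J η * wF η) * wG (ξ - η)) + ∫⁻ η, (J η * wG η) * wF (ξ - η) := by
      rw [hK, SchwartzMap.convolution_apply]
      calc _ ≤ ∫⁻ η, ‖F η‖ₑ * ‖G (ξ - η)‖ₑ := by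
            refine (enorm_integral_le_lintegral_enorm _).trans (le_of_eq ?_)
            simp
        _ ≤ ∫⁻ η, ((J η * wF η) * wG (ξ - η) + wF η * (J (ξ - η) * wG (ξ - η))) :=
            lintegral_mono fun η => hpt _ _
        _ = (∫⁻ η, (J η * wF η) * wG (ξ - η)) + ∫⁻ η, wF η * (J (ξ - η) * wG (ξ - η)) := by
            rw [lintegral_add_left (by fun_prop)]
        _ = _ := by
            congr 1
            rw [← lintegral_sub_left_eq_self _ ξ]
            apply lintegral_congr; intro η; simp; ring
    refine (pow_le_pow_left₀ (by simp) e1 2).trans (ennreal_add_sq_le _ _)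
  have hY : ∀ H1 H2 : (𝔼 n) → ℝ≥0∞, Measurable H1 → Measurable H2 →
      ∫⁻ ξ, (∫⁻ η, (J η * H1 η) * H2 (ξ - η)) ^ 2 ≤
        ENNReal.ofReal I * (∫⁻ ξ, H1 ξ ^ 2) * ∫⁻ ξ, H2 ξ ^ 2 := by
    intro H1 H2 m1 m2
    refine (young (P := fun η => J η * H1 η) (by fun_prop) m2).trans ?_
    gcongr
    refine (lintegral_mul_sq_le volume hJm.aemeasurable m1.aemeasurable).trans ?_
    rw [hJ2]
  have hmeas : ∀ H1 H2 : (𝔼 n) → ℝ≥0∞, Measurable H1 → Measurable H2 →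
      Measurable fun ξ => (∫⁻ η, (J η * H1 η) * H2 (ξ - η)) ^ 2 := by
    intro H1 H2 m1 m2
    refine Measurable.pow_const ?_ 2
    apply Measurable.lintegral_prod_right'
      (f := fun p : (𝔼 n) × (𝔼 n) => (J p.2 * H1 p.2) * H2 (p.1 - p.2))
    fun_prop
  have hfin : ∫⁻ ξ, ‖K ξ‖ₑ ^ 2 ≤
      ENNReal.ofReal (8 * I * C1 * C2 * (Ssq a f * Ssq b g)) := by
    have s1 := Ssq_nonneg a f
    have s2 := Ssq_nonneg b g
    calc ∫⁻ ξ, ‖K ξ‖ₑ ^ 2 ≤ ∫⁻ ξ, 4 * ((∫⁻ η, (J η * wF η) * wG (ξ - η)) ^ 2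
      + (∫⁻ η, (J η * wG η) * wF (ξ - η)) ^ 2) := lintegral_mono hconv
      _ = 4 * ((∫⁻ ξ, (∫⁻ η, (J η * wF η) * wG (ξ - η)) ^ 2)
          + ∫⁻ ξ, (∫⁻ η, (J η * wG η) * wF (ξ - η)) ^ 2) := by
        rw [← lintegral_add_left (hmeas _ _ hwFm hwGm)]
        exact lintegral_const_mul _ (((hmeas _ _ hwFm hwGm)).add (hmeas _ _ hwGm hwFm))
      _ ≤ 4 * (ENNReal.ofReal I * (∫⁻ ξ, wF ξ ^ 2) * (∫⁻ ξ, wG ξ ^ 2) +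
          ENNReal.ofReal I * (∫⁻ ξ, wG ξ ^ 2) * (∫⁻ ξ, wF ξ ^ 2)) := by
        gcongr
        · exact hY _ _ hwFm hwGm
        · exact hY _ _ hwGm hwFm
      _ ≤ 4 * (ENNReal.ofReal I * ENNReal.ofReal (C1 * Ssq a f) * ENNReal.ofReal (C2 * Ssq b g) +
          ENNReal.ofReal I * ENNReal.ofReal (C2 * Ssq b g) * ENNReal.ofReal (C1 * Ssq a f)) := by
        gcongr
        · exact h1 f
        · exact h2 g
        · exact h2 g
        · exact h1 f
      _ = _ := by
        rw [← ENNReal.ofReal_mul hI0, ← ENNReal.ofReal_mul (by positivity),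
          ← ENNReal.ofReal_mul hI0, ← ENNReal.ofReal_mul (by positivity),
          ← ENNReal.ofReal_add (by positivity) (by positivity),
          show (4 : ℝ≥0∞) = ENNReal.ofReal 4 by norm_num, ← ENNReal.ofReal_mul (by norm_num)]
        congr 1; ring
  have hfg : ∀ x, f x * g x = 𝓕 K x := by
    intro x
    rw [hK, SchwartzMap.fourier_convolution, SchwartzMap.pairing_apply_apply]
    simp [hF, hG]
  have hPl : ∫ x, ‖f x * g x‖ ^ 2 = ∫ ξ, ‖K ξ‖ ^ 2 := by
    simp only [hfg]; exact SchwartzMap.integral_norm_sq_fourier K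
  rw [hPl, integral_eq_lintegral_of_nonneg_ae (Filter.Eventually.of_forall fun _ => by positivity)
    (integrable_norm_sq K).aestronglyMeasurable]
  have : ∫⁻ ξ, ENNReal.ofReal (‖K ξ‖ ^ 2) = ∫⁻ ξ, ‖K ξ‖ₑ ^ 2 := by
    apply lintegral_congr; intro ξ
    rw [ENNReal.ofReal_pow (by positivity), ofReal_norm]
  rw [this]
  have s1 := Ssq_nonneg a f
  have s2 := Ssq_nonneg b g
  refine (ENNReal.toReal_le_of_le_ofReal (by positivity) hfin).trans ?_
  have : 0 ≤ C1 * C2 * (Ssq a f * Ssq b g) := by positivity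
  nlinarith

/-- A real Schwartz function on `Fin n → ℝ` as a complex one on Euclidean space. -/
def hat (g : 𝓢(Fin n → ℝ, ℝ)) : 𝓢(𝔼 n, ℂ) :=
  SchwartzMap.compCLMOfContinuousLinearEquiv ℝ (EuclideanSpace.equiv (Fin n) ℝ)
    (SchwartzMap.postcompCLM Complex.ofRealCLM g)

lemma hat_apply (g : 𝓢(Fin n → ℝ, ℝ)) (x : 𝔼 n) :
    hat g x = (g (EuclideanSpace.equiv (Fin n) ℝ x) : ℂ) := by
  simp [hat]

lemma coe_lineDeriv (g : 𝓢(Fin n → ℝ, ℝ)) (j : Fin n) :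
    ⇑(∂_{(Pi.single j (1 : ℝ) : Fin n → ℝ)} g : 𝓢(Fin n → ℝ, ℝ)) = pd j ⇑g := by
  funext x; rw [SchwartzMap.lineDerivOp_apply_eq_fderiv]; rfl

lemma lineDeriv_hat (g : 𝓢(Fin n → ℝ, ℝ)) (j : Fin n) :
    ∂_{EuclideanSpace.single j (1 : ℝ)} (hat g) =
      hat (∂_{(Pi.single j (1 : ℝ) : Fin n → ℝ)} g) := by
  ext x
  rw [hat_apply, SchwartzMap.lineDerivOp_apply_eq_fderiv, SchwartzMap.lineDerivOp_apply_eq_fderiv]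
  have h1 : HasFDerivAt ⇑g (fderiv ℝ ⇑g (EuclideanSpace.equiv (Fin n) ℝ x))
      (EuclideanSpace.equiv (Fin n) ℝ x) := g.differentiableAt.hasFDerivAt
  have h2 := (h1.comp x (EuclideanSpace.equiv (Fin n) ℝ).hasFDerivAt)
  have h3 : HasFDerivAt ⇑(hat g) _ x := (Complex.ofRealCLM.hasFDerivAt.comp x h2).congr_of_eventuallyEq
    (Filter.Eventually.of_forall fun y => hat_apply g y)
  rw [h3.fderiv]
  have : (EuclideanSpace.equiv (Fin n) ℝ) (EuclideanSpace.single j 1) = Pi.single j 1 := rfl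
  simp [this]

lemma iter_hat (g : 𝓢(Fin n → ℝ, ℝ)) (j : Fin n) (a : ℕ) :
    ∃ h : 𝓢(Fin n → ℝ, ℝ), ⇑h = (pd j)^[a] ⇑g ∧
      (fun h : 𝓢(𝔼 n, ℂ) => ∂_{EuclideanSpace.single j (1 : ℝ)} h)^[a] (hat g) = hat h := by
  induction a with
  | zero => exact ⟨g, rfl, rfl⟩
  | succ a ih =>
    obtain ⟨h, h1, h2⟩ := ih
    refine ⟨∂_{(Pi.single j (1 : ℝ) : Fin n → ℝ)} h, ?_, ?_⟩
    · rw [coe_lineDeriv, h1, Function.iterate_succ_apply']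
    · rw [Function.iterate_succ_apply', h2, lineDeriv_hat]

lemma integral_equiv (F : (Fin n → ℝ) → ℝ) :
    ∫ x : 𝔼 n, F (EuclideanSpace.equiv (Fin n) ℝ x) = ∫ x, F x :=
  (PiLp.volume_preserving_ofLp (Fin n)).integral_comp
    (MeasurableEquiv.toLp 2 (Fin n → ℝ)).symm.measurableEmbedding F

lemma integral_hat_sq (g : 𝓢(Fin n → ℝ, ℝ)) : ∫ x, ‖hat g x‖ ^ 2 = L2sq ⇑g := by
  rw [L2sq, ← integral_equiv]
  congr 1; funext x
  rw [hat_apply]; simp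

/-- Squared `H^a` size of a function measured with its pure derivatives only. -/
def Psq (a : ℕ) (f : (Fin n → ℝ) → ℝ) : ℝ := L2sq f + ∑ j, L2sq ((pd j)^[a] f)

lemma Ssq_hat (a : ℕ) (g : 𝓢(Fin n → ℝ, ℝ)) : Ssq a (hat g) = Psq a ⇑g := by
  unfold Ssq Psq
  rw [integral_hat_sq]
  congr 1
  refine Finset.sum_congr rfl fun j _ => ?_
  obtain ⟨h, h1, h2⟩ := iter_hat g j a
  rw [h2, integral_hat_sq, h1]

/-- Bilinear Sobolev estimate: `‖f g‖_{L²} ≲ ‖f‖_{H^a} ‖g‖_{H^b}` if `a + b > n / 2`. -/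
lemma bilinear (hn : 1 ≤ n) (a b : ℕ) (hab : n < 2 * (a + b)) :
    ∃ K > (0 : ℝ), ∀ f g : (Fin n → ℝ) → ℝ, IsSchwartz f → IsSchwartz g →
      ∫ x, (f x * g x) ^ 2 ≤ K * (Psq a f * Psq b g) := by
  obtain ⟨C, hC, h⟩ := bilinear_complex hn a b hab
  refine ⟨C, hC, ?_⟩
  rintro _ _ ⟨f, rfl⟩ ⟨g, rfl⟩
  have := h (hat f) (hat g)
  rw [Ssq_hat, Ssq_hat] at this
  refine le_trans (le_of_eq ?_) this
  rw [← integral_equiv]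
  congr 1; funext x
  rw [hat_apply, hat_apply]; simp [mul_pow]

end bilinear

/-! ### Commuting derivatives with the equation -/

section sources
variable {n : ℕ} {U : ℝ × (Fin n → ℝ) → ℝ}

/-- The linearised Kuznetsov operator with coefficients taken from `U`. -/
def Lop (a b c : ℝ) (U v : ℝ × (Fin n → ℝ) → ℝ) : ℝ × (Fin n → ℝ) → ℝ := fun z =>
  (1 - a * D none U z) * D none (D none v) z
    - b * ∑ j, D (some j) U z * D (some j) (D none v) z
    - c ^ 2 * ∑ j, D (some j) (D (some j) v) z

/-- `Src U κ N k f` says that `f` is a sum of at most `k` quadratic terms `r ∂^p U ∂^q U` with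
`|r| ≤ κ`, `1 ≤ |p|, |q| ≤ N + 1` and `|p| + |q| ≤ N + 3`; these are the commutator terms produced
by `N` differentiations of the equation. -/
inductive Src (U : ℝ × (Fin n → ℝ) → ℝ) (κ : ℝ) (N : ℕ) : ℕ → (ℝ × (Fin n → ℝ) → ℝ) → Prop
  | zero : Src U κ N 0 fun _ => 0
  | term (r : ℝ) (p q : List (Option (Fin n))) (hr : |r| ≤ κ) (hp : 1 ≤ p.length)
      (hq : 1 ≤ q.length) (hp' : p.length ≤ N + 1) (hq' : q.length ≤ N + 1)
      (h : p.length + q.length ≤ N + 3) : Src U κ N 1 fun z => r * (Dw p U z * Dw q U z)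
  | add {k l f g} (hf : Src U κ N k f) (hg : Src U κ N l g) : Src U κ N (k + l) fun z => f z + g z

lemma Src.smooth {κ : ℝ} {N k : ℕ} {f} (hU : ContDiff ℝ (⊤ : ℕ∞) U) (h : Src U κ N k f) :
    ContDiff ℝ (⊤ : ℕ∞) f := by
  induction h with
  | zero => exact contDiff_const
  | term r p q => exact contDiff_const.mul ((Dw_smooth p hU).mul (Dw_smooth q hU))
  | add _ _ h1 h2 => exact h1.add h2

lemma Src.deriv {κ : ℝ} {N k : ℕ} {f} (hU : ContDiff ℝ (⊤ : ℕ∞) U) (h : Src U κ N k f)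
    (d : Option (Fin n)) : Src U κ (N + 1) (2 * k) (D d f) := by
  induction h with
  | zero => rw [D_const]; exact .zero
  | term r p q hr hp hq hp' hq' h =>
    rw [D_const_mul d r ((Dw_smooth p hU).mul (Dw_smooth q hU)),
      D_mul d (Dw_smooth p hU) (Dw_smooth q hU)]
    have e : (fun z => r * (D d (Dw p U) z * Dw q U z + Dw p U z * D d (Dw q U) z)) =
        fun z => r * (Dw (d :: p) U z * Dw q U z) + r * (Dw p U z * Dw (d :: q) U z) := by
      funext z; simp only [Dw_cons]; ring
    rw [e]
    have t1 : Src U κ (N + 1) 1 fun z => r * (Dw (d :: p) U z * Dw q U z) :=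
      .term r (d :: p) q hr (by simp) hq (by simpa using hp') (by omega)
        (by rw [List.length_cons]; omega)
    have t2 : Src U κ (N + 1) 1 fun z => r * (Dw p U z * Dw (d :: q) U z) :=
      .term r p (d :: q) hr hp (by simp) (by omega) (by simpa using hq')
        (by rw [List.length_cons]; omega)
    exact t1.add t2
  | add h1 h2 i1 i2 =>
    rw [D_add d (h1.smooth hU) (h2.smooth hU), mul_add]
    exact .add i1 i2

lemma Src.sum {κ : ℝ} {N : ℕ} {ι : Type*} (s : Finset ι) (F : ι → ℝ × (Fin n → ℝ) → ℝ)
    (h : ∀ i ∈ s, Src U κ N 1 (F i)) : Src U κ N s.card fun z => ∑ i ∈ s, F i z := by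
  classical
  induction s using Finset.induction_on with
  | empty => simpa using Src.zero
  | insert i s hi ih =>
    rw [Finset.card_insert_of_notMem hi, add_comm]
    simp only [Finset.sum_insert hi]
    exact .add (h i (by simp)) (ih fun j hj => h j (by simp [hj]))

lemma Lop_smooth (a b c : ℝ) (hU : ContDiff ℝ (⊤ : ℕ∞) U) {v : ℝ × (Fin n → ℝ) → ℝ}
    (hv : ContDiff ℝ (⊤ : ℕ∞) v) : ContDiff ℝ (⊤ : ℕ∞) (Lop a b c U v) := by
  have h1 := D_smooth none hU
  have h2 := D_smooth none (D_smooth none hv)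
  have h3 := fun j => D_smooth (some j) hU
  have h4 := fun j => D_smooth (some j) (D_smooth none hv)
  have h5 := fun j => D_smooth (some j) (D_smooth (some j) hv)
  unfold Lop
  fun_prop

/-- Commutator of a derivative with the linearised operator. -/
lemma Lop_D (a b c : ℝ) (hU : ContDiff ℝ (⊤ : ℕ∞) U) {v : ℝ × (Fin n → ℝ) → ℝ}
    (hv : ContDiff ℝ (⊤ : ℕ∞) v) (d : Option (Fin n)) (z) :
    Lop a b c U (D d v) z = D d (Lop a b c U v) z + (a * (D d (D none U) z * D none (D none v) z) +
      ∑ j, b * (D d (D (some j) U) z * D (some j) (D none v) z)) := by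
  have h1 := D_smooth none hU
  have h2 := D_smooth none (D_smooth none hv)
  have h3 := fun j => D_smooth (some j) hU
  have h4 := fun j => D_smooth (some j) (D_smooth none hv)
  have h5 := fun j => D_smooth (some j) (D_smooth (some j) hv)
  have k1 : ContDiff ℝ (⊤ : ℕ∞) fun z => a * D none U z := by fun_prop
  have k2 : ContDiff ℝ (⊤ : ℕ∞) fun z => 1 + (-1) * (a * D none U z) := by fun_prop
  have k3 : ContDiff ℝ (⊤ : ℕ∞) fun z => ∑ j, D (some j) U z * D (some j) (D none v) z := by
    fun_prop
  have k4 : ContDiff ℝ (⊤ : ℕ∞) fun z => ∑ j, D (some j) (D (some j) v) z := by fun_prop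
  have e : Lop a b c U v = fun z => (1 + (-1) * (a * D none U z)) * D none (D none v) z +
      ((-b) * (∑ j, D (some j) U z * D (some j) (D none v) z)
      + (-c ^ 2) * ∑ j, D (some j) (D (some j) v) z) := by
    funext z; simp only [Lop]; ring
  rw [e, D_add d (by fun_prop) (by fun_prop), D_add d (by fun_prop) (by fun_prop),
    D_const_mul d _ k3, D_const_mul d _ k4, D_mul d k2 h2, D_sum d _ _ (fun j _ => (h3 j).mul (h4 j)),
    D_sum d _ _ (fun j _ => h5 j), D_add d contDiff_const (by fun_prop), D_const,
    D_const_mul d _ k1, D_const_mul d _ h1]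
  simp only [D_mul d (h3 _) (h4 _), Lop]
  have c1 : D none (D none (D d v)) = D d (D none (D none v)) := by
    rw [D_comm none d hv, D_comm none d (D_smooth none hv)]
  have c2 : ∀ j, D (some j) (D none (D d v)) = D d (D (some j) (D none v)) := fun j => by
    rw [D_comm none d hv, D_comm (some j) d (D_smooth none hv)]
  have c3 : ∀ j, D (some j) (D (some j) (D d v)) = D d (D (some j) (D (some j) v)) := fun j => by
    rw [D_comm (some j) d hv, D_comm (some j) d (D_smooth (some j) hv)]
  simp only [c1, c2, c3, Finset.sum_add_distrib, ← Finset.mul_sum]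
  ring

/-- An identity between smooth functions on a closed time strip may be differentiated in all
space-time directions. -/
lemma D_congr_strip {T : ℝ} (hT : 0 < T) {f g : ℝ × (Fin n → ℝ) → ℝ}
    (hf : ContDiff ℝ (⊤ : ℕ∞) f) (hg : ContDiff ℝ (⊤ : ℕ∞) g)
    (h : ∀ z : ℝ × (Fin n → ℝ), z.1 ∈ Set.Icc 0 T → f z = g z) (d : Option (Fin n)) :
    ∀ z : ℝ × (Fin n → ℝ), z.1 ∈ Set.Icc 0 T → D d f z = D d g z := by
  have hopen : IsOpen (Set.Ioo 0 T ×ˢ (Set.univ : Set (Fin n → ℝ))) := isOpen_Ioo.prod isOpen_univ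
  have h1 : Set.EqOn (D d f) (D d g) (Set.Ioo 0 T ×ˢ (Set.univ : Set (Fin n → ℝ))) := by
    intro z hz
    have : f =ᶠ[nhds z] g := by
      filter_upwards [hopen.mem_nhds hz] with y hy
      exact h y ⟨hy.1.1.le, hy.1.2.le⟩
    simp only [D]; rw [this.fderiv_eq]
  have h2 := h1.closure (D_smooth d hf).continuous (D_smooth d hg).continuous
  intro z hz
  apply h2
  rw [closure_prod_eq, closure_Ioo hT.ne, closure_univ]
  exact ⟨hz, trivial⟩

/-- Bound on the number of commutator terms after `N` differentiations. -/
def srcCount (n : ℕ) : ℕ → ℕ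
  | 0 => 0
  | N + 1 => 2 * srcCount n N + (1 + n)

/-- Every derivative of a solution solves the linearised equation with a quadratic source. -/
lemma exists_src {a b c κ T : ℝ} (hT : 0 < T) (ha : |a| ≤ κ) (hb : |b| ≤ κ)
    (hU : ContDiff ℝ (⊤ : ℕ∞) U)
    (h : ∀ z : ℝ × (Fin n → ℝ), z.1 ∈ Set.Icc 0 T → Lop a b c U U z = 0)
    (w : List (Option (Fin n))) : ∃ f, Src U κ w.length (srcCount n w.length) f ∧
      ∀ z : ℝ × (Fin n → ℝ), z.1 ∈ Set.Icc 0 T → Lop a b c U (Dw w U) z = f z := by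
  induction w with
  | nil => exact ⟨_, .zero, h⟩
  | cons d w ih =>
    obtain ⟨f, hf, hfe⟩ := ih
    have hv := Dw_smooth w hU
    refine ⟨fun z => D d f z + (a * (D d (D none U) z * D none (D none (Dw w U)) z) +
      ∑ j, b * (D d (D (some j) U) z * D (some j) (D none (Dw w U)) z)), ?_, ?_⟩
    · refine .add (hf.deriv hU d) (.add ?_ ?_)
      · exact .term a [d, none] (none :: none :: w) ha (by simp) (by simp) (by simp)
          (by simp) (by simp; omega)
      · have := Src.sum (U := U) (κ := κ) (N := w.length + 1) (Finset.univ : Finset (Fin n))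
          (fun j z => b * (D d (D (some j) U) z * D (some j) (D none (Dw w U)) z))
          (fun j _ => .term b [d, some j] (some j :: none :: w) hb (by simp) (by simp) (by simp)
          (by simp) (by simp; omega))
        simpa using this
    · intro z hz
      rw [Dw_cons, Lop_D a b c hU hv, D_congr_strip hT (Lop_smooth a b c hU hv) (hf.smooth hU) hfe d z hz]

end sources

/-! ### The weighted energy density -/

section schwartz
variable {n : ℕ} {f g : (Fin n → ℝ) → ℝ}

lemma IsSchwartz.add (hf : IsSchwartz f) (hg : IsSchwartz g) : IsSchwartz fun x => f x + g x := by
  obtain ⟨f, rfl⟩ := hf; obtain ⟨g, rfl⟩ := hg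
  exact ⟨f + g, rfl⟩

lemma IsSchwartz.mul (hf : IsSchwartz f) (hg : IsSchwartz g) : IsSchwartz fun x => f x * g x := by
  obtain ⟨f, rfl⟩ := hf; obtain ⟨g, rfl⟩ := hg
  exact ⟨SchwartzMap.pairing (ContinuousLinearMap.mul ℝ ℝ) f g, by ext x; simp⟩

lemma IsSchwartz.const_mul (r : ℝ) (hf : IsSchwartz f) : IsSchwartz fun x => r * f x := by
  obtain ⟨f, rfl⟩ := hf
  exact ⟨r • f, rfl⟩

lemma IsSchwartz.zero : IsSchwartz fun _ : Fin n → ℝ => (0 : ℝ) := ⟨0, rfl⟩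

lemma IsSchwartz.sum {ι : Type*} (s : Finset ι) {F : ι → (Fin n → ℝ) → ℝ}
    (h : ∀ i ∈ s, IsSchwartz (F i)) : IsSchwartz fun x => ∑ i ∈ s, F i x := by
  classical
  induction s using Finset.induction_on with
  | empty => simpa using IsSchwartz.zero
  | insert i s hi ih =>
    simp only [Finset.sum_insert hi]
    exact (h i (by simp)).add (ih fun j hj => h j (by simp [hj]))

lemma IsSchwartz.integrable (hf : IsSchwartz f) : Integrable f := by
  obtain ⟨f, rfl⟩ := hf; exact f.integrable

lemma IsSchwartz.sq (hf : IsSchwartz f) : IsSchwartz fun x => f x ^ 2 := by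
  have := hf.mul hf
  simp only [pow_two]; exact this

lemma IsSchwartz.bdd (hf : IsSchwartz f) : ∃ M, ∀ x, |f x| ≤ M := by
  obtain ⟨f, rfl⟩ := hf
  obtain ⟨C, -, hC⟩ := f.decay 0 0
  exact ⟨C, fun x => by simpa using hC x⟩

end schwartz

section energy
variable {n : ℕ} {U : ℝ × (Fin n → ℝ) → ℝ}

lemma mem_multiIdx {k : ℕ} {A : Fin n → ℕ} : A ∈ multiIdx n k ↔ ∑ i, A i ≤ k := by
  simp only [multiIdx, Finset.mem_filter, Fintype.mem_piFinset, Finset.mem_range,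
    and_iff_right_iff_imp]
  intro h i
  have := Finset.single_le_sum (f := A) (fun i _ => Nat.zero_le _) (Finset.mem_univ i)
  omega

/-- The word `∂_t^i ∂^A`. -/
def Wd (i : ℕ) (A : Fin n → ℕ) : List (Option (Fin n)) := wordOf A ++ List.replicate i none

lemma Wd_length (i : ℕ) (A : Fin n → ℕ) : (Wd i A).length = (∑ j, A j) + i := by
  simp [Wd, wordOf_length]

lemma Wd_succ (i : ℕ) (A : Fin n → ℕ) : (none :: Wd i A).Perm (Wd (i + 1) A) := by
  rw [Wd, Wd, List.replicate_succ]; exact List.perm_middle.symm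

lemma Wd_some (i : ℕ) (A : Fin n → ℕ) (j : Fin n) :
    (some j :: Wd i A).Perm (Wd i (A + Pi.single j 1)) := by
  rw [List.perm_iff_count]
  rintro (_ | k)
  · simp [Wd, wordOf_count_none]
  · by_cases h : j = k
    · subst h; simp [Wd, wordOf_count_some, List.count_replicate]
    · simp [Wd, wordOf_count_some, List.count_replicate, h, Ne.symm h]

/-- The number of active directions of a multi-index. -/
def nsupp (A : Fin n → ℕ) : ℕ := (Finset.univ.filter fun j => A j ≠ 0).card

/-- Weights of the components of the energy. They equalise the multiplicity with which a mixed
derivative `∂_t^i ∂^A`, `i ≥ 1`, is hit by the gradient parts. -/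
def wt (i : ℕ) (A : Fin n → ℕ) : ℝ := if i = 0 then 1 else 1 / (max 1 (nsupp A) : ℕ)

lemma wt_pos (i : ℕ) (A : Fin n → ℕ) : 0 < wt i A := by
  unfold wt; split_ifs <;> positivity

lemma wt_le_one (i : ℕ) (A : Fin n → ℕ) : wt i A ≤ 1 := by
  unfold wt; split_ifs
  · exact le_rfl
  · rw [div_le_one (by positivity)]; exact_mod_cast le_max_left _ _

lemma wt_ge (i : ℕ) (A : Fin n → ℕ) : 1 / ((n : ℝ) + 1) ≤ wt i A := by
  unfold wt; split_ifs
  · rw [div_le_one (by positivity)]; linarith [Nat.cast_nonneg (α := ℝ) n]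
  · apply one_div_le_one_div_of_le (by positivity)
    have : nsupp A ≤ n := by
      simpa [nsupp] using Finset.card_filter_le (Finset.univ : Finset (Fin n)) fun j => A j ≠ 0
    have : max 1 (nsupp A) ≤ n + 1 := by omega
    exact_mod_cast this

lemma wt_zero (i : ℕ) : wt i (0 : Fin n → ℕ) = 1 := by
  simp [wt, nsupp]

lemma nsupp_pos {A : Fin n → ℕ} (h : A ≠ 0) : 1 ≤ nsupp A := by
  obtain ⟨j, hj⟩ := Function.ne_iff.1 h
  exact Finset.card_pos.2 ⟨j, by simpa using hj⟩

lemma nsupp_sub (A : Fin n → ℕ) (j : Fin n) :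
    nsupp (A - Pi.single j 1) ≤ nsupp A ∧ nsupp A ≤ nsupp (A - Pi.single j 1) + 1 := by
  constructor
  · apply Finset.card_le_card
    intro k; simp only [Finset.mem_filter, Finset.mem_univ, true_and, Pi.sub_apply]; omega
  · refine (Finset.card_le_card ?_).trans (Finset.card_insert_le j _)
    intro k
    simp only [Finset.mem_filter, Finset.mem_univ, true_and, Pi.sub_apply, Finset.mem_insert]
    intro h
    by_cases hk : k = j
    · exact Or.inl hk
    · right; simpa [Pi.single_apply, hk] using h

/-- The total weight with which `∂_t^i ∂^A`, `i ≥ 1`, occurs in the gradient parts. -/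
lemma wt_sum_bounds {i : ℕ} (hi : i ≠ 0) {A : Fin n → ℕ} (hA : A ≠ 0) :
    1 ≤ ∑ j ∈ Finset.univ.filter (fun j => A j ≠ 0), wt i (A - Pi.single j 1) ∧
    ∑ j ∈ Finset.univ.filter (fun j => A j ≠ 0), wt i (A - Pi.single j 1) ≤ 2 := by
  have hs := nsupp_pos hA
  have hs' : (1 : ℝ) ≤ nsupp A := by exact_mod_cast hs
  constructor
  · calc (1 : ℝ) = ∑ j ∈ Finset.univ.filter (fun j => A j ≠ 0), 1 / (nsupp A : ℝ) := by
          rw [Finset.sum_const, nsmul_eq_mul]; change 1 = (nsupp A : ℝ) * _; field_simp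
      _ ≤ _ := by
          apply Finset.sum_le_sum; intro j _
          rw [wt, if_neg hi]
          apply one_div_le_one_div_of_le (by positivity)
          have := (nsupp_sub A j).1
          have : max 1 (nsupp (A - Pi.single j 1)) ≤ nsupp A := by omega
          exact_mod_cast this
  · calc _ ≤ ∑ j ∈ Finset.univ.filter (fun j => A j ≠ 0), 2 / (nsupp A : ℝ) := by
          apply Finset.sum_le_sum; intro j _
          rw [wt, if_neg hi, div_le_div_iff₀ (by positivity) (by positivity)]
          have := (nsupp_sub A j).2
          have : 1 * nsupp A ≤ 2 * max 1 (nsupp (A - Pi.single j 1)) := by omega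
          exact_mod_cast this
      _ = 2 := by
          rw [Finset.sum_const, nsmul_eq_mul]; change (nsupp A : ℝ) * _ = 2; field_simp

/-- Reindexing by `A ↦ A + e_j`. -/
lemma sum_shift (M : ℕ) (j : Fin n) (G : (Fin n → ℕ) → ℝ) (w : (Fin n → ℕ) → ℝ) :
    ∑ A ∈ multiIdx n M, w A * G (A + Pi.single j 1) =
      ∑ A ∈ (multiIdx n (M + 1)).filter (fun A => A j ≠ 0), w (A - Pi.single j 1) * G A := by
  refine Finset.sum_nbij' (fun A => A + Pi.single j 1) (fun A => A - Pi.single j 1) ?_ ?_ ?_ ?_ ?_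
  · intro A hA
    rw [mem_multiIdx] at hA
    simp only [Finset.mem_filter, mem_multiIdx, Pi.add_apply, Finset.sum_add_distrib,
      Finset.sum_pi_single', Finset.mem_univ, if_true, Pi.single_eq_same]
    omega
  · intro A hA
    simp only [Finset.mem_filter, mem_multiIdx] at hA ⊢
    have : ∑ i, A i = ∑ i, (A - Pi.single j 1 : Fin n → ℕ) i + 1 := by
      have e : A = (A - Pi.single j 1) + Pi.single j 1 := by
        funext k; by_cases hk : k = j
        · subst hk; simp; omega
        · simp [hk]
      conv_lhs => rw [e]
      simp only [Pi.add_apply, Finset.sum_add_distrib, Finset.sum_pi_single', Finset.mem_univ,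
        if_true]
    omega
  · intro A _; simp
  · intro A hA
    simp only [Finset.mem_filter] at hA
    funext k; by_cases hk : k = j
    · subst hk; simp; omega
    · simp [hk]
  · intro A _; simp

lemma sum_shift_all (M : ℕ) (G w : (Fin n → ℕ) → ℝ) :
    ∑ A ∈ multiIdx n M, w A * ∑ j, G (A + Pi.single j 1) =
      ∑ A ∈ multiIdx n (M + 1),
        (∑ j ∈ Finset.univ.filter (fun j => A j ≠ 0), w (A - Pi.single j 1)) * G A := by
  simp only [Finset.mul_sum, Finset.sum_mul]
  rw [Finset.sum_comm]
  simp only [sum_shift]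
  simp only [Finset.sum_filter]
  rw [Finset.sum_comm]

/-- Energy density of a single component `v`. -/
def eterm (a c : ℝ) (U v : ℝ × (Fin n → ℝ) → ℝ) : ℝ × (Fin n → ℝ) → ℝ := fun z =>
  (1 - a * D none U z) * D none v z ^ 2 + c ^ 2 * ∑ j, D (some j) v z ^ 2

/-- Weighted energy density of order `N`. -/
def eN (a c : ℝ) (U : ℝ × (Fin n → ℝ) → ℝ) (N : ℕ) : ℝ × (Fin n → ℝ) → ℝ := fun z =>
  ∑ i ∈ Finset.range (N + 1), ∑ A ∈ multiIdx n (N - i), wt i A * eterm a c U (Dw (Wd i A) U) z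

lemma eterm_nonneg {a c : ℝ} {v : ℝ × (Fin n → ℝ) → ℝ} {z} (h : 1 / 2 ≤ 1 - a * D none U z) :
    0 ≤ eterm a c U v z := by
  have : 0 ≤ 1 - a * D none U z := by linarith
  unfold eterm; positivity

lemma eN_nonneg {a c : ℝ} {N : ℕ} {z} (h : 1 / 2 ≤ 1 - a * D none U z) : 0 ≤ eN a c U N z :=
  Finset.sum_nonneg fun _ _ => Finset.sum_nonneg fun _ _ =>
    mul_nonneg (wt_pos _ _).le (eterm_nonneg h)

lemma eterm_le_eN {a c : ℝ} {N : ℕ} {z} (h : 1 / 2 ≤ 1 - a * D none U z) {i : ℕ} {A : Fin n → ℕ}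
    (hA : (∑ j, A j) + i ≤ N) : wt i A * eterm a c U (Dw (Wd i A) U) z ≤ eN a c U N z := by
  have h0 : ∀ i (A : Fin n → ℕ), 0 ≤ wt i A * eterm a c U (Dw (Wd i A) U) z :=
    fun i A => mul_nonneg (wt_pos _ _).le (eterm_nonneg h)
  have h1 := Finset.single_le_sum (f := fun i => ∑ A ∈ multiIdx n (N - i),
    wt i A * eterm a c U (Dw (Wd i A) U) z) (fun i _ => Finset.sum_nonneg fun A _ => h0 i A)
    (Finset.mem_range.2 (show i < N + 1 by omega))
  refine le_trans ?_ h1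
  exact Finset.single_le_sum (f := fun A => wt i A * eterm a c U (Dw (Wd i A) U) z)
    (fun A _ => h0 i A) (mem_multiIdx.2 (show ∑ j, A j ≤ N - i by omega))

lemma eterm_smooth (a c : ℝ) (hU : ContDiff ℝ (⊤ : ℕ∞) U) {v : ℝ × (Fin n → ℝ) → ℝ}
    (hv : ContDiff ℝ (⊤ : ℕ∞) v) : ContDiff ℝ (⊤ : ℕ∞) (eterm a c U v) := by
  have h1 := D_smooth none hU
  have h2 := D_smooth none hv
  have h3 := fun j => D_smooth (some j) hv
  unfold eterm; fun_prop

lemma eN_smooth (a c : ℝ) (hU : ContDiff ℝ (⊤ : ℕ∞) U) (N : ℕ) :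
    ContDiff ℝ (⊤ : ℕ∞) (eN a c U N) := by
  have := fun i (A : Fin n → ℕ) => eterm_smooth a c hU (Dw_smooth (Wd i A) hU)
  unfold eN; fun_prop

/-- Comparison constant between squared derivatives and the energy density. -/
def C0 (n : ℕ) (c : ℝ) : ℝ := 2 * (n + 1) + 1 / c ^ 2

/-- The energy density of order `N` controls all derivatives of orders `1, …, N + 1`. -/
lemma sq_le_eN {a c : ℝ} (hc : 0 < c) (hU : ContDiff ℝ (⊤ : ℕ∞) U) {N : ℕ} {z}
    (h : 1 / 2 ≤ 1 - a * D none U z) {w : List (Option (Fin n))} (h1 : 1 ≤ w.length)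
    (h2 : w.length ≤ N + 1) : Dw w U z ^ 2 ≤ C0 n c * eN a c U N z := by
  set i := w.count none with hi
  set A : Fin n → ℕ := fun j => w.count (some j) with hA
  have hp : w.Perm (Wd i A) := word_perm w
  have hl : w.length = (∑ j, A j) + i := by rw [hp.length_eq, Wd_length]
  have he := eN_nonneg (c := c) (N := N) h
  have hn0 : (0 : ℝ) ≤ n := Nat.cast_nonneg n
  have hc2 : 0 < 1 / c ^ 2 := by positivity
  rcases Nat.eq_zero_or_pos i with h0 | h0
  · have : ∃ j, A j ≠ 0 := by
      by_contra hcon; push Not at hcon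
      simp [hcon] at hl; omega
    obtain ⟨j, hj⟩ := this
    have e : (A - Pi.single j 1) + Pi.single j 1 = A := by
      funext k; by_cases hk : k = j
      · subst hk; simp; omega
      · simp [hk]
    have hp2 := Wd_some 0 (A - Pi.single j 1) j
    rw [e, ← h0] at hp2
    have hl2 := hp2.length_eq
    rw [List.length_cons, Wd_length, Wd_length] at hl2
    have key := eterm_le_eN (c := c) (N := N) h (i := i) (A := A - Pi.single j 1) (by omega)
    rw [Dw_perm (hp.trans hp2.symm) hU, Dw_cons]
    have hw : wt i (A - Pi.single j 1) = 1 := by simp [wt, h0]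
    rw [hw, one_mul, eterm] at key
    have k1 := Finset.single_le_sum (f := fun j' => D (some j') (Dw (Wd i (A - Pi.single j 1)) U) z ^ 2)
      (fun _ _ => sq_nonneg _) (Finset.mem_univ j)
    have k2 : 0 ≤ (1 - a * D none U z) * D none (Dw (Wd i (A - Pi.single j 1)) U) z ^ 2 :=
      mul_nonneg (by linarith) (sq_nonneg _)
    have k3 : c ^ 2 * D (some j) (Dw (Wd i (A - Pi.single j 1)) U) z ^ 2 ≤ eN a c U N z := by
      have := mul_le_mul_of_nonneg_left k1 (sq_nonneg c)
      linarith
    have k4 : D (some j) (Dw (Wd i (A - Pi.single j 1)) U) z ^ 2 ≤ 1 / c ^ 2 * eN a c U N z := by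
      rw [div_mul_eq_mul_div, one_mul, le_div_iff₀ (by positivity)]; linarith
    refine k4.trans ?_
    unfold C0; gcongr; linarith
  · obtain ⟨i', hi'⟩ := Nat.exists_eq_add_of_le' h0
    have hp2 := Wd_succ i' A
    rw [← hi'] at hp2
    have key := eterm_le_eN (c := c) (N := N) h (i := i') (A := A) (by omega)
    rw [Dw_perm (hp.trans hp2.symm) hU, Dw_cons]
    set y := D none (Dw (Wd i' A) U) z ^ 2 with hy
    have hy0 : 0 ≤ y := sq_nonneg _
    have k1 : 1 / ((n : ℝ) + 1) * (1 / 2 * y) ≤ eN a c U N z := by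
      refine le_trans ?_ key
      refine mul_le_mul (wt_ge _ _) ?_ (by positivity) (wt_pos _ _).le
      unfold eterm
      have : 0 ≤ c ^ 2 * ∑ j, D (some j) (Dw (Wd i' A) U) z ^ 2 := by positivity
      have := mul_le_mul_of_nonneg_right h hy0
      linarith
    have k2 : y ≤ 2 * (n + 1) * eN a c U N z := by
      have : y = 2 * (n + 1) * (1 / ((n : ℝ) + 1) * (1 / 2 * y)) := by field_simp
      rw [this]; gcongr
    refine k2.trans ?_
    unfold C0; gcongr; linarith

/-! ### Comparison of the weighted energy with `Em` -/

/-- Squared spatial `L²` norm of a space-time derivative at a fixed time. -/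
def XX (U : ℝ × (Fin n → ℝ) → ℝ) (t : ℝ) (w : List (Option (Fin n))) : ℝ :=
  ∫ x, Dw w U (t, x) ^ 2

lemma XX_nonneg (t : ℝ) (w : List (Option (Fin n))) : 0 ≤ XX U t w :=
  integral_nonneg fun _ => sq_nonneg _

lemma XX_perm (hU : ContDiff ℝ (⊤ : ℕ∞) U) (t : ℝ) {w w' : List (Option (Fin n))}
    (h : w.Perm w') : XX U t w = XX U t w' := by
  unfold XX; rw [Dw_perm h hU]

/-- The energy as a sum of squared `L²` norms along the canonical words `∂_t^i ∂^A`. -/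
lemma Em_eq {u : ℝ → (Fin n → ℝ) → ℝ} (hu : SmoothSchwartz u) (N : ℕ) (t : ℝ) :
    Em N u t = (∑ A ∈ multiIdx n N, ∑ j, XX (fun p => u p.1 p.2) t (Wd 0 (A + Pi.single j 1)))
      + ∑ i ∈ Finset.range (N + 1), ∑ A ∈ multiIdx n (N - i),
          XX (fun p => u p.1 p.2) t (Wd (i + 1) A) := by
  have hU := hu.1
  set U : ℝ × (Fin n → ℝ) → ℝ := fun p => u p.1 p.2 with hUd
  unfold Em gradHsq Hsq
  rw [Finset.sum_comm]
  congr 1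
  · refine Finset.sum_congr rfl fun A _ => Finset.sum_congr rfl fun j _ => ?_
    have h1 : pd j (u t) = fun x => D (some j) U (t, x) := pd_slice hU t j
    rw [h1, pdMulti_slice (D_smooth _ hU), L2sq, ← XX_perm hU t (Wd_some 0 A j)]
    have hp : (some j :: Wd 0 A).Perm (wordOf A ++ [some j]) := by
      simp only [Wd, List.replicate_zero, List.append_nil]
      exact (List.perm_append_singleton _ _).symm
    rw [XX_perm hU t hp, XX, Dw_append]; rfl
  · have e0 : ∑ i ∈ Finset.range (N + 1), ∑ A ∈ multiIdx n (N - i), XX U t (Wd (i + 1) A) =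
        ∑ i ∈ Finset.Ico (0 + 1) (N + 1 + 1), ∑ A ∈ multiIdx n (N - (i - 1)), XX U t (Wd i A) := by
      rw [Finset.range_eq_Ico]
      exact Finset.sum_Ico_add' (fun i => ∑ A ∈ multiIdx n (N - (i - 1)),
        XX U t (Wd i A)) 0 (N + 1) 1
    rw [e0]
    refine Finset.sum_congr (by ext; simp) fun i hi => ?_
    have : N + 1 - i = N - (i - 1) := by
      have := (Finset.mem_Icc.1 hi).1; omega
    rw [this]
    refine Finset.sum_congr rfl fun A _ => ?_
    rw [dtIter_slice u hU, pdMulti_slice (Dw_smooth _ hU), L2sq, XX, Wd, Dw_append]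

lemma Em_nonneg {u : ℝ → (Fin n → ℝ) → ℝ} (hu : SmoothSchwartz u) (N : ℕ) (t : ℝ) :
    0 ≤ Em N u t := by
  rw [Em_eq hu]
  exact add_nonneg (Finset.sum_nonneg fun _ _ => Finset.sum_nonneg fun _ _ => XX_nonneg _ _)
    (Finset.sum_nonneg fun _ _ => Finset.sum_nonneg fun _ _ => XX_nonneg _ _)

/-- The energy of order `N` with unit coefficients `q` and `s` in front of the squared time and
space derivatives. -/
def FF (q s : ℝ) (U : ℝ × (Fin n → ℝ) → ℝ) (N : ℕ) (t : ℝ) : ℝ :=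
  ∑ i ∈ Finset.range (N + 1), ∑ A ∈ multiIdx n (N - i),
    wt i A * (q * XX U t (none :: Wd i A) + s * ∑ j, XX U t (some j :: Wd i A))

/-- `FF` collected along canonical words. The inner sum is the total weight with which a mixed
derivative occurs in the gradient parts, see `wt_sum_bounds`. -/
lemma FF_eq (hU : ContDiff ℝ (⊤ : ℕ∞) U) (q s : ℝ) (N : ℕ) (t : ℝ) :
    FF q s U N t = s * (∑ A ∈ multiIdx n N, ∑ j, XX U t (Wd 0 (A + Pi.single j 1))) +
      ∑ i ∈ Finset.range (N + 1), ∑ A ∈ multiIdx n (N - i),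
        (q * wt i A + s * if i + 1 ≤ N then
          ∑ j ∈ Finset.univ.filter (fun j => A j ≠ 0), wt (i + 1) (A - Pi.single j 1) else 0)
          * XX U t (Wd (i + 1) A) := by
  have e1 : ∀ i (A : Fin n → ℕ), XX U t (none :: Wd i A) = XX U t (Wd (i + 1) A) :=
    fun i A => XX_perm hU t (Wd_succ i A)
  have e2 : ∀ i (A : Fin n → ℕ) j, XX U t (some j :: Wd i A) = XX U t (Wd i (A + Pi.single j 1)) :=
    fun i A j => XX_perm hU t (Wd_some i A j)
  simp only [FF, e1, e2, mul_add, add_mul, Finset.sum_add_distrib]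
  have e3 : ∑ i ∈ Finset.range (N + 1), ∑ A ∈ multiIdx n (N - i),
      wt i A * (s * ∑ j, XX U t (Wd i (A + Pi.single j 1))) =
      s * ∑ i ∈ Finset.range (N + 1), ∑ A ∈ multiIdx n (N - i),
        wt i A * ∑ j, XX U t (Wd i (A + Pi.single j 1)) := by
    simp only [Finset.mul_sum]
    refine Finset.sum_congr rfl fun _ _ => Finset.sum_congr rfl fun _ _ =>
      Finset.sum_congr rfl fun _ _ => by ring
  have e7 : ∑ i ∈ Finset.range (N + 1), ∑ A ∈ multiIdx n (N - i),
        wt i A * ∑ j, XX U t (Wd i (A + Pi.single j 1)) =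
      (∑ i ∈ Finset.range N, ∑ A ∈ multiIdx n (N - (i + 1)),
        wt (i + 1) A * ∑ j, XX U t (Wd (i + 1) (A + Pi.single j 1))) +
      ∑ A ∈ multiIdx n (N - 0), wt 0 A * ∑ j, XX U t (Wd 0 (A + Pi.single j 1)) :=
    Finset.sum_range_succ' _ N
  rw [e3, e7, mul_add]
  have e4 : ∀ A : Fin n → ℕ, wt 0 A = 1 := fun A => by simp [wt]
  simp only [e4, one_mul, Nat.sub_zero]
  have e5 : ∑ i ∈ Finset.range (N + 1), ∑ A ∈ multiIdx n (N - i),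
        (s * if i + 1 ≤ N then
          ∑ j ∈ Finset.univ.filter (fun j => A j ≠ 0), wt (i + 1) (A - Pi.single j 1) else 0)
          * XX U t (Wd (i + 1) A) = s * ∑ i ∈ Finset.range N, ∑ A ∈ multiIdx n (N - (i + 1)),
          wt (i + 1) A * ∑ j, XX U t (Wd (i + 1) (A + Pi.single j 1)) := by
    rw [Finset.sum_range_succ]
    simp only [show ¬ (N + 1 ≤ N) by omega, if_false, mul_zero, zero_mul, Finset.sum_const_zero,
      add_zero]
    rw [Finset.mul_sum]
    refine Finset.sum_congr rfl fun i hi => ?_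
    have hi' : i + 1 ≤ N := Finset.mem_range.1 hi
    rw [sum_shift_all (N - (i + 1)) (fun A => XX U t (Wd (i + 1) A)) (wt (i + 1)),
      show N - (i + 1) + 1 = N - i by omega, Finset.mul_sum]
    simp only [hi', if_true]
    refine Finset.sum_congr rfl fun A _ => by ring
  rw [e5]
  have e6 : ∑ i ∈ Finset.range (N + 1), ∑ A ∈ multiIdx n (N - i),
      wt i A * (q * XX U t (Wd (i + 1) A)) = ∑ i ∈ Finset.range (N + 1),
      ∑ A ∈ multiIdx n (N - i), q * wt i A * XX U t (Wd (i + 1) A) :=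
    Finset.sum_congr rfl fun _ _ => Finset.sum_congr rfl fun _ _ => by ring
  rw [e6]; ring

lemma FF_le {u : ℝ → (Fin n → ℝ) → ℝ} (hu : SmoothSchwartz u) {q s : ℝ} (hq : 0 ≤ q) (hs : 0 ≤ s)
    (N : ℕ) (t : ℝ) : FF q s (fun p => u p.1 p.2) N t ≤ (q + 2 * s) * Em N u t := by
  rw [FF_eq hu.1, Em_eq hu, mul_add]
  refine add_le_add ?_ ?_
  · gcongr
    · exact Finset.sum_nonneg fun _ _ => Finset.sum_nonneg fun _ _ => XX_nonneg _ _
    · linarith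
  · simp only [Finset.mul_sum]
    refine Finset.sum_le_sum fun i hi => Finset.sum_le_sum fun A hA => ?_
    refine mul_le_mul_of_nonneg_right ?_ (XX_nonneg _ _)
    have h1 : (if i + 1 ≤ N then ∑ j ∈ Finset.univ.filter (fun j => A j ≠ 0),
        wt (i + 1) (A - Pi.single j 1) else 0) ≤ 2 := by
      split_ifs
      · by_cases h0 : A = 0
        · subst h0; simp
        · exact (wt_sum_bounds (by omega) h0).2
      · norm_num
    have h2 := wt_le_one i A
    nlinarith [mul_le_mul_of_nonneg_left h1 hs, mul_le_mul_of_nonneg_left h2 hq]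

lemma le_FF {u : ℝ → (Fin n → ℝ) → ℝ} (hu : SmoothSchwartz u) {q s : ℝ} (hq : 0 ≤ q) (hs : 0 ≤ s)
    (N : ℕ) (t : ℝ) : min q s * Em N u t ≤ FF q s (fun p => u p.1 p.2) N t := by
  rw [FF_eq hu.1, Em_eq hu, mul_add]
  refine add_le_add ?_ ?_
  · gcongr
    · exact Finset.sum_nonneg fun _ _ => Finset.sum_nonneg fun _ _ => XX_nonneg _ _
    · exact min_le_right _ _
  · simp only [Finset.mul_sum]
    refine Finset.sum_le_sum fun i hi => Finset.sum_le_sum fun A hA => ?_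
    refine mul_le_mul_of_nonneg_right ?_ (XX_nonneg _ _)
    by_cases h0 : A = 0
    · subst h0; rw [wt_zero]; simp
    · have hi' : i + 1 ≤ N := by
        by_contra hcon
        have : N - i = 0 := by omega
        rw [this, mem_multiIdx] at hA
        apply h0; funext j
        have := Finset.single_le_sum (f := A) (fun i _ => Nat.zero_le _) (Finset.mem_univ j)
        simp; omega
      rw [if_pos hi']
      have h1 := (wt_sum_bounds (i := i + 1) (by omega) h0).1
      have h2 := mul_le_mul_of_nonneg_left h1 hs
      have h3 := mul_nonneg hq (wt_pos i A).le
      have h4 := min_le_right q s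
      linarith

/-- The space integral of the energy density. -/
def FE (a c : ℝ) (U : ℝ × (Fin n → ℝ) → ℝ) (N : ℕ) (t : ℝ) : ℝ := ∫ x, eN a c U N (t, x)

lemma eterm_schwartz {u : ℝ → (Fin n → ℝ) → ℝ} (hu : SmoothSchwartz u) (a c : ℝ) (t : ℝ)
    (w : List (Option (Fin n))) :
    IsSchwartz fun x => eterm a c (fun p => u p.1 p.2) (Dw w fun p => u p.1 p.2) (t, x) := by
  have h0 : IsSchwartz fun x => D none (fun p => u p.1 p.2) (t, x) := schwartz_Dw hu [none] t
  have h1 : IsSchwartz fun x => D none (Dw w fun p => u p.1 p.2) (t, x) :=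
    schwartz_Dw hu (none :: w) t
  have h2 : ∀ j, IsSchwartz fun x => D (some j) (Dw w fun p => u p.1 p.2) (t, x) :=
    fun j => schwartz_Dw hu (some j :: w) t
  have := (h1.sq.add ((h0.mul h1.sq).const_mul (-a))).add
    ((IsSchwartz.sum Finset.univ fun j _ => (h2 j).sq).const_mul (c ^ 2))
  convert this using 2
  simp only [eterm]; ring

lemma eN_schwartz {u : ℝ → (Fin n → ℝ) → ℝ} (hu : SmoothSchwartz u) (a c : ℝ) (N : ℕ) (t : ℝ) :
    IsSchwartz fun x => eN a c (fun p => u p.1 p.2) N (t, x) :=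
  IsSchwartz.sum _ fun _ _ => IsSchwartz.sum _ fun _ _ => (eterm_schwartz hu a c t _).const_mul _

lemma integrable_sq {u : ℝ → (Fin n → ℝ) → ℝ} (hu : SmoothSchwartz u) (t : ℝ)
    (w : List (Option (Fin n))) : Integrable fun x => Dw w (fun p => u p.1 p.2) (t, x) ^ 2 :=
  (schwartz_Dw hu w t).sq.integrable

lemma integral_model {u : ℝ → (Fin n → ℝ) → ℝ} (hu : SmoothSchwartz u) (q s : ℝ) (t : ℝ)
    (w : List (Option (Fin n))) :
    Integrable (fun x => q * Dw (none :: w) (fun p => u p.1 p.2) (t, x) ^ 2 +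
      s * ∑ j, Dw (some j :: w) (fun p => u p.1 p.2) (t, x) ^ 2) ∧
    ∫ x, (q * Dw (none :: w) (fun p => u p.1 p.2) (t, x) ^ 2 +
      s * ∑ j, Dw (some j :: w) (fun p => u p.1 p.2) (t, x) ^ 2) =
    q * XX (fun p => u p.1 p.2) t (none :: w) +
      s * ∑ j, XX (fun p => u p.1 p.2) t (some j :: w) := by
  have h1 := (integrable_sq hu t (none :: w)).const_mul q
  have h2 := (integrable_finsetSum Finset.univ
    fun j _ => integrable_sq hu t (some j :: w)).const_mul s
  refine ⟨h1.add h2, ?_⟩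
  rw [integral_add h1 h2, integral_const_mul, integral_const_mul, integral_finsetSum _
    fun j _ => integrable_sq hu t (some j :: w)]
  rfl

lemma FE_sum {u : ℝ → (Fin n → ℝ) → ℝ} (hu : SmoothSchwartz u) (a c : ℝ) (N : ℕ) (t : ℝ) :
    FE a c (fun p => u p.1 p.2) N t = ∑ i ∈ Finset.range (N + 1), ∑ A ∈ multiIdx n (N - i),
      wt i A * ∫ x, eterm a c (fun p => u p.1 p.2) (Dw (Wd i A) fun p => u p.1 p.2) (t, x) := by
  unfold FE eN
  rw [integral_finsetSum _ fun i _ => integrable_finsetSum _ fun A _ =>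
    (eterm_schwartz hu a c t _).integrable.const_mul _]
  refine Finset.sum_congr rfl fun i _ => ?_
  rw [integral_finsetSum _ fun A _ => (eterm_schwartz hu a c t _).integrable.const_mul _]
  refine Finset.sum_congr rfl fun A _ => ?_
  rw [integral_const_mul]

/-- Upper comparison of the weighted energy with `Em`; the constant `3/2 + 2c²` is half the numerator
of `B`. -/
lemma FE_le {u : ℝ → (Fin n → ℝ) → ℝ} (hu : SmoothSchwartz u) {a c : ℝ} (N : ℕ) {t : ℝ}
    (h : ∀ x, 1 - a * D none (fun p => u p.1 p.2) (t, x) ≤ 3 / 2) :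
    FE a c (fun p => u p.1 p.2) N t ≤ (3 / 2 + 2 * c ^ 2) * Em N u t := by
  refine le_trans ?_ (FF_le hu (by norm_num) (sq_nonneg c) N t)
  rw [FE_sum hu, FF]
  refine Finset.sum_le_sum fun i _ => Finset.sum_le_sum fun A _ =>
    mul_le_mul_of_nonneg_left ?_ (wt_pos _ _).le
  obtain ⟨h1, h2⟩ := integral_model hu (3 / 2) (c ^ 2) t (Wd i A)
  rw [← h2]
  refine integral_mono (eterm_schwartz hu a c t _).integrable h1 fun x => ?_
  simp only [eterm, Dw_cons]
  gcongr; exact h x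

lemma le_FE {u : ℝ → (Fin n → ℝ) → ℝ} (hu : SmoothSchwartz u) {a c : ℝ} (N : ℕ) {t : ℝ}
    (h : ∀ x, 1 / 2 ≤ 1 - a * D none (fun p => u p.1 p.2) (t, x)) :
    min (1 / 2) (c ^ 2) * Em N u t ≤ FE a c (fun p => u p.1 p.2) N t := by
  refine (le_FF hu (by norm_num) (sq_nonneg c) N t).trans ?_
  rw [FE_sum hu, FF]
  refine Finset.sum_le_sum fun i _ => Finset.sum_le_sum fun A _ =>
    mul_le_mul_of_nonneg_left ?_ (wt_pos _ _).le
  obtain ⟨h1, h2⟩ := integral_model hu (1 / 2) (c ^ 2) t (Wd i A)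
  rw [← h2]
  refine integral_mono h1 (eterm_schwartz hu a c t _).integrable fun x => ?_
  simp only [eterm, Dw_cons]
  gcongr; exact h x

/-- All derivatives of orders `1, …, N + 1` are controlled in `L²` by `Em N`. -/
lemma XX_le {u : ℝ → (Fin n → ℝ) → ℝ} (hu : SmoothSchwartz u) {a c : ℝ} (hc : 0 < c) (N : ℕ) {t : ℝ}
    (h : ∀ x, 1 / 2 ≤ 1 - a * D none (fun p => u p.1 p.2) (t, x) ∧
      1 - a * D none (fun p => u p.1 p.2) (t, x) ≤ 3 / 2) {w : List (Option (Fin n))}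
    (h1 : 1 ≤ w.length) (h2 : w.length ≤ N + 1) :
    XX (fun p => u p.1 p.2) t w ≤ C0 n c * (3 / 2 + 2 * c ^ 2) * Em N u t := by
  have hC : 0 ≤ C0 n c := by unfold C0; positivity
  rw [mul_assoc]
  refine le_trans ?_ (mul_le_mul_of_nonneg_left (FE_le hu N fun x => (h x).2) hC)
  rw [FE, ← integral_const_mul]
  exact integral_mono (integrable_sq hu t w) ((eN_schwartz hu a c N t).integrable.const_mul _)
    fun x => sq_le_eN hc hu.1 (h x).1 h1 h2

end energy

/-! ### Space-time cutoffs with shrinking cubes -/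

section cutoff
variable {n : ℕ}

/-- `Cut Λ φ`: a smooth cutoff, decreasing in time at least `Λ` times as fast as it varies in
space. -/
structure Cut (Λ : ℝ) (φ : ℝ × (Fin n → ℝ) → ℝ) : Prop where
  smooth : ContDiff ℝ (⊤ : ℕ∞) φ
  nonneg : ∀ z, 0 ≤ φ z
  le_one : ∀ z, φ z ≤ 1
  decay : ∀ z, Λ * ∑ j, |D (some j) φ z| ≤ -D none φ z

lemma Cut.one (Λ : ℝ) : Cut Λ (fun _ : ℝ × (Fin n → ℝ) => 1) where
  smooth := contDiff_const
  nonneg _ := by norm_num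
  le_one _ := le_rfl
  decay z := by simp [D_const]

lemma Cut.mul {Λ : ℝ} (hΛ : 0 ≤ Λ) {φ ψ : ℝ × (Fin n → ℝ) → ℝ} (h1 : Cut Λ φ) (h2 : Cut Λ ψ) :
    Cut Λ (fun z => φ z * ψ z) where
  smooth := h1.smooth.mul h2.smooth
  nonneg z := mul_nonneg (h1.nonneg z) (h2.nonneg z)
  le_one z := mul_le_one₀ (h1.le_one z) (h2.nonneg z) (h2.le_one z)
  decay z := by
    simp only [D_mul _ h1.smooth h2.smooth]
    have e1 := mul_le_mul_of_nonneg_right (h1.decay z) (h2.nonneg z)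
    have e2 := mul_le_mul_of_nonneg_right (h2.decay z) (h1.nonneg z)
    have e3 : ∑ j, |D (some j) φ z * ψ z + φ z * D (some j) ψ z| ≤
        (∑ j, |D (some j) φ z|) * ψ z + (∑ j, |D (some j) ψ z|) * φ z := by
      rw [Finset.sum_mul, Finset.sum_mul, ← Finset.sum_add_distrib]
      refine Finset.sum_le_sum fun j _ => (abs_add_le _ _).trans (le_of_eq ?_)
      rw [abs_mul, abs_mul, abs_of_nonneg (h1.nonneg z), abs_of_nonneg (h2.nonneg z)]; ring
    have := mul_le_mul_of_nonneg_left e3 hΛ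
    linarith

lemma Cut.prod {Λ : ℝ} (hΛ : 0 ≤ Λ) {ι : Type*} (s : Finset ι) {φ : ι → ℝ × (Fin n → ℝ) → ℝ}
    (h : ∀ i ∈ s, Cut Λ (φ i)) : Cut Λ (fun z => ∏ i ∈ s, φ i z) := by
  classical
  induction s using Finset.induction_on with
  | empty => simpa using Cut.one Λ
  | insert i s hi ih =>
    simp only [Finset.prod_insert hi]
    exact (h i (by simp)).mul hΛ (ih fun j hj => h j (by simp [hj]))

lemma Cut.single {Λ η : ℝ} (hη : 0 < η) (ρ s x0 : ℝ) (hs : |s| = 1) (i : Fin n) :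
    Cut Λ (fun z : ℝ × (Fin n → ℝ) =>
      smoothTransition ((ρ - Λ * z.1 + s * (z.2 i - x0)) / η)) := by
  have hsm : ContDiff ℝ (⊤ : ℕ∞) (fun z : ℝ × (Fin n → ℝ) =>
      smoothTransition ((ρ - Λ * z.1 + s * (z.2 i - x0)) / η)) :=
    Real.smoothTransition.contDiff.comp (by fun_prop)
  refine ⟨hsm, fun _ => smoothTransition.nonneg _, fun _ => smoothTransition.le_one _, fun z => ?_⟩
  set ℓ : ℝ × (Fin n → ℝ) → ℝ := fun z => (ρ - Λ * z.1 + s * (z.2 i - x0)) / η with hℓ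
  have hL : HasFDerivAt ℓ (η⁻¹ • ((-Λ) • ContinuousLinearMap.fst ℝ ℝ (Fin n → ℝ) +
      s • (ContinuousLinearMap.proj i ∘L ContinuousLinearMap.snd ℝ ℝ (Fin n → ℝ)))) z := by
    have h1 := (((((-Λ) • ContinuousLinearMap.fst ℝ ℝ (Fin n → ℝ) +
      s • (ContinuousLinearMap.proj i ∘L ContinuousLinearMap.snd ℝ ℝ (Fin n → ℝ))).hasFDerivAt
        (x := z)).add_const (ρ - s * x0)).const_smul η⁻¹)
    refine h1.congr_of_eventuallyEq (Filter.Eventually.of_forall fun y => ?_)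
    simp [hℓ]; field_simp; ring
  have hθ : HasDerivAt smoothTransition (deriv smoothTransition (ℓ z)) (ℓ z) :=
    ((smoothTransition.contDiff (n := 1)).differentiable (by simp) _).hasDerivAt
  have hD := (hθ.comp_hasFDerivAt z hL).fderiv
  have hθ0 : 0 ≤ deriv smoothTransition (ℓ z) := smoothTransition.monotone.deriv_nonneg
  have e0 : D none (fun z => smoothTransition (ℓ z)) z =
      -(Λ * (deriv smoothTransition (ℓ z) * η⁻¹)) := by
    change fderiv ℝ (smoothTransition ∘ ℓ) z _ = _
    rw [hD]; simp [dir]; ring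
  have e1 : ∀ j, D (some j) (fun z => smoothTransition (ℓ z)) z =
      if i = j then deriv smoothTransition (ℓ z) * η⁻¹ * s else 0 := by
    intro j
    change fderiv ℝ (smoothTransition ∘ ℓ) z _ = _
    rw [hD]; simp only [dir, smul_apply, add_apply,
      ContinuousLinearMap.comp_apply, ContinuousLinearMap.coe_fst', ContinuousLinearMap.coe_snd',
      ContinuousLinearMap.proj_apply, smul_eq_mul, Pi.single_apply]
    split_ifs <;> ring
  change Λ * ∑ j, |D (some j) (fun z => smoothTransition (ℓ z)) z| ≤
    -D none (fun z => smoothTransition (ℓ z)) z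
  rw [e0]
  simp only [e1]
  have : ∑ j, |if i = j then deriv smoothTransition (ℓ z) * η⁻¹ * s else 0| =
      deriv smoothTransition (ℓ z) * η⁻¹ := by
    rw [Finset.sum_eq_single i]
    · rw [if_pos rfl, abs_mul, hs, mul_one, abs_of_nonneg (by positivity)]
    · intro j _ hj; rw [if_neg (Ne.symm hj), abs_zero]
    · simp
  rw [this]; linarith

/-- The cutoff adapted to the shrinking cubes `‖x - x0‖_∞ ≤ ρ - Λ t`, of transition width `η`. -/
def cut (Λ ρ η : ℝ) (x0 : Fin n → ℝ) : ℝ × (Fin n → ℝ) → ℝ := fun z =>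
  ∏ i, (smoothTransition ((ρ - Λ * z.1 + 1 * (z.2 i - x0 i)) / η) *
    smoothTransition ((ρ - Λ * z.1 + (-1) * (z.2 i - x0 i)) / η))

lemma cut_isCut {Λ : ℝ} (hΛ : 0 ≤ Λ) {η : ℝ} (hη : 0 < η) (ρ : ℝ) (x0 : Fin n → ℝ) :
    Cut Λ (cut Λ ρ η x0) :=
  Cut.prod hΛ _ fun i _ => (Cut.single hη ρ 1 (x0 i) (by simp) i).mul hΛ
    (Cut.single hη ρ (-1) (x0 i) (by simp) i)

lemma cut_ne_zero {Λ ρ η : ℝ} (hη : 0 < η) {x0 : Fin n → ℝ} {z} (h : cut Λ ρ η x0 z ≠ 0)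
    (i : Fin n) : |z.2 i - x0 i| < ρ - Λ * z.1 := by
  have h1 := Finset.prod_ne_zero_iff.1 h i (Finset.mem_univ i)
  obtain ⟨h2, h3⟩ := mul_ne_zero_iff.1 h1
  rw [Ne, smoothTransition.zero_iff_nonpos, not_le] at h2 h3
  rw [lt_div_iff₀ hη] at h2 h3
  rw [abs_lt]; constructor <;> linarith

lemma cut_eq_one {Λ ρ η : ℝ} (hη : 0 < η) {x0 : Fin n → ℝ} {z : ℝ × (Fin n → ℝ)}
    (h : ∀ i, |z.2 i - x0 i| ≤ ρ - Λ * z.1 - η) : cut Λ ρ η x0 z = 1 := by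
  refine Finset.prod_eq_one fun i _ => ?_
  have := abs_le.1 (h i)
  rw [smoothTransition.one_of_one_le, smoothTransition.one_of_one_le, one_mul]
  · rw [le_div_iff₀ hη]; linarith
  · rw [le_div_iff₀ hη]; linarith

end cutoff

/-! ### Integrals of compactly supported functions depending on time -/

section compact
variable {n : ℕ} {ψ : ℝ × (Fin n → ℝ) → ℝ}

lemma slice_integrable {ψ : ℝ × (Fin n → ℝ) → ℝ} (hψ : Continuous ψ) {K : Set (Fin n → ℝ)}
    (hK : IsCompact K) (t : ℝ) (h : ∀ x, x ∉ K → ψ (t, x) = 0) :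
    Integrable fun x => ψ (t, x) :=
  (by fun_prop : Continuous fun x => ψ (t, x)).integrable_of_hasCompactSupport
    (HasCompactSupport.intro hK h)

lemma D_eq_zero_of_open {S : Set (ℝ × (Fin n → ℝ))} (hS : IsOpen S) (h : ∀ z ∈ S, ψ z = 0)
    (d : Option (Fin n)) : ∀ z ∈ S, D d ψ z = 0 := by
  intro z hz
  have : ψ =ᶠ[nhds z] fun _ => 0 := by
    filter_upwards [hS.mem_nhds hz] with y hy using h y hy
  simp only [D]; rw [this.fderiv_eq]; simp

lemma hasDerivAt_slice_integral (hψ : ContDiff ℝ (⊤ : ℕ∞) ψ) {K : Set (Fin n → ℝ)}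
    (hK : IsCompact K) (t : ℝ) (h : ∀ s ∈ Metric.ball t 1, ∀ x, x ∉ K → ψ (s, x) = 0) :
    HasDerivAt (fun s => ∫ x, ψ (s, x)) (∫ x, D none ψ (t, x)) t := by
  have hD := (D_smooth none hψ).continuous
  have hS : IsOpen (Metric.ball t 1 ×ˢ Kᶜ) := Metric.isOpen_ball.prod hK.isClosed.isOpen_compl
  have hz := D_eq_zero_of_open hS (fun z hz => h z.1 hz.1 z.2 hz.2) none
  obtain ⟨C, hC⟩ := ((isCompact_closedBall t 1).prod hK).exists_bound_of_continuousOn hD.continuousOn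
  refine (hasDerivAt_integral_of_dominated_loc_of_deriv_le (bound := K.indicator fun _ => C)
    (s := Metric.ball t 1) (F := fun s x => ψ (s, x)) (F' := fun s x => D none ψ (s, x))
    (Metric.ball_mem_nhds t one_pos) ?_ ?_ ?_ ?_ ?_ ?_).2
  · have := hψ.continuous
    exact Filter.Eventually.of_forall fun s =>
      (by fun_prop : Continuous fun x => ψ (s, x)).aestronglyMeasurable
  · exact slice_integrable hψ.continuous hK t (h t (Metric.mem_ball_self one_pos))
  · exact (by fun_prop : Continuous fun x => D none ψ (t, x)).aestronglyMeasurable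
  · refine Filter.Eventually.of_forall fun x s hs => ?_
    by_cases hx : x ∈ K
    · rw [Set.indicator_of_mem hx]; exact hC (s, x) ⟨Metric.ball_subset_closedBall hs, hx⟩
    · rw [Set.indicator_of_notMem hx, hz (s, x) ⟨hs, hx⟩, norm_zero]
  · rw [integrable_indicator_iff hK.measurableSet]
    exact integrableOn_const hK.measure_lt_top.ne
  · exact Filter.Eventually.of_forall fun x s _ => hasDerivAt_time hψ s x

lemma integral_D_slice (hψ : ContDiff ℝ (⊤ : ℕ∞) ψ) {K : Set (Fin n → ℝ)}
    (hK : IsCompact K) (t : ℝ) (h : ∀ x, x ∉ K → ψ (t, x) = 0) (j : Fin n) :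
    Integrable (fun x => D (some j) ψ (t, x)) ∧ ∫ x, D (some j) ψ (t, x) = 0 := by
  have hs := slice_smooth hψ t
  have hcs : HasCompactSupport fun x => ψ (t, x) := HasCompactSupport.intro hK h
  have e : (fun x => D (some j) ψ (t, x)) =
      fun x => fderiv ℝ (fun y => ψ (t, y)) x (Pi.single j 1) := (pd_slice hψ t j).symm
  have hc : Continuous fun x => fderiv ℝ (fun y => ψ (t, y)) x (Pi.single j 1) :=
    (hs.continuous_fderiv (by simp)).clm_apply continuous_const
  have hi : Integrable fun x => fderiv ℝ (fun y => ψ (t, y)) x (Pi.single j 1) :=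
    hc.integrable_of_hasCompactSupport (hcs.fderiv_apply ℝ _)
  rw [e]
  refine ⟨hi, ?_⟩
  have := integral_mul_fderiv_eq_neg_fderiv_mul_of_integrable (μ := volume) (𝕜 := ℝ)
    (f := fun _ : Fin n → ℝ => (1 : ℝ)) (g := fun x => ψ (t, x)) (v := Pi.single j 1)
    (by simp) (by simpa using hi)
    (by simpa using hs.continuous.integrable_of_hasCompactSupport hcs)
    (fun _ _ => by fun_prop) (fun x _ => hs.differentiable (by simp) x)
  simpa using this

end compact

/-! ### Local energy inequality -/

section localenergy
variable {n : ℕ}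

/-- The standing situation: `U` is a smooth spatially Schwartz solution of the equation on
`[0, T]`, in the form `Lop U U = 0`, whose coefficient `1 - a ∂ₜU` stays in `[1/2, 3/2]`. -/
structure Sol (a b c κ T : ℝ) (U : ℝ × (Fin n → ℝ) → ℝ) : Prop where
  hT : 0 < T
  hc : 0 < c
  ha : |a| ≤ κ
  hb : |b| ≤ κ
  hu : SmoothSchwartz fun t x => U (t, x)
  pde : ∀ z : ℝ × (Fin n → ℝ), z.1 ∈ Set.Icc 0 T → Lop a b c U U z = 0
  lo : ∀ z : ℝ × (Fin n → ℝ), z.1 ∈ Set.Icc 0 T → 1 / 2 ≤ 1 - a * D none U z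
  hi : ∀ z : ℝ × (Fin n → ℝ), z.1 ∈ Set.Icc 0 T → 1 - a * D none U z ≤ 3 / 2

variable {a b c κ T : ℝ} {U : ℝ × (Fin n → ℝ) → ℝ}

lemma Sol.hU (h : Sol a b c κ T U) : ContDiff ℝ (⊤ : ℕ∞) U := h.hu.1

lemma Sol.schw (h : Sol a b c κ T U) (w : List (Option (Fin n))) (t : ℝ) :
    IsSchwartz fun x => Dw w U (t, x) := schwartz_Dw h.hu w t

lemma Sol.κ_nonneg (h : Sol a b c κ T U) : 0 ≤ κ := (abs_nonneg a).trans h.ha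

/-- The spatial energy flux of the linearised operator. -/
def flux (b c : ℝ) (U v : ℝ × (Fin n → ℝ) → ℝ) (j : Fin n) : ℝ × (Fin n → ℝ) → ℝ := fun z =>
  b * D (some j) U z * D none v z ^ 2 + 2 * c ^ 2 * (D none v z * D (some j) v z)

lemma flux_smooth (b c : ℝ) (hU : ContDiff ℝ (⊤ : ℕ∞) U) {v : ℝ × (Fin n → ℝ) → ℝ}
    (hv : ContDiff ℝ (⊤ : ℕ∞) v) (j : Fin n) : ContDiff ℝ (⊤ : ℕ∞) (flux b c U v j) := by
  have h1 := D_smooth (some j) hU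
  have h2 := D_smooth none hv
  have h3 := D_smooth (some j) hv
  unfold flux; fun_prop

/-- Differential energy identity for the linearised operator. -/
lemma eterm_identity (a b c : ℝ) (hU : ContDiff ℝ (⊤ : ℕ∞) U) {v : ℝ × (Fin n → ℝ) → ℝ}
    (hv : ContDiff ℝ (⊤ : ℕ∞) v) (z) :
    D none (eterm a c U v) z = 2 * (Lop a b c U v z -
      1 / 2 * (a * D none (D none U) z + b * ∑ j, D (some j) (D (some j) U) z) * D none v z)
        * D none v z + ∑ j, D (some j) (flux b c U v j) z := by
  have h1 := D_smooth none hU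
  have h2 := D_smooth none hv
  have h3 := fun j => D_smooth (some j) hv
  have h4 := fun j => D_smooth (some j) hU
  have sq : ∀ (d : Option (Fin n)) {g : ℝ × (Fin n → ℝ) → ℝ}, ContDiff ℝ (⊤ : ℕ∞) g →
      D d (fun z => g z ^ 2) = fun z => 2 * g z * D d g z := by
    intro d g hg
    have : (fun z => g z ^ 2) = fun z => g z * g z := by funext z; ring
    rw [this, D_mul d hg hg]; funext z; ring
  have k1 : ContDiff ℝ (⊤ : ℕ∞) fun z => a * D none U z := by fun_prop
  have e1 : D none (eterm a c U v) z = -(a * D none (D none U) z) * D none v z ^ 2 +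
      (1 - a * D none U z) * (2 * D none v z * D none (D none v) z) +
      c ^ 2 * ∑ j, 2 * D (some j) v z * D (some j) (D none v) z := by
    have : eterm a c U v = fun z => (1 + (-1) * (a * D none U z)) * D none v z ^ 2 +
        c ^ 2 * ∑ j, D (some j) v z ^ 2 := by funext z; simp only [eterm]; ring
    rw [this, D_add _ (by fun_prop) (by fun_prop), D_const_mul _ _ (by fun_prop),
      D_mul _ (by fun_prop) (by fun_prop), D_sum _ _ _ (fun j _ => (h3 j).pow 2), sq _ h2,
      D_add _ contDiff_const (by fun_prop), D_const, D_const_mul _ _ k1, D_const_mul _ _ h1]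
    simp only [sq none (h3 _), D_comm none (some _) hv]; ring
  have e2 : ∀ j, D (some j) (flux b c U v j) z =
      b * D (some j) (D (some j) U) z * D none v z ^ 2 +
      b * D (some j) U z * (2 * D none v z * D (some j) (D none v) z) +
      2 * c ^ 2 * (D (some j) (D none v) z * D (some j) v z +
        D none v z * D (some j) (D (some j) v) z) := by
    intro j
    have := h3 j
    have := h4 j
    have : flux b c U v j = fun z => b * (D (some j) U z * D none v z ^ 2) +
        2 * c ^ 2 * (D none v z * D (some j) v z) := by funext z; simp only [flux]; ring
    rw [this, D_add _ (by fun_prop) (by fun_prop), D_const_mul _ _ (by fun_prop),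
      D_const_mul _ _ (by fun_prop), D_mul _ (h4 j) (by fun_prop), D_mul _ h2 (h3 j), sq _ h2]
    ring
  rw [e1, Finset.sum_congr rfl fun j _ => e2 j, Lop]
  have e3 : ∑ j, (b * D (some j) (D (some j) U) z * D none v z ^ 2 +
      b * D (some j) U z * (2 * D none v z * D (some j) (D none v) z) +
      2 * c ^ 2 * (D (some j) (D none v) z * D (some j) v z +
        D none v z * D (some j) (D (some j) v) z)) =
      b * D none v z ^ 2 * ∑ j, D (some j) (D (some j) U) z +
      2 * b * D none v z * ∑ j, D (some j) U z * D (some j) (D none v) z +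
      c ^ 2 * ∑ j, 2 * D (some j) v z * D (some j) (D none v) z +
      2 * c ^ 2 * D none v z * ∑ j, D (some j) (D (some j) v) z := by
    simp only [Finset.mul_sum, ← Finset.sum_add_distrib]
    exact Finset.sum_congr rfl fun j _ => by ring
  rw [e3]; ring

lemma D_eq_zero_of_min {φ : ℝ × (Fin n → ℝ) → ℝ} (h0 : ∀ z, 0 ≤ φ z) {z} (hz : φ z = 0)
    (d : Option (Fin n)) : D d φ z = 0 := by
  have : IsLocalMin φ z := Filter.Eventually.of_forall fun y => hz ▸ h0 y
  simp [D, this.fderiv_eq_zero]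

/-- The cutoff decays fast enough in time to absorb the energy flux. -/
lemma flux_absorb {Λ M : ℝ} (hΛ0 : 0 ≤ Λ) {χ : ℝ × (Fin n → ℝ) → ℝ} (hχ : Cut Λ χ)
    {v : ℝ × (Fin n → ℝ) → ℝ} {z} (hA : 1 / 2 ≤ 1 - a * D none U z)
    (hM : χ z ≠ 0 → ∀ j, |D (some j) U z| ≤ M)
    (hΛ : |b| * M + c ^ 2 ≤ Λ * min (1 / 2) (c ^ 2)) :
    D none χ z * eterm a c U v z - ∑ j, D (some j) χ z * flux b c U v j z ≤ 0 := by
  by_cases h0 : χ z = 0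
  · simp [D_eq_zero_of_min hχ.nonneg h0]
  have he := eterm_nonneg (c := c) (v := v) hA
  set S := D none v z ^ 2 + ∑ j, D (some j) v z ^ 2 with hS
  have hS0 : 0 ≤ S := by positivity
  have hl : min (1 / 2) (c ^ 2) * S ≤ eterm a c U v z := by
    rw [hS, mul_add, eterm]
    have h1 : min (1 / 2) (c ^ 2) ≤ 1 - a * D none U z := (min_le_left _ _).trans hA
    have h2 : min (1 / 2) (c ^ 2) ≤ c ^ 2 := min_le_right _ _
    gcongr
  have hM' := hM h0
  have hG : ∀ j, |flux b c U v j z| ≤ Λ * eterm a c U v z := by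
    intro j
    have hM0 : 0 ≤ M := (abs_nonneg _).trans (hM' j)
    have hj : D (some j) v z ^ 2 ≤ ∑ j, D (some j) v z ^ 2 :=
      Finset.single_le_sum (f := fun j => D (some j) v z ^ 2) (fun _ _ => sq_nonneg _)
        (Finset.mem_univ j)
    have hS1 : D none v z ^ 2 ≤ S := by
      rw [hS]; linarith [Finset.sum_nonneg fun j (_ : j ∈ Finset.univ) => sq_nonneg (D (some j) v z)]
    have hS2 : D none v z ^ 2 + D (some j) v z ^ 2 ≤ S := by rw [hS]; linarith
    have h1 : |b * D (some j) U z * D none v z ^ 2| ≤ |b| * M * S := by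
      rw [abs_mul, abs_mul, abs_of_nonneg (sq_nonneg (D none v z))]
      gcongr; exact hM' j
    have h2 : |2 * c ^ 2 * (D none v z * D (some j) v z)| ≤ c ^ 2 * S := by
      rw [abs_mul, abs_of_nonneg (by positivity : 0 ≤ 2 * c ^ 2)]
      have : 2 * |D none v z * D (some j) v z| ≤ S := by
        refine le_trans ?_ hS2
        rw [abs_mul, ← sq_abs (D none v z), ← sq_abs (D (some j) v z)]
        nlinarith [sq_nonneg (|D none v z| - |D (some j) v z|)]
      nlinarith [sq_nonneg c]
    have h3 : |flux b c U v j z| ≤ (|b| * M + c ^ 2) * S := by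
      unfold flux; refine (abs_add_le _ _).trans ?_; linarith
    have h4 : (|b| * M + c ^ 2) * S ≤ Λ * min (1 / 2) (c ^ 2) * S := by gcongr
    nlinarith
  have h1 : -(∑ j, D (some j) χ z * flux b c U v j z) ≤
      ∑ j, |D (some j) χ z| * (Λ * eterm a c U v z) := by
    rw [← Finset.sum_neg_distrib]
    refine Finset.sum_le_sum fun j _ => (neg_le_abs _).trans ?_
    rw [abs_mul]; gcongr; exact hG j
  rw [← Finset.sum_mul] at h1
  have h2 := mul_le_mul_of_nonneg_right (hχ.decay z) he
  nlinarith

lemma Src.mono {κ : ℝ} {N N' k : ℕ} (hN : N ≤ N') {f} (h : Src U κ N k f) : Src U κ N' k f := by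
  induction h with
  | zero => exact .zero
  | term r p q hr hp hq hp' hq' h =>
    exact .term r p q hr hp hq (by omega) (by omega) (by omega)
  | add _ _ h1 h2 => exact h1.add h2

lemma srcCount_mono : Monotone (srcCount n) :=
  monotone_nat_of_le_succ fun N => by simp only [srcCount]; omega

/-- The source of the energy balance of a differentiated solution is a sum of quadratic terms. -/
lemma exists_energy_src (h : Sol a b c κ T U) {N : ℕ} (hN : 1 ≤ N) {w : List (Option (Fin n))}
    (hw : w.length ≤ N) : ∃ f k, Src U κ N k f ∧ k ≤ srcCount n N + (1 + n) ∧
      ∀ z : ℝ × (Fin n → ℝ), z.1 ∈ Set.Icc 0 T → Lop a b c U (Dw w U) z -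
        1 / 2 * (a * D none (D none U) z + b * ∑ j, D (some j) (D (some j) U) z) *
          D none (Dw w U) z = f z := by
  obtain ⟨f, hf, hfe⟩ := exists_src h.hT h.ha h.hb h.hU h.pde w
  have hκ := h.κ_nonneg
  have half : ∀ r : ℝ, |r| ≤ κ → |-(1 / 2) * r| ≤ κ := fun r hr => by
    rw [abs_mul, abs_neg, abs_of_pos (by norm_num : (0 : ℝ) < 1 / 2)]
    linarith [abs_nonneg r]
  have t1 : Src U κ N 1 fun z => (-(1 / 2) * a) * (Dw [none, none] U z * Dw (none :: w) U z) :=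
    .term _ [none, none] (none :: w) (half a h.ha) (by simp) (by simp) (by simp; omega) (by simp; omega)
      (by simp; omega)
  have t2 := Src.sum (U := U) (κ := κ) (N := N) (Finset.univ : Finset (Fin n))
    (fun j z => (-(1 / 2) * b) * (Dw [some j, some j] U z * Dw (none :: w) U z))
    (fun j _ => .term _ [some j, some j] (none :: w) (half b h.hb) (by simp) (by simp)
      (by simp; omega) (by simp; omega) (by simp; omega))
  refine ⟨_, _, (hf.mono hw).add (t1.add t2), ?_, fun z hz => ?_⟩
  · have := srcCount_mono (n := n) hw
    simp; omega
  · rw [hfe z hz, ← Finset.mul_sum, ← Finset.sum_mul]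
    simp only [Dw_cons, Dw_nil]; ring

/-- The indices `(i, A)` of the components of the energy density of order `N`. -/
def idx (n N : ℕ) : Finset (Σ _ : ℕ, Fin n → ℕ) :=
  (Finset.range (N + 1)).sigma fun i => multiIdx n (N - i)

lemma idx_le {N : ℕ} {p : Σ _ : ℕ, Fin n → ℕ} (hp : p ∈ idx n N) :
    (Wd p.1 p.2).length ≤ N := by
  rw [Wd_length]
  rw [idx, Finset.mem_sigma, Finset.mem_range, mem_multiIdx] at hp
  omega

lemma eN_eq (a c : ℝ) (U : ℝ × (Fin n → ℝ) → ℝ) (N : ℕ) (z) : eN a c U N z =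
    ∑ p ∈ idx n N, wt p.1 p.2 * eterm a c U (Dw (Wd p.1 p.2) U) z := by
  rw [eN, idx, Finset.sum_sigma]

/-- Total source in the balance of the energy density of order `N`. -/
def Qs (U : ℝ × (Fin n → ℝ) → ℝ) (N : ℕ) (f : (Σ _ : ℕ, Fin n → ℕ) → ℝ × (Fin n → ℝ) → ℝ) :
    ℝ × (Fin n → ℝ) → ℝ := fun z =>
  ∑ p ∈ idx n N, wt p.1 p.2 * (2 * f p z * Dw (none :: Wd p.1 p.2) U z)

/-- Total flux in the balance of the energy density of order `N`. -/
def Fl (b c : ℝ) (U : ℝ × (Fin n → ℝ) → ℝ) (N : ℕ) (j : Fin n) : ℝ × (Fin n → ℝ) → ℝ := fun z =>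
  ∑ p ∈ idx n N, wt p.1 p.2 * flux b c U (Dw (Wd p.1 p.2) U) j z

lemma Fl_smooth (b c : ℝ) (hU : ContDiff ℝ (⊤ : ℕ∞) U) (N : ℕ) (j : Fin n) :
    ContDiff ℝ (⊤ : ℕ∞) (Fl b c U N j) := by
  have := fun p : Σ _ : ℕ, Fin n → ℕ => flux_smooth b c hU (Dw_smooth (Wd p.1 p.2) hU) j
  unfold Fl; fun_prop

/-- Differential form of the localised energy inequality. -/
lemma local_balance (h : Sol a b c κ T U) {N : ℕ} (hN : 1 ≤ N) :
    ∃ f : (Σ _ : ℕ, Fin n → ℕ) → ℝ × (Fin n → ℝ) → ℝ,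
      (∀ p ∈ idx n N, ∃ k, Src U κ N k (f p) ∧ k ≤ srcCount n N + (1 + n)) ∧
      ∀ (Λ M : ℝ) (χ : ℝ × (Fin n → ℝ) → ℝ), 0 ≤ Λ → Cut Λ χ →
        |b| * M + c ^ 2 ≤ Λ * min (1 / 2) (c ^ 2) →
        ∀ z : ℝ × (Fin n → ℝ), z.1 ∈ Set.Icc 0 T → (χ z ≠ 0 → ∀ j, |D (some j) U z| ≤ M) →
        D none (fun z => χ z * eN a c U N z) z ≤
          χ z * Qs U N f z + ∑ j, D (some j) (fun z => χ z * Fl b c U N j z) z := by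
  have hU := h.hU
  have hex : ∀ p : Σ _ : ℕ, Fin n → ℕ, ∃ f : ℝ × (Fin n → ℝ) → ℝ, p ∈ idx n N →
      ∃ k, Src U κ N k f ∧ k ≤ srcCount n N + (1 + n) ∧
      ∀ z : ℝ × (Fin n → ℝ), z.1 ∈ Set.Icc 0 T → Lop a b c U (Dw (Wd p.1 p.2) U) z -
        1 / 2 * (a * D none (D none U) z + b * ∑ j, D (some j) (D (some j) U) z) *
          D none (Dw (Wd p.1 p.2) U) z = f z := by
    intro p
    by_cases hp : p ∈ idx n N
    · obtain ⟨f, k, hf⟩ := exists_energy_src h hN (idx_le hp)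
      exact ⟨f, fun _ => ⟨k, hf⟩⟩
    · exact ⟨fun _ => 0, fun hp' => absurd hp' hp⟩
  choose f hf using hex
  refine ⟨f, fun p hp => ?_, fun Λ M χ hΛ0 hχ hΛ z hz hM => ?_⟩
  · obtain ⟨k, h1, h2, -⟩ := hf p hp
    exact ⟨k, h1, h2⟩
  have es := fun p : Σ _ : ℕ, Fin n → ℕ => eterm_smooth a c hU (Dw_smooth (Wd p.1 p.2) hU)
  have fs := fun (p : Σ _ : ℕ, Fin n → ℕ) j => flux_smooth b c hU (Dw_smooth (Wd p.1 p.2) hU) j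
  have heN : D none (eN a c U N) z =
      ∑ p ∈ idx n N, wt p.1 p.2 * D none (eterm a c U (Dw (Wd p.1 p.2) U)) z := by
    have : eN a c U N = fun z => ∑ p ∈ idx n N, wt p.1 p.2 *
        eterm a c U (Dw (Wd p.1 p.2) U) z := funext fun z => eN_eq a c U N z
    rw [this, D_sum _ _ _ fun p _ => contDiff_const.mul (es p)]
    simp only [D_const_mul _ _ (es _)]
  have hFl : ∀ j, D (some j) (Fl b c U N j) z =
      ∑ p ∈ idx n N, wt p.1 p.2 * D (some j) (flux b c U (Dw (Wd p.1 p.2) U) j) z := by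
    intro j
    unfold Fl
    rw [D_sum _ _ _ fun p _ => contDiff_const.mul (fs p j)]
    simp only [D_const_mul _ _ (fs _ _)]
  have hbal : D none (eN a c U N) z = Qs U N f z + ∑ j, D (some j) (Fl b c U N j) z := by
    simp only [hFl]
    rw [heN, Finset.sum_comm, Qs, ← Finset.sum_add_distrib]
    refine Finset.sum_congr rfl fun p hp => ?_
    obtain ⟨k, -, -, h3⟩ := hf p hp
    rw [eterm_identity a b c hU (Dw_smooth _ hU), h3 z hz, ← Finset.mul_sum, Dw_cons]
    ring
  have habs : D none χ z * eN a c U N z - ∑ j, D (some j) χ z * Fl b c U N j z ≤ 0 := by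
    have : D none χ z * eN a c U N z - ∑ j, D (some j) χ z * Fl b c U N j z =
        ∑ p ∈ idx n N, wt p.1 p.2 * (D none χ z * eterm a c U (Dw (Wd p.1 p.2) U) z -
          ∑ j, D (some j) χ z * flux b c U (Dw (Wd p.1 p.2) U) j z) := by
      simp only [eN_eq, Fl, Finset.mul_sum, mul_sub, Finset.sum_sub_distrib]
      rw [Finset.sum_comm]
      congr 1
      · exact Finset.sum_congr rfl fun p _ => by ring
      · exact Finset.sum_congr rfl fun p _ => Finset.sum_congr rfl fun j _ => by ring
    rw [this]
    exact Finset.sum_nonpos fun p _ => mul_nonpos_of_nonneg_of_nonpos (wt_pos _ _).le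
      (flux_absorb hΛ0 hχ (h.lo z hz) hM hΛ)
  rw [D_mul _ hχ.smooth (eN_smooth a c hU N)]
  simp only [D_mul _ hχ.smooth (Fl_smooth b c hU N _), Finset.sum_add_distrib, ← Finset.mul_sum]
  rw [hbal]
  linarith

lemma cut_support {Λ ρ η : ℝ} (hΛ : 0 ≤ Λ) (hη : 0 < η) (x0 : Fin n → ℝ) (t : ℝ) :
    ∀ s ∈ Metric.ball t 1, ∀ x, x ∉ Metric.closedBall x0 (|ρ| + Λ * (|t| + 1)) →
      cut Λ ρ η x0 (s, x) = 0 := by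
  intro s hs x hx
  by_contra hne
  apply hx
  have h1 := cut_ne_zero hη hne
  rw [Metric.mem_ball, Real.dist_eq] at hs
  have hs' : -s ≤ |t| + 1 := by
    have := (abs_lt.1 hs).1; have := neg_abs_le t; linarith
  rw [Metric.mem_closedBall, dist_pi_le_iff (by positivity)]
  intro i
  have := h1 i
  have h2 := mul_le_mul_of_nonneg_left hs' hΛ
  simp only at this
  rw [Real.dist_eq]; linarith [le_abs_self ρ]

/-- Integrated form of the localised energy inequality. -/
lemma local_energy (h : Sol a b c κ T U) {N : ℕ} (hN : 1 ≤ N) :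
    ∃ f : (Σ _ : ℕ, Fin n → ℕ) → ℝ × (Fin n → ℝ) → ℝ,
      (∀ p ∈ idx n N, ∃ k, Src U κ N k (f p) ∧ k ≤ srcCount n N + (1 + n)) ∧
      ∀ (Λ M ρ η : ℝ) (x0 : Fin n → ℝ), 0 ≤ Λ → 0 < η →
        |b| * M + c ^ 2 ≤ Λ * min (1 / 2) (c ^ 2) →
        ∀ t ∈ Set.Icc 0 T, (∀ x, cut Λ ρ η x0 (t, x) ≠ 0 → ∀ j, |D (some j) U (t, x)| ≤ M) →
        ∃ y, HasDerivAt (fun s => ∫ x, cut Λ ρ η x0 (s, x) * eN a c U N (s, x)) y t ∧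
          y ≤ ∫ x, cut Λ ρ η x0 (t, x) * Qs U N f (t, x) := by
  obtain ⟨f, hf, hbal⟩ := local_balance h hN
  refine ⟨f, hf, fun Λ M ρ η x0 hΛ0 hη hΛ t ht hM => ?_⟩
  have hU := h.hU
  have hχ := cut_isCut hΛ0 hη ρ x0
  set K := Metric.closedBall x0 (|ρ| + Λ * (|t| + 1)) with hK
  have hKc : IsCompact K := isCompact_closedBall _ _
  have hs := cut_support (ρ := ρ) hΛ0 hη x0 t
  have hs' := hs t (Metric.mem_ball_self one_pos)
  have h1 := hasDerivAt_slice_integral (hχ.smooth.mul (eN_smooth a c hU N)) hKc t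
    fun s hs1 x hx => by simp [hs s hs1 x hx]
  refine ⟨_, h1, ?_⟩
  have hQ : ContDiff ℝ (⊤ : ℕ∞) (Qs U N f) := by
    refine ContDiff.sum fun p hp => contDiff_const.mul ?_
    obtain ⟨k, hk, -⟩ := hf p hp
    exact (contDiff_const.mul (hk.smooth hU)).mul (Dw_smooth _ hU)
  have hF := fun j => integral_D_slice (hχ.smooth.mul (Fl_smooth b c hU N j)) hKc t
    (fun x hx => by simp [hs' x hx]) j
  have i1 : Integrable fun x => cut Λ ρ η x0 (t, x) * Qs U N f (t, x) :=
    slice_integrable (hχ.smooth.mul hQ).continuous hKc t fun x hx => by simp [hs' x hx]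
  have i2 := integrable_finsetSum Finset.univ fun j _ => (hF j).1
  have e : ∫ x, cut Λ ρ η x0 (t, x) * Qs U N f (t, x) =
      ∫ x, (cut Λ ρ η x0 (t, x) * Qs U N f (t, x) +
        ∑ j, D (some j) (fun z => cut Λ ρ η x0 z * Fl b c U N j z) (t, x)) := by
    rw [integral_add i1 i2, integral_finsetSum _ fun j _ => (hF j).1,
      Finset.sum_congr rfl fun j _ => (hF j).2]
    simp
  rw [e]
  refine integral_mono ?_ (i1.add i2) fun x => ?_
  · have hz := D_eq_zero_of_open (ψ := fun z => cut Λ ρ η x0 z * eN a c U N z)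
      (Metric.isOpen_ball.prod hKc.isClosed.isOpen_compl)
      (fun z hz => by rw [show z = (z.1, z.2) from rfl, hs z.1 hz.1 z.2 hz.2, zero_mul]) none
    exact slice_integrable (D_smooth none (hχ.smooth.mul (eN_smooth a c hU N))).continuous hKc t
      fun x hx => hz (t, x) ⟨Metric.mem_ball_self one_pos, hx⟩
  · exact hbal Λ M _ hΛ0 hχ hΛ (t, x) ht (hM x)

end localenergy

/-! ### Grönwall estimate under pointwise bounds -/

section gronwall
variable {n : ℕ} {a b c κ T : ℝ} {U : ℝ × (Fin n → ℝ) → ℝ}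

/-- Pointwise bound of a quadratic source, multiplied by `y`, from bounds on its terms. -/
lemma Src.bound {N k : ℕ} {f} (h : Src U κ N k f) {z} {y B : ℝ}
    (hB : ∀ p q : List (Option (Fin n)), 1 ≤ p.length → 1 ≤ q.length → p.length ≤ N + 1 →
      q.length ≤ N + 1 → p.length + q.length ≤ N + 3 → |Dw p U z * Dw q U z * y| ≤ B) :
    |f z * y| ≤ k * (κ * B) := by
  induction h with
  | zero => simp
  | term r p q hr hp hq hp' hq' h =>
    rw [mul_assoc, abs_mul, Nat.cast_one, one_mul]
    have := hB p q hp hq hp' hq' h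
    exact mul_le_mul hr this (abs_nonneg _) ((abs_nonneg _).trans hr)
  | add _ _ h1 h2 =>
    rw [add_mul]; push_cast
    refine (abs_add_le _ _).trans ?_
    rw [add_mul]; linarith

lemma Qs_smooth (hU : ContDiff ℝ (⊤ : ℕ∞) U) {N K : ℕ}
    {f : (Σ _ : ℕ, Fin n → ℕ) → ℝ × (Fin n → ℝ) → ℝ}
    (hf : ∀ p ∈ idx n N, ∃ k, Src U κ N k (f p) ∧ k ≤ K) : ContDiff ℝ (⊤ : ℕ∞) (Qs U N f) := by
  refine ContDiff.sum fun p hp => contDiff_const.mul ?_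
  obtain ⟨k, hk, -⟩ := hf p hp
  exact (contDiff_const.mul (hk.smooth hU)).mul (Dw_smooth _ hU)

/-- As `N + 3 ≤ 2k + 1`, one of the two factors of each quadratic term has order at most `k` and is
bounded by `M`; the remaining two factors of the cubic term are controlled by the energy density. -/
lemma Qs_bound (h : Sol a b c κ T U) {k N : ℕ} (hk : N + 2 ≤ 2 * k)
    {f : (Σ _ : ℕ, Fin n → ℕ) → ℝ × (Fin n → ℝ) → ℝ}
    (hf : ∀ p ∈ idx n N, ∃ k, Src U κ N k (f p) ∧ k ≤ srcCount n N + (1 + n)) {M : ℝ} (hM : 0 ≤ M)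
    {z : ℝ × (Fin n → ℝ)} (hz : z.1 ∈ Set.Icc 0 T)
    (hb : ∀ w : List (Option (Fin n)), 1 ≤ w.length → w.length ≤ k → |Dw w U z| ≤ M) :
    Qs U N f z ≤ ((idx n N).card * (2 * ((srcCount n N + (1 + n) : ℕ) * (κ * (M * C0 n c))))) *
      eN a c U N z := by
  have hA := h.lo z hz
  have he := eN_nonneg (c := c) (N := N) hA
  have hC : 0 ≤ C0 n c := by unfold C0; positivity
  have hκ := h.κ_nonneg
  rw [mul_assoc, Qs, ← nsmul_eq_mul]
  refine Finset.sum_le_card_nsmul _ _ _ fun p hp => ?_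
  obtain ⟨l, hl, hl'⟩ := hf p hp
  have hw := idx_le hp
  set r := none :: Wd p.1 p.2 with hr
  have hr1 : 1 ≤ r.length := by simp [hr]
  have hr2 : r.length ≤ N + 1 := by simp [hr]; omega
  have sqle := fun (w : List (Option (Fin n))) h1 h2 =>
    sq_le_eN (a := a) h.hc h.hU (N := N) hA (w := w) h1 h2
  have key : |f p z * Dw r U z| ≤ l * (κ * (M * (C0 n c * eN a c U N z))) := by
    refine hl.bound fun p q hp hq hp' hq' hpq => ?_
    have main : ∀ p q : List (Option (Fin n)), 1 ≤ p.length → 1 ≤ q.length → p.length ≤ k →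
        q.length ≤ N + 1 → |Dw p U z * Dw q U z * Dw r U z| ≤ M * (C0 n c * eN a c U N z) := by
      intro p q hp hq hp' hq'
      rw [mul_assoc, abs_mul]
      refine mul_le_mul (hb p hp hp') ?_ (abs_nonneg _) hM
      rw [abs_mul]
      have h1 := sqle q hq hq'
      have h2 := sqle r hr1 hr2
      rw [← sq_abs] at h1 h2
      nlinarith [sq_nonneg (|Dw q U z| - |Dw r U z|)]
    by_cases hpk : p.length ≤ k
    · exact main p q hp hq hpk hq'
    · rw [mul_comm (Dw p U z)]
      exact main q p hq hp (by omega) hp'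
  have hl2 : (l : ℝ) ≤ ((srcCount n N + (1 + n) : ℕ) : ℝ) := by exact_mod_cast hl'
  have h1 : 2 * f p z * Dw r U z ≤
      2 * (((srcCount n N + (1 + n) : ℕ) : ℝ) * (κ * (M * (C0 n c * eN a c U N z)))) := by
    rw [mul_assoc]
    refine mul_le_mul_of_nonneg_left ((le_abs_self _).trans (key.trans ?_)) (by norm_num)
    gcongr
  calc _ ≤ wt p.1 p.2 * (2 * (((srcCount n N + (1 + n) : ℕ) : ℝ) *
        (κ * (M * (C0 n c * eN a c U N z))))) := mul_le_mul_of_nonneg_left h1 (wt_pos _ _).le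
    _ ≤ 1 * (2 * (((srcCount n N + (1 + n) : ℕ) : ℝ) * (κ * (M * (C0 n c * eN a c U N z))))) := by
        gcongr; exact wt_le_one _ _
    _ = _ := by ring

lemma cut_integrable {g : ℝ × (Fin n → ℝ) → ℝ} (hg : Continuous g) {Λ ρ η : ℝ} (hΛ : 0 ≤ Λ)
    (hη : 0 < η) (x0 : Fin n → ℝ) (t : ℝ) : Integrable fun x => cut Λ ρ η x0 (t, x) * g (t, x) :=
  slice_integrable ((cut_isCut hΛ hη ρ x0).smooth.continuous.mul hg)
    (isCompact_closedBall x0 (|ρ| + Λ * (|t| + 1))) t fun x hx => by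
      simp [cut_support (ρ := ρ) hΛ hη x0 t t (Metric.mem_ball_self one_pos) x hx]

/-- Exponential growth bound for localised energies, as long as the derivatives up to the middle
order are bounded on the support of the cutoff. -/
lemma local_gronwall (h : Sol a b c κ T U) {k N : ℕ} (hN : 1 ≤ N) (hk : N + 2 ≤ 2 * k) {M : ℝ}
    (hM : 0 ≤ M) : ∃ C : ℝ, 0 ≤ C ∧ ∀ (Λ ρ η : ℝ) (x0 : Fin n → ℝ), 0 ≤ Λ → 0 < η →
      |b| * M + c ^ 2 ≤ Λ * min (1 / 2) (c ^ 2) → ∀ t1 ≤ T,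
      (∀ s ∈ Set.Icc 0 t1, ∀ x, cut Λ ρ η x0 (s, x) ≠ 0 → ∀ w : List (Option (Fin n)),
        1 ≤ w.length → w.length ≤ k → |Dw w U (s, x)| ≤ M) →
      ∀ t ∈ Set.Icc 0 t1, ∫ x, cut Λ ρ η x0 (t, x) * eN a c U N (t, x) ≤
        exp (C * t) * ∫ x, cut Λ ρ η x0 (0, x) * eN a c U N (0, x) := by
  obtain ⟨f, hf, hd⟩ := local_energy h hN
  set C := ((idx n N).card * (2 * ((srcCount n N + (1 + n) : ℕ) * (κ * (M * C0 n c))))) with hC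
  have hκ := h.κ_nonneg
  have hC0 : 0 ≤ C := by
    have : 0 ≤ C0 n c := by unfold C0; positivity
    positivity
  refine ⟨C, hC0, fun Λ ρ η x0 hΛ0 hη hΛ t1 ht1 hb t ht => ?_⟩
  set Y : ℝ → ℝ := fun s => ∫ x, cut Λ ρ η x0 (s, x) * eN a c U N (s, x) with hY
  have hder : ∀ s ∈ Set.Icc 0 t1, ∃ y, HasDerivAt Y y s ∧ y ≤ C * Y s := by
    intro s hs
    have hsT : s ∈ Set.Icc 0 T := ⟨hs.1, hs.2.trans ht1⟩
    obtain ⟨y, hy, hle⟩ := hd Λ M ρ η x0 hΛ0 hη hΛ s hsT fun x hx j =>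
      hb s hs x hx [some j] (by simp) (by simp; omega)
    refine ⟨y, hy, hle.trans ?_⟩
    rw [hY, ← integral_const_mul]
    have hQ : Continuous (Qs U N f) := (Qs_smooth h.hU hf).continuous
    refine integral_mono (cut_integrable hQ hΛ0 hη x0 s)
      ((cut_integrable (eN_smooth a c h.hU N).continuous hΛ0 hη x0 s).const_mul C) fun x => ?_
    have h0 := (cut_isCut hΛ0 hη ρ x0).nonneg (s, x)
    by_cases hx : cut Λ ρ η x0 (s, x) = 0
    · simp [hx]
    · have := Qs_bound h hk hf hM (z := (s, x)) hsT (hb s hs x hx)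
      have := mul_le_mul_of_nonneg_left this h0
      refine this.trans (le_of_eq ?_)
      simp only [hC]; ring
  choose! Y' hY' hle using hder
  have hanti : AntitoneOn (fun s => exp (-C * s) * Y s) (Set.Icc 0 t1) := by
    have hd2 : ∀ s ∈ Set.Icc 0 t1, HasDerivAt (fun s => exp (-C * s) * Y s)
        (exp (-C * s) * (-C * 1) * Y s + exp (-C * s) * Y' s) s := fun s hs =>
      (((hasDerivAt_id s).const_mul (-C)).exp).mul (hY' s hs)
    refine antitoneOn_of_deriv_nonpos (convex_Icc _ _)
      (fun s hs => (hd2 s hs).continuousAt.continuousWithinAt)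
      (fun s hs => (hd2 s (interior_subset hs)).differentiableAt.differentiableWithinAt)
      fun s hs => ?_
    rw [(hd2 s (interior_subset hs)).deriv]
    have := mul_le_mul_of_nonneg_left (hle s (interior_subset hs)) (exp_pos (-C * s)).le
    linarith
  have := hanti (Set.left_mem_Icc.2 (ht.1.trans ht.2)) ht ht.1
  simp only [mul_zero, exp_zero, one_mul] at this
  change Y t ≤ exp (C * t) * Y 0
  calc Y t = exp (C * t) * (exp (-C * t) * Y t) := by
        rw [← mul_assoc, ← exp_add]; simp
    _ ≤ _ := mul_le_mul_of_nonneg_left this (exp_pos _).le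

end gronwall

/-! ### A Sobolev inequality on unit boxes -/

section box
variable {n : ℕ} {a b c κ T : ℝ} {U : ℝ × (Fin n → ℝ) → ℝ}

/-- One-dimensional Sobolev inequality on a unit interval. -/
lemma unit_sobolev {f f' : ℝ → ℝ} (hf : ∀ y, HasDerivAt f (f' y) y) (hf' : Continuous f')
    {p x : ℝ} (hx : x ∈ Set.Icc p (p + 1)) :
    f x ^ 2 ≤ 2 * ∫ y in Set.Icc p (p + 1), (f y ^ 2 + f' y ^ 2) := by
  have hc : Continuous f := continuous_iff_continuousAt.2 fun y => (hf y).continuousAt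
  have hg : Continuous fun y => f y ^ 2 + f' y ^ 2 := by fun_prop
  set J := ∫ y in Set.Icc p (p + 1), (f y ^ 2 + f' y ^ 2) with hJ
  have hInteg : IntegrableOn (fun y => f y ^ 2 + f' y ^ 2) (Set.Icc p (p + 1)) :=
    hg.continuousOn.integrableOn_compact isCompact_Icc
  have h1 : ∀ y ∈ Set.Icc p (p + 1), f x ^ 2 ≤ f y ^ 2 + J := by
    intro y hy
    have hd : ∀ s, HasDerivAt (fun s => f s ^ 2) (2 * f s * f' s) s := fun s => by
      simpa using (hf s).fun_pow 2
    have e := intervalIntegral.integral_eq_sub_of_hasDerivAt (a := y) (b := x)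
      (fun s _ => hd s) (Continuous.intervalIntegrable (by fun_prop) _ _)
    have hsub : Set.uIoc y x ⊆ Set.Icc p (p + 1) :=
      Set.uIoc_subset_uIcc.trans (Set.uIcc_subset_Icc hy hx)
    have h2 : |∫ s in y..x, 2 * f s * f' s| ≤ J := by
      rw [← Real.norm_eq_abs]
      refine (intervalIntegral.norm_integral_le_integral_norm_uIoc).trans ?_
      refine le_trans (setIntegral_mono_on (g := fun s => f s ^ 2 + f' s ^ 2) ?_
        (hInteg.mono_set hsub) measurableSet_uIoc fun s _ => ?_)
        (setIntegral_mono_set hInteg (Filter.Eventually.of_forall fun s => by positivity)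
          hsub.eventuallyLE)
      · exact ((by fun_prop : Continuous fun s => ‖2 * f s * f' s‖).continuousOn.integrableOn_compact
          isCompact_Icc).mono_set hsub
      · rw [Real.norm_eq_abs, abs_le]
        constructor <;> nlinarith [sq_nonneg (f s + f' s), sq_nonneg (f s - f' s)]
    linarith [le_abs_self (∫ s in y..x, 2 * f s * f' s)]
  have hv : volume.real (Set.Icc p (p + 1)) = 1 := by simp
  have i1 : IntegrableOn (fun y => f y ^ 2) (Set.Icc p (p + 1)) :=
    (by fun_prop : Continuous fun y => f y ^ 2).continuousOn.integrableOn_compact isCompact_Icc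
  have hcst : ∀ r : ℝ, ∫ _ in Set.Icc p (p + 1), r = r := fun r => by simp
  have h3 : f x ^ 2 ≤ ∫ y in Set.Icc p (p + 1), (f y ^ 2 + J) := by
    rw [← hcst (f x ^ 2)]
    exact setIntegral_mono_on (integrableOn_const (by simp))
      (i1.add (integrableOn_const (by simp))) measurableSet_Icc h1
  rw [integral_add i1 (integrableOn_const (by simp)), hcst] at h3
  have h4 : ∫ y in Set.Icc p (p + 1), f y ^ 2 ≤ J :=
    setIntegral_mono_on i1 hInteg measurableSet_Icc fun y _ => by linarith [sq_nonneg (f' y)]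
  linarith

/-- The unit box with lower corner `p`. -/
def ubox (p : Fin n → ℝ) : Set (Fin n → ℝ) := Set.univ.pi fun i => Set.Icc (p i) (p i + 1)

/-- Sobolev inequality on a unit box, obtained by integrating out one variable at a time. -/
lemma box_sobolev_aux (hU : ContDiff ℝ (⊤ : ℕ∞) U) {L : ℕ} {t : ℝ} {g : (Fin n → ℝ) → ℝ}
    (hg : Continuous g)
    (hle : ∀ w : List (Option (Fin n)), 1 ≤ w.length → w.length ≤ L → ∀ x, Dw w U (t, x) ^ 2 ≤ g x)
    (p : Fin n → ℝ) (S : Finset (Fin n)) :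
    ∀ w : List (Option (Fin n)), 1 ≤ w.length → w.length + S.card ≤ L → ∀ x ∈ ubox p,
      ENNReal.ofReal (Dw w U (t, x) ^ 2) ≤ 4 ^ S.card *
        (∫⋯∫⁻_S, (fun y => ENNReal.ofReal (g y))
          ∂fun i => (volume : Measure ℝ).restrict (Set.Icc (p i) (p i + 1))) x := by
  have hgm : Measurable fun y => ENNReal.ofReal (g y) := hg.measurable.ennreal_ofReal
  induction S using Finset.induction_on with
  | empty =>
    intro w h1 h2 x _
    simp only [Finset.card_empty, pow_zero, one_mul, lmarginal_empty]
    exact ENNReal.ofReal_le_ofReal (hle w h1 (by simpa using h2) x)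
  | insert j S hj ih =>
    intro w h1 h2 x hx
    rw [Finset.card_insert_of_notMem hj] at h2 ⊢
    rw [lmarginal_insert _ hgm hj]
    set f : ℝ → ℝ := fun y => Dw w U (t, Function.update x j y) with hf
    set f' : ℝ → ℝ := fun y => Dw (some j :: w) U (t, Function.update x j y) with hf'
    have hupd : Continuous fun y : ℝ => Function.update x j y :=
      continuous_const.update j continuous_id
    have hfc : Continuous f := (Dw_cont w hU).comp (continuous_const.prodMk hupd)
    have hf'c : Continuous f' := (Dw_cont (some j :: w) hU).comp (continuous_const.prodMk hupd)
    have hd : ∀ y, HasDerivAt f (f' y) y := by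
      intro y
      have h1 := ((Dw_smooth w hU).differentiable (by simp) (t, Function.update x j y)).hasFDerivAt
      have h2 : HasDerivAt (fun y : ℝ => (t, Function.update x j y)) (0, Pi.single j 1) y :=
        (hasDerivAt_const y t).prodMk (hasDerivAt_update x j y)
      exact h1.comp_hasDerivAt y h2
    have hxj := hx j trivial
    have h3 := unit_sobolev hd hf'c hxj
    have e1 : f (x j) = Dw w U (t, x) := by simp [hf]
    rw [e1] at h3
    have hInteg : IntegrableOn (fun y => f y ^ 2 + f' y ^ 2) (Set.Icc (p j) (p j + 1)) :=
      (by fun_prop : Continuous fun y => f y ^ 2 + f' y ^ 2).continuousOn.integrableOn_compact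
        isCompact_Icc
    refine (ENNReal.ofReal_le_ofReal h3).trans ?_
    rw [ENNReal.ofReal_mul (by norm_num), ofReal_integral_eq_lintegral_ofReal hInteg
      (Filter.Eventually.of_forall fun y => by positivity)]
    set I : ℝ → ENNReal := fun y => (∫⋯∫⁻_S, (fun y => ENNReal.ofReal (g y))
      ∂fun i => (volume : Measure ℝ).restrict (Set.Icc (p i) (p i + 1))) (Function.update x j y)
      with hI
    have h4 : ∀ y ∈ Set.Icc (p j) (p j + 1), ENNReal.ofReal (f y ^ 2 + f' y ^ 2) ≤
        2 * 4 ^ S.card * I y := by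
      intro y hy
      have hb : Function.update x j y ∈ ubox p := by
        intro i _
        by_cases hi : i = j
        · subst hi; simpa using hy
        · simpa [hi] using hx i trivial
      have k1 := ih w h1 (by omega) _ hb
      have k2 := ih (some j :: w) (by simp) (by simp; omega) _ hb
      rw [ENNReal.ofReal_add (sq_nonneg _) (sq_nonneg _)]
      refine (add_le_add k1 k2).trans (le_of_eq ?_)
      rw [mul_assoc, two_mul]
    calc ENNReal.ofReal 2 * ∫⁻ y in Set.Icc (p j) (p j + 1), ENNReal.ofReal (f y ^ 2 + f' y ^ 2)
        ≤ ENNReal.ofReal 2 * ∫⁻ y in Set.Icc (p j) (p j + 1), 2 * 4 ^ S.card * I y :=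
          mul_le_mul' le_rfl (setLIntegral_mono' measurableSet_Icc h4)
      _ = 4 ^ (S.card + 1) * ∫⁻ y in Set.Icc (p j) (p j + 1), I y := by
          rw [lintegral_const_mul' _ _ (by finiteness), ← mul_assoc]
          congr 1
          rw [show ENNReal.ofReal 2 = 2 by norm_num, pow_succ, ← mul_assoc]
          rw [show (4 : ENNReal) = 2 * 2 by norm_num]; ring

/-- Sobolev inequality on a unit box: `n` extra derivatives in `L²` control the pointwise value. -/
lemma box_sobolev (hU : ContDiff ℝ (⊤ : ℕ∞) U) {L : ℕ} {t : ℝ} {g : (Fin n → ℝ) → ℝ}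
    (hg : Continuous g) (hg0 : ∀ x, 0 ≤ g x)
    (hle : ∀ w : List (Option (Fin n)), 1 ≤ w.length → w.length ≤ L → ∀ x, Dw w U (t, x) ^ 2 ≤ g x)
    (p : Fin n → ℝ) {w : List (Option (Fin n))} (h1 : 1 ≤ w.length) (h2 : w.length + n ≤ L)
    {x : Fin n → ℝ} (hx : x ∈ ubox p) :
    Dw w U (t, x) ^ 2 ≤ 4 ^ n * ∫ y in ubox p, g y := by
  have h := box_sobolev_aux hU hg hle p Finset.univ w h1 (by simpa using h2) x hx
  rw [lmarginal_univ, ← Measure.restrict_pi_pi, ← volume_pi] at h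
  have hcomp : IsCompact (ubox p) := isCompact_univ_pi fun i => isCompact_Icc
  have hInteg : IntegrableOn g (ubox p) := hg.continuousOn.integrableOn_compact hcomp
  change _ ≤ _ * ∫⁻ y in ubox p, _ at h
  rw [← ofReal_integral_eq_lintegral_ofReal hInteg (Filter.Eventually.of_forall hg0)] at h
  have e4 : (4 : ENNReal) ^ (Finset.univ : Finset (Fin n)).card = ENNReal.ofReal (4 ^ n) := by
    rw [ENNReal.ofReal_pow (by norm_num)]; norm_num
  rw [e4, ← ENNReal.ofReal_mul (by positivity)] at h
  refine (ENNReal.ofReal_le_ofReal_iff ?_).1 h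
  have := setIntegral_nonneg (μ := volume) hcomp.measurableSet fun x (_ : x ∈ ubox p) => hg0 x
  positivity

end box

/-! ### Uniform boundedness of derivatives on the time strip -/

section exterior
variable {n : ℕ} {a b c κ T : ℝ} {U : ℝ × (Fin n → ℝ) → ℝ}

/-- Small localised energies give small derivatives on the whole closed cube. -/
lemma small_of_energy (h : Sol a b c κ T U) {k N : ℕ} (hk : k + n ≤ N + 1) {Λ ρ : ℝ} (hΛ : 0 ≤ Λ)
    (hρ : Λ * T + 2 ≤ ρ) (x0 : Fin n → ℝ) {t : ℝ} (ht : t ∈ Set.Icc 0 T)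
    (hE : ∀ η : ℝ, 0 < η → η ≤ 1 →
      4 ^ n * C0 n c * ∫ x, cut Λ ρ η x0 (t, x) * eN a c U N (t, x) ≤ 1 / 4)
    {w : List (Option (Fin n))} (h1 : 1 ≤ w.length) (h2 : w.length ≤ k) (x : Fin n → ℝ)
    (hx : ∀ i, |x i - x0 i| ≤ ρ - Λ * t) : |Dw w U (t, x)| ≤ 1 / 2 := by
  have hC : 0 ≤ C0 n c := by unfold C0; positivity
  have hr : 2 ≤ ρ - Λ * t := by
    have := mul_le_mul_of_nonneg_left ht.2 hΛ; linarith
  have heN := (eN_smooth a c h.hU N).continuous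
  have he0 : ∀ x, 0 ≤ eN a c U N (t, x) := fun x => eN_nonneg (h.lo (t, x) ht)
  have inner : ∀ η : ℝ, 0 < η → η ≤ 1 → ∀ y : Fin n → ℝ, (∀ i, |y i - x0 i| ≤ ρ - Λ * t - η) →
      |Dw w U (t, y)| ≤ 1 / 2 := by
    intro η hη hη1 y hy
    set r := ρ - Λ * t - η with hrd
    set p : Fin n → ℝ := fun i => max (x0 i - r) (y i - 1) with hp
    have hyp : y ∈ ubox p := by
      intro i _
      have := abs_le.1 (hy i)
      exact ⟨max_le (by linarith) (by linarith), by
        have := le_max_right (x0 i - r) (y i - 1); simp only [hp]; linarith⟩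
    have hbox : ∀ z ∈ ubox p, ∀ i, |z i - x0 i| ≤ r := by
      intro z hz i
      have hz := hz i trivial
      have := abs_le.1 (hy i)
      have h3 := le_max_left (x0 i - r) (y i - 1)
      have h4 : p i + 1 ≤ x0 i + r := by
        have : p i ≤ x0 i + r - 1 := max_le (by linarith) (by linarith)
        linarith
      rw [abs_le]; exact ⟨by linarith [hz.1], by linarith [hz.2]⟩
    have key := box_sobolev h.hU (L := N + 1) (t := t) (g := fun x => C0 n c * eN a c U N (t, x))
      (by fun_prop) (fun x => mul_nonneg hC (he0 x))
      (fun w h1 h2 x => sq_le_eN h.hc h.hU (h.lo (t, x) ht) h1 h2) p h1 (by omega) hyp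
    rw [integral_const_mul] at key
    have hcut := (cut_isCut hΛ hη ρ x0).nonneg
    have h5 : ∫ y in ubox p, eN a c U N (t, y) ≤
        ∫ x, cut Λ ρ η x0 (t, x) * eN a c U N (t, x) := by
      have hm : MeasurableSet (ubox p) :=
        (isCompact_univ_pi fun i => isCompact_Icc).measurableSet
      rw [← integral_indicator hm]
      refine integral_mono_of_nonneg (Filter.Eventually.of_forall fun z =>
        Set.indicator_nonneg (fun z _ => he0 z) z) (cut_integrable heN hΛ hη x0 t)
        (Filter.Eventually.of_forall fun z => ?_)
      by_cases hz : z ∈ ubox p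
      · simp only [Set.indicator_of_mem hz]
        rw [cut_eq_one hη (z := (t, z)) (fun i => hbox z hz i), one_mul]
      · simp only [Set.indicator_of_notMem hz]; exact mul_nonneg (hcut _) (he0 z)
    have h6 : Dw w U (t, y) ^ 2 ≤ (1 / 2) ^ 2 := by
      refine key.trans (le_trans ?_ ((hE η hη hη1).trans (by norm_num)))
      rw [mul_assoc]; gcongr
    exact abs_le_of_sq_le_sq h6 (by norm_num)
  -- points of the closed cube are limits of points of its interior
  have hcont : Continuous fun s : ℝ => |Dw w U (t, x0 + (1 - s) • (x - x0))| := by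
    have := Dw_cont w h.hU
    fun_prop
  have hlim : Filter.Tendsto (fun s : ℝ => |Dw w U (t, x0 + (1 - s) • (x - x0))|)
      (nhdsWithin 0 (Set.Ioi 0)) (nhds |Dw w U (t, x)|) := by
    have := (hcont.tendsto 0).mono_left (nhdsWithin_le_nhds (s := Set.Ioi 0))
    simpa using this
  refine le_of_tendsto hlim ?_
  have hpos : 0 < ρ - Λ * t := by linarith
  filter_upwards [Ioo_mem_nhdsGT (show (0 : ℝ) < 1 / (ρ - Λ * t) by positivity)] with s hs
  have hs1 : s * (ρ - Λ * t) ≤ 1 := by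
    have := hs.2.le; rwa [le_div_iff₀ hpos] at this
  have hs2 : s ≤ 1 := by nlinarith [hs.1]
  refine inner (s * (ρ - Λ * t)) (mul_pos hs.1 hpos) hs1 _ fun i => ?_
  simp only [Pi.add_apply, Pi.smul_apply, Pi.sub_apply, smul_eq_mul, add_sub_cancel_left]
  rw [abs_mul, abs_of_nonneg (by linarith : 0 ≤ 1 - s)]
  have := mul_le_mul_of_nonneg_left (hx i) (by linarith : 0 ≤ 1 - s)
  linarith

/-- Far away from the origin the derivatives stay bounded by one: continuous induction in time on
shrinking cubes, which by finite speed of propagation only see the small initial data there. -/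
lemma exterior_bound (h : Sol a b c κ T U) {k N : ℕ} (hN : 1 ≤ N) (hk : N + 2 ≤ 2 * k)
    (hk' : k + n ≤ N + 1) : ∃ R : ℝ, ∀ t ∈ Set.Ico 0 T, ∀ x : Fin n → ℝ, R ≤ ‖x‖ →
      ∀ w : List (Option (Fin n)), 1 ≤ w.length → w.length ≤ k → |Dw w U (t, x)| ≤ 1 := by
  obtain ⟨C, hC0, hgr⟩ := local_gronwall h hN hk zero_le_one
  have hT := h.hT
  have hc := h.hc
  have hmin : 0 < min (1 / 2) (c ^ 2) := by positivity
  set Λ := (|b| * 1 + c ^ 2) / min (1 / 2) (c ^ 2) with hΛd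
  have hΛ : 0 ≤ Λ := by positivity
  have hΛ' : |b| * 1 + c ^ 2 ≤ Λ * min (1 / 2) (c ^ 2) := by
    rw [hΛd, div_mul_cancel₀ _ hmin.ne']
  set ρ := Λ * T + 2 with hρ
  have hρ0 : 0 ≤ ρ := by positivity
  have hCC : 0 < C0 n c := by unfold C0; positivity
  -- the threshold making the initial energy on a cube negligible
  set δ := 1 / (4 * (4 ^ n * C0 n c * exp (C * T) * (2 * ρ) ^ n)) with hδ
  have hρp : 0 < ρ := by positivity
  have hδ0 : 0 < δ := by positivity
  have heN := (eN_smooth a c h.hU N).continuous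
  obtain ⟨g, hg⟩ := eN_schwartz h.hu a c N 0
  have hg' : ∀ x, g x = eN a c U N (0, x) := fun x => congrFun hg x
  have hz : Filter.Tendsto g (Filter.cocompact _) (nhds 0) := g.tendsto_cocompact
  have hev : ∀ᶠ x in Filter.cocompact (Fin n → ℝ), g x < δ := hz.eventually (gt_mem_nhds hδ0)
  rw [← Metric.cobounded_eq_cocompact, Filter.eventually_iff,
    (Metric.hasBasis_cobounded_compl_closedBall (0 : Fin n → ℝ)).mem_iff] at hev
  obtain ⟨R, -, hR⟩ := hev
  refine ⟨R + ρ + 1, fun t ht x0 hx0 => ?_⟩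
  have he0 : ∀ t ∈ Set.Icc 0 T, ∀ x, 0 ≤ eN a c U N (t, x) := fun t ht x =>
    eN_nonneg (h.lo (t, x) ht)
  have hinit : ∀ η : ℝ, 0 < η → ∫ x, cut Λ ρ η x0 (0, x) * eN a c U N (0, x) ≤ δ * (2 * ρ) ^ n := by
    intro η hη
    have hχ := cut_isCut hΛ hη ρ x0
    have hle : ∀ x, cut Λ ρ η x0 (0, x) * eN a c U N (0, x) ≤
        (Metric.closedBall x0 ρ).indicator (fun _ => δ) x := by
      intro x
      by_cases hx : x ∈ Metric.closedBall x0 ρ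
      · rw [Set.indicator_of_mem hx]
        have hxR : x ∈ (Metric.closedBall (0 : Fin n → ℝ) R)ᶜ := by
          intro hx'
          rw [Metric.mem_closedBall, dist_zero_right] at hx'
          rw [Metric.mem_closedBall, dist_eq_norm, norm_sub_rev] at hx
          have := norm_sub_norm_le x0 x
          linarith
        have h1 : g x ≤ δ := le_of_lt (hR hxR)
        rw [hg'] at h1
        exact (mul_le_of_le_one_left (he0 0 ⟨le_rfl, hT.le⟩ x) (hχ.le_one _)).trans h1
      · rw [Set.indicator_of_notMem hx]
        refine le_of_eq (mul_eq_zero_of_left ?_ _)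
        by_contra hne
        apply hx
        rw [Metric.mem_closedBall, dist_pi_le_iff hρ0]
        intro i
        have := cut_ne_zero hη hne i
        simp only [mul_zero, sub_zero] at this
        exact this.le
    have hm : MeasurableSet (Metric.closedBall x0 ρ) := measurableSet_closedBall
    have hfin : volume (Metric.closedBall x0 ρ) ≠ ⊤ := measure_closedBall_lt_top.ne
    refine (integral_mono (cut_integrable heN hΛ hη x0 0)
      ((integrable_indicator_iff hm).2 (integrableOn_const hfin)) hle).trans ?_
    rw [integral_indicator hm, setIntegral_const, smul_eq_mul, mul_comm, Measure.real,
      Real.volume_pi_closedBall _ hρ0, ENNReal.toReal_ofReal (by positivity), Fintype.card_fin]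
  have hsmall : 4 ^ n * C0 n c * (exp (C * T) * (δ * (2 * ρ) ^ n)) ≤ 1 / 4 := by
    rw [hδ]; apply le_of_eq; field_simp
  have hexp : ∀ s ≤ T, exp (C * s) ≤ exp (C * T) := fun s hs => by gcongr
  have hi0 : ∀ η : ℝ, 0 < η → 0 ≤ ∫ x, cut Λ ρ η x0 (0, x) * eN a c U N (0, x) := fun η hη =>
    integral_nonneg fun x => mul_nonneg ((cut_isCut hΛ hη ρ x0).nonneg _) (he0 0 ⟨le_rfl, hT.le⟩ x)
  -- one step: bounds by `1` up to time `s` improve to bounds by `1/2` at time `s`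
  have improve : ∀ s ∈ Set.Icc 0 T, (∀ η : ℝ, 0 < η → ∫ x, cut Λ ρ η x0 (s, x) * eN a c U N (s, x) ≤
      exp (C * s) * ∫ x, cut Λ ρ η x0 (0, x) * eN a c U N (0, x)) →
      ∀ w : List (Option (Fin n)), 1 ≤ w.length → w.length ≤ k → ∀ x : Fin n → ℝ,
      (∀ i, |x i - x0 i| ≤ ρ - Λ * s) → |Dw w U (s, x)| ≤ 1 / 2 := by
    intro s hs hg w h1 h2 x hx
    refine small_of_energy h hk' hΛ le_rfl x0 hs (fun η hη _ => le_trans ?_ hsmall) h1 h2 x hx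
    refine mul_le_mul_of_nonneg_left ((hg η hη).trans ?_) (by positivity)
    exact mul_le_mul (hexp s hs.2) (hinit η hη) (hi0 η hη) (exp_pos _).le
  set P : Set ℝ := {t | ∀ s, 0 ≤ s → s < t → ∀ x : Fin n → ℝ, (∀ i, |x i - x0 i| ≤ ρ - Λ * s) →
    ∀ w : List (Option (Fin n)), 1 ≤ w.length → w.length ≤ k → |Dw w U (s, x)| ≤ 1} with hP
  have himp : ∀ τ ∈ P, ∀ s ∈ Set.Icc 0 T, s < τ → ∀ w : List (Option (Fin n)), 1 ≤ w.length →
      w.length ≤ k → ∀ x : Fin n → ℝ, (∀ i, |x i - x0 i| ≤ ρ - Λ * s) → |Dw w U (s, x)| ≤ 1 / 2 := by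
    intro τ hτ s hs hsτ
    refine improve s hs fun η hη => ?_
    refine hgr Λ ρ η x0 hΛ hη hΛ' s hs.2 (fun s' hs' x hx w h1 h2 => ?_) s ⟨hs.1, le_rfl⟩
    exact hτ s' hs'.1 (hs'.2.trans_lt hsτ) x (fun i => (cut_ne_zero hη hx i).le) w h1 h2
  -- `P` is the set of times up to which the bounds by `1` hold on the shrinking cube
  have hclosed : IsClosed P := by
    have : P = ⋂ s : ℝ, {t | 0 ≤ s → s < t → ∀ x : Fin n → ℝ, (∀ i, |x i - x0 i| ≤ ρ - Λ * s) →
        ∀ w : List (Option (Fin n)), 1 ≤ w.length → w.length ≤ k → |Dw w U (s, x)| ≤ 1} := by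
      ext t; simp [hP]
    rw [this]
    refine isClosed_iInter fun s => ?_
    by_cases hs : 0 ≤ s → ∀ x : Fin n → ℝ, (∀ i, |x i - x0 i| ≤ ρ - Λ * s) →
        ∀ w : List (Option (Fin n)), 1 ≤ w.length → w.length ≤ k → |Dw w U (s, x)| ≤ 1
    · convert isClosed_univ
      ext t; simp only [Set.mem_ofPred_eq, Set.mem_univ, iff_true]
      exact fun h0 _ => hs h0
    · convert isClosed_Iic (a := s)
      ext t; simp only [Set.mem_ofPred_eq, Set.mem_Iic]
      constructor
      · intro h1; by_contra hlt; push Not at hlt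
        exact hs fun h0 => h1 h0 hlt
      · intro h1 _ h2; exact absurd h2 (not_lt.2 h1)
  have hsub : Set.Icc 0 T ⊆ P := by
    refine IsClosed.Icc_subset_of_forall_exists_gt (hclosed.inter isClosed_Icc)
      (fun s h0 h1 => absurd h1 (not_lt.2 h0)) ?_
    rintro τ ⟨hτP, hτ⟩ y hy
    have hτI : τ ∈ Set.Icc 0 T := ⟨hτ.1, hτ.2.le⟩
    -- bounds by `1/2` at time `τ`
    have hhalf : ∀ w : List (Option (Fin n)), 1 ≤ w.length → w.length ≤ k → ∀ x : Fin n → ℝ,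
        (∀ i, |x i - x0 i| ≤ ρ - Λ * τ) → |Dw w U (τ, x)| ≤ 1 / 2 := by
      rcases hτ.1.eq_or_lt with h0 | h0
      · subst h0
        exact improve 0 hτI fun η hη => by simp
      · intro w h1 h2 x hx
        have hcont : Continuous fun s : ℝ => |Dw w U (s, x)| := by
          have := Dw_cont w h.hU
          fun_prop
        refine le_of_tendsto ((hcont.tendsto τ).mono_left (nhdsWithin_le_nhds (s := Set.Iio τ))) ?_
        filter_upwards [Ioo_mem_nhdsLT h0] with s hs
        refine himp τ hτP s ⟨hs.1.le, hs.2.le.trans hτI.2⟩ hs.2 w h1 h2 x fun i => (hx i).trans ?_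
        have := mul_le_mul_of_nonneg_left hs.2.le hΛ; linarith
    -- by compactness of the cube the bounds by `1` persist for a short time after `τ`
    have hev : ∀ᶠ s in nhds τ, ∀ x ∈ Metric.closedBall x0 (ρ - Λ * τ),
        ∀ w ∈ {w : List (Option (Fin n)) | w.length ≤ k}, 1 ≤ w.length → |Dw w U (s, x)| ≤ 1 := by
      refine (isCompact_closedBall x0 (ρ - Λ * τ)).eventually_forall_of_forall_eventually
        fun x hx => ?_
      rw [Filter.eventually_all_finite (List.finite_length_le _ _)]
      intro w hw
      by_cases h1 : 1 ≤ w.length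
      · have hlt : |Dw w U (τ, x)| < 1 := by
          refine lt_of_le_of_lt (hhalf w h1 hw x fun i => ?_) (by norm_num)
          rw [← Real.dist_eq]; exact (dist_le_pi_dist x x0 i).trans hx
        have hc : Continuous fun z => |Dw w U z| := (Dw_cont w h.hU).abs
        filter_upwards [hc.continuousAt.eventually_lt continuousAt_const hlt] with z hz _
          using hz.le
      · exact Filter.Eventually.of_forall fun _ h => absurd h h1
    obtain ⟨e, he, hball⟩ := Metric.eventually_nhds_iff.1 hev
    have hy' : τ < y := hy
    refine ⟨min y (τ + e), ?_, lt_min hy' (by linarith), min_le_left _ _⟩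
    intro s h0 hs x hx w h1 h2
    rcases lt_or_ge s τ with hlt | hge
    · exact hτP s h0 hlt x hx w h1 h2
    · have hs2 := lt_of_lt_of_le hs (min_le_right _ _)
      refine hball (y := s) ?_ x ?_ w h2 h1
      · rw [Real.dist_eq, abs_of_nonneg (by linarith)]; linarith
      · have hr : 0 ≤ ρ - Λ * τ := by
          have := mul_le_mul_of_nonneg_left hτI.2 hΛ; linarith
        rw [Metric.mem_closedBall, dist_pi_le_iff hr]
        intro i
        rw [Real.dist_eq]
        have := mul_le_mul_of_nonneg_left hge hΛ
        linarith [hx i]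
  intro w h1 h2
  refine hsub (Set.right_mem_Icc.2 hT.le) t ht.1 ht.2 x0 (fun i => ?_) w h1 h2
  have := mul_le_mul_of_nonneg_left ht.2.le hΛ
  simp only [sub_self, abs_zero]; linarith

/-- All derivatives of a solution are bounded on the closed time strip. -/
lemma strip_bound (h : Sol a b c κ T U) (L : ℕ) : ∃ M : ℝ, 0 ≤ M ∧ ∀ t ∈ Set.Icc 0 T,
    ∀ x : Fin n → ℝ, ∀ w : List (Option (Fin n)), 1 ≤ w.length → w.length ≤ L →
      |Dw w U (t, x)| ≤ M := by
  obtain ⟨R, hR⟩ := exterior_bound h (k := L + n + 2) (N := 2 * (L + n + 2) - 2) (by omega) (by omega)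
    (by omega)
  have hcomp : IsCompact (Set.Icc 0 T ×ˢ Metric.closedBall (0 : Fin n → ℝ) R) :=
    isCompact_Icc.prod (isCompact_closedBall _ _)
  have hex : ∀ w : List (Option (Fin n)), ∃ M, ∀ z ∈ Set.Icc 0 T ×ˢ Metric.closedBall (0 : Fin n → ℝ) R,
      |Dw w U z| ≤ M := fun w => hcomp.exists_bound_of_continuousOn (Dw_cont w h.hU).continuousOn
  choose Mw hMw using hex
  have hfin : {w : List (Option (Fin n)) | w.length ≤ L}.Finite := List.finite_length_le _ _
  obtain ⟨M, hM⟩ := (hfin.image Mw).bddAbove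
  refine ⟨max M 1, by positivity, fun t ht x w h1 h2 => ?_⟩
  have hIco : ∀ t ∈ Set.Ico 0 T, |Dw w U (t, x)| ≤ max M 1 := by
    intro t ht
    rcases le_total R ‖x‖ with hx | hx
    · exact (hR t ht x hx w h1 (by omega)).trans (le_max_right _ _)
    · exact (hMw w (t, x) ⟨⟨ht.1, ht.2.le⟩, by simpa using hx⟩).trans
        ((hM ⟨w, h2, rfl⟩).trans (le_max_left _ _))
  have hcont : Continuous fun s : ℝ => |Dw w U (s, x)| := by
    have := Dw_cont w h.hU
    fun_prop
  have hcl : IsClosed {s : ℝ | |Dw w U (s, x)| ≤ max M 1} := isClosed_le hcont continuous_const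
  have hsub := hcl.closure_subset_iff.2 (show Set.Ico 0 T ⊆ _ from hIco)
  rw [closure_Ico h.hT.ne] at hsub
  exact hsub ht

end exterior

/-! ### Trilinear estimate and integration in time -/

section trilinear
variable {n : ℕ} {a b c κ T : ℝ} {U : ℝ × (Fin n → ℝ) → ℝ}

/-- Cauchy–Schwarz in the form produced by Young's inequality with a free parameter. -/
lemma le_of_young {I P H K e E : ℝ} (hH : 0 ≤ H) (he : 0 ≤ e)
    (h : ∀ s : ℝ, 0 < s → I ≤ (s * P + s⁻¹ * H) / 2) (hP : P ≤ K * (e * E)) (hH' : H ≤ K * E) :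
    I ≤ K * (√e * E) := by
  rcases he.eq_or_lt with h0 | h0
  · subst h0
    simp only [sqrt_zero, zero_mul, mul_zero] at hP ⊢
    by_contra! hI
    have h1 := h ((H + 1) / I) (by positivity)
    have h2 : (H + 1) / I * P ≤ 0 := mul_nonpos_of_nonneg_of_nonpos (by positivity) hP
    rw [inv_div] at h1
    have h3 : I / (H + 1) * H ≤ I := by
      rw [div_mul_eq_mul_div, div_le_iff₀ (by positivity)]; nlinarith
    linarith
  -- for `e > 0` the optimal parameter is `s = 1 / √e`; for `e = 0` a large `s` suffices
  · have hs : 0 < √e := sqrt_pos.2 h0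
    have h1 := h (√e)⁻¹ (inv_pos.2 hs)
    have h2 : (√e)⁻¹ * P ≤ K * (√e * E) := by
      rw [inv_mul_le_iff₀ hs]
      refine hP.trans (le_of_eq ?_)
      nth_rewrite 1 [← mul_self_sqrt he]; ring
    have h3 : (√e)⁻¹⁻¹ * H ≤ K * (√e * E) := by
      rw [inv_inv]
      refine (mul_le_mul_of_nonneg_left hH' hs.le).trans (le_of_eq (by ring))
    linarith

/-- A derivative of order `|p|` has `N + 1 - |p|` further derivatives in `L²` controlled by `Em N`. -/
lemma Psq_le (h : Sol a b c κ T U) {N k : ℕ} {t : ℝ} (ht : t ∈ Set.Icc 0 T)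
    {p : List (Option (Fin n))} (hp : 1 ≤ p.length) (hk : k + p.length ≤ N + 1) :
    Psq k (fun x => Dw p U (t, x)) ≤
      (1 + n) * (C0 n c * (3 / 2 + 2 * c ^ 2) * Em N (fun t x => U (t, x)) t) := by
  have hb : ∀ x, 1 / 2 ≤ 1 - a * D none U (t, x) ∧ 1 - a * D none U (t, x) ≤ 3 / 2 :=
    fun x => ⟨h.lo (t, x) ht, h.hi (t, x) ht⟩
  have key := fun (w : List (Option (Fin n))) h1 h2 => XX_le h.hu h.hc N hb (w := w) h1 h2
  unfold Psq
  have h1 := key p hp (by omega)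
  have h2 : ∀ j : Fin n, L2sq ((pd j)^[k] fun x => Dw p U (t, x)) ≤
      C0 n c * (3 / 2 + 2 * c ^ 2) * Em N (fun t x => U (t, x)) t := by
    intro j
    rw [pd_iter_slice (Dw_smooth p h.hU), ← Dw_append]
    exact key _ (by simp; omega) (by simp; omega)
  have h3 := Finset.sum_le_card_nsmul Finset.univ _ _ fun j _ => h2 j
  rw [Finset.card_univ, Fintype.card_fin, nsmul_eq_mul] at h3
  rw [add_mul, one_mul]
  exact add_le_add h1 h3

/-- The trilinear estimate controlling the source terms: the factor of lower order is measured in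
the energy of order `m - 1`, the other two in the energy of order `m`. -/
lemma trilinear (hn : 1 ≤ n) (hc : 0 < c) {m : ℕ} (hm : n / 2 + 3 ≤ m) :
    ∃ K : ℝ, 0 < K ∧ ∀ (a b κ T : ℝ) (U : ℝ × (Fin n → ℝ) → ℝ), Sol a b c κ T U →
      ∀ t ∈ Set.Icc 0 T, ∀ p q r : List (Option (Fin n)), 1 ≤ p.length → 1 ≤ q.length →
        p.length ≤ m + 1 → q.length ≤ m + 1 → p.length + q.length ≤ m + 3 → 1 ≤ r.length →
        r.length ≤ m + 1 → ∫ x, |Dw p U (t, x) * Dw q U (t, x) * Dw r U (t, x)| ≤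
          K * (√(Em (m - 1) (fun t x => U (t, x)) t) * Em m (fun t x => U (t, x)) t) := by
  have hex : ∀ i j : ℕ, ∃ K > (0 : ℝ), i ≤ m → j ≤ m + 1 → i + j ≤ m + 3 →
      ∀ f g : (Fin n → ℝ) → ℝ, IsSchwartz f → IsSchwartz g →
        ∫ x, (f x * g x) ^ 2 ≤ K * (Psq (m - i) f * Psq (m + 1 - j) g) := by
    intro i j
    by_cases hij : i ≤ m ∧ j ≤ m + 1 ∧ i + j ≤ m + 3
    · obtain ⟨K, hK, h⟩ := bilinear hn (m - i) (m + 1 - j) (by omega)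
      exact ⟨K, hK, fun _ _ _ => h⟩
    · exact ⟨1, one_pos, fun h1 h2 h3 => absurd ⟨h1, h2, h3⟩ hij⟩
  choose Kf hKf hKb using hex
  set B := C0 n c * (3 / 2 + 2 * c ^ 2) with hB
  have hC0 : 0 < C0 n c := by unfold C0; positivity
  have hBp : 0 < B := by positivity
  set K1 := ∑ i ∈ Finset.range (m + 2), ∑ j ∈ Finset.range (m + 2), Kf i j with hK1
  have hK1le : ∀ i j, i ≤ m + 1 → j ≤ m + 1 → Kf i j ≤ K1 := by
    intro i j hi hj
    refine le_trans ?_ (Finset.single_le_sum (f := fun i => ∑ j ∈ Finset.range (m + 2), Kf i j)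
      (fun i _ => Finset.sum_nonneg fun j _ => (hKf i j).le)
      (Finset.mem_range.2 (by omega : i < m + 2)))
    exact Finset.single_le_sum (f := fun j => Kf i j) (fun j _ => (hKf i j).le)
      (Finset.mem_range.2 (by omega : j < m + 2))
  have hK1p : 0 < K1 := (hKf 0 0).trans_le (hK1le 0 0 (by omega) (by omega))
  refine ⟨K1 * ((1 + n) * B) ^ 2 + B, by positivity, ?_⟩
  intro a b κ T U h t ht
  set e := Em (m - 1) (fun t x => U (t, x)) t with he
  set E := Em m (fun t x => U (t, x)) t with hE
  have he0 : 0 ≤ e := Em_nonneg h.hu _ _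
  have hE0 : 0 ≤ E := Em_nonneg h.hu _ _
  have main : ∀ p q r : List (Option (Fin n)), 1 ≤ p.length → 1 ≤ q.length →
        p.length ≤ q.length → q.length ≤ m + 1 → p.length + q.length ≤ m + 3 → 1 ≤ r.length →
        r.length ≤ m + 1 → ∫ x, |Dw p U (t, x) * Dw q U (t, x) * Dw r U (t, x)| ≤
          (K1 * ((1 + n) * B) ^ 2 + B) * (√e * E) := by
    intro p q r hp hq hpq hq' hs hr hr'
    have sp := h.schw p t
    have sq := h.schw q t
    have sr := h.schw r t
    have h1 := hKb p.length q.length (by omega) hq' hs _ _ sp sq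
    have hPp := Psq_le h (N := m - 1) ht hp (k := m - p.length) (by omega)
    have hPq := Psq_le h (N := m) ht hq (k := m + 1 - q.length) (by omega)
    have hPq0 : 0 ≤ Psq (m + 1 - q.length) fun x => Dw q U (t, x) :=
      add_nonneg (integral_nonneg fun _ => sq_nonneg _)
        (Finset.sum_nonneg fun _ _ => integral_nonneg fun _ => sq_nonneg _)
    have hP : ∫ x, (Dw p U (t, x) * Dw q U (t, x)) ^ 2 ≤
        (K1 * ((1 + n) * B) ^ 2 + B) * (e * E) := by
      refine h1.trans (le_trans (b := K1 * (((1 + n) * (B * e)) * ((1 + n) * (B * E)))) ?_ ?_)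
      · refine mul_le_mul (hK1le _ _ (by omega) hq') (mul_le_mul hPp hPq hPq0 (by positivity))
          (mul_nonneg ?_ hPq0) hK1p.le
        exact add_nonneg (integral_nonneg fun _ => sq_nonneg _)
          (Finset.sum_nonneg fun _ _ => integral_nonneg fun _ => sq_nonneg _)
      · have : 0 ≤ B * (e * E) := by positivity
        nlinarith
    have hH : ∫ x, Dw r U (t, x) ^ 2 ≤ (K1 * ((1 + n) * B) ^ 2 + B) * E := by
      refine (XX_le h.hu h.hc m (fun x => ⟨h.lo (t, x) ht, h.hi (t, x) ht⟩) hr hr').trans ?_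
      refine mul_le_mul_of_nonneg_right ?_ hE0
      rw [← hB]; linarith [show 0 ≤ K1 * ((1 + n) * B) ^ 2 by positivity]
    refine le_of_young (P := ∫ x, (Dw p U (t, x) * Dw q U (t, x)) ^ 2)
      (H := ∫ x, Dw r U (t, x) ^ 2) (integral_nonneg fun _ => sq_nonneg _)
      he0 (fun s hs => ?_) hP hH
    have i1 := ((sp.mul sq).sq.integrable.const_mul s)
    have i2 := (sr.sq.integrable.const_mul s⁻¹)
    rw [← integral_const_mul, ← integral_const_mul, ← integral_add i1 i2, ← integral_div]
    refine integral_mono ((sp.mul sq).mul sr).integrable.abs ((i1.add i2).div_const 2) fun x => ?_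
    rw [abs_mul]
    set F := |Dw p U (t, x) * Dw q U (t, x)| with hF
    set G := |Dw r U (t, x)| with hG
    rw [← sq_abs (Dw p U (t, x) * Dw q U (t, x)), ← sq_abs (Dw r U (t, x)), ← hF, ← hG]
    have h5 : 0 ≤ s⁻¹ * (s * F - G) ^ 2 := by positivity
    have h6 : s⁻¹ * (s * F - G) ^ 2 = s * F ^ 2 + s⁻¹ * G ^ 2 - 2 * (F * G) := by
      field_simp; ring
    linarith
  intro p q r hp hq hp' hq' hs hr hr'
  rcases le_total p.length q.length with hpq | hpq
  · exact main p q r hp hq hpq hq' hs hr hr'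
  · simp only [mul_comm (Dw p U _)]
    exact main q p r hq hp hpq hp' (by omega) hr hr'

/-- Bound in `L¹` of a quadratic source, multiplied by `y`, from bounds on its terms. -/
lemma Src.integral_bound {N k : ℕ} {f} (h : Src U κ N k f) {t : ℝ} {y : (Fin n → ℝ) → ℝ} {B : ℝ}
    (hB : ∀ p q : List (Option (Fin n)), 1 ≤ p.length → 1 ≤ q.length → p.length ≤ N + 1 →
      q.length ≤ N + 1 → p.length + q.length ≤ N + 3 →
      Integrable (fun x => Dw p U (t, x) * Dw q U (t, x) * y x) ∧
        ∫ x, |Dw p U (t, x) * Dw q U (t, x) * y x| ≤ B) :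
    Integrable (fun x => f (t, x) * y x) ∧ ∫ x, |f (t, x) * y x| ≤ k * (κ * B) := by
  induction h with
  | zero => simp
  | term r p q hr hp hq hp' hq' h =>
    obtain ⟨h1, h2⟩ := hB p q hp hq hp' hq' h
    simp only [mul_assoc r, abs_mul r, integral_const_mul, Nat.cast_one, one_mul]
    exact ⟨h1.const_mul r, mul_le_mul hr h2 (integral_nonneg fun _ => abs_nonneg _)
      ((abs_nonneg _).trans hr)⟩
  | add _ _ h1 h2 =>
    obtain ⟨i1, b1⟩ := h1
    obtain ⟨i2, b2⟩ := h2
    simp only [add_mul]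
    refine ⟨i1.add i2, ?_⟩
    have : ∫ x, (|_ + _| : ℝ) ≤ _ := integral_mono (i1.add i2).abs (i1.abs.add i2.abs)
      fun x => abs_add_le _ _
    refine this.trans ?_
    rw [integral_add' i1.abs i2.abs]
    push_cast
    linarith

/-- The energy production is controlled by the trilinear estimate. -/
lemma production_bound (hn : 1 ≤ n) (hc : 0 < c) {m : ℕ} (hm : n / 2 + 3 ≤ m) :
    ∃ K : ℝ, 0 < K ∧ ∀ (a b κ T : ℝ) (U : ℝ × (Fin n → ℝ) → ℝ), Sol a b c κ T U →
      ∀ f : (Σ _ : ℕ, Fin n → ℕ) → ℝ × (Fin n → ℝ) → ℝ,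
      (∀ p ∈ idx n m, ∃ k, Src U κ m k (f p) ∧ k ≤ srcCount n m + (1 + n)) →
      ∀ t ∈ Set.Icc 0 T, Integrable (fun x => Qs U m f (t, x)) ∧ ∫ x, |Qs U m f (t, x)| ≤
        K * κ * (√(Em (m - 1) (fun t x => U (t, x)) t) * Em m (fun t x => U (t, x)) t) := by
  obtain ⟨K, hK, htri⟩ := trilinear hn hc hm
  refine ⟨((idx n m).card + 1) * (2 * ((srcCount n m + (1 + n) : ℕ) * K)), ?_, ?_⟩
  · have : 0 < srcCount n m + (1 + n) := by omega
    positivity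
  intro a b κ T U h f hf t ht
  have hκ := h.κ_nonneg
  set Z := √(Em (m - 1) (fun t x => U (t, x)) t) * Em m (fun t x => U (t, x)) t with hZ
  have hZ0 : 0 ≤ Z := mul_nonneg (sqrt_nonneg _) (Em_nonneg h.hu _ _)
  have key : ∀ p ∈ idx n m, Integrable (fun x => f p (t, x) * Dw (none :: Wd p.1 p.2) U (t, x)) ∧
      ∫ x, |f p (t, x) * Dw (none :: Wd p.1 p.2) U (t, x)| ≤
        (srcCount n m + (1 + n) : ℕ) * (κ * (K * Z)) := by
    intro p hp
    obtain ⟨l, hl, hl'⟩ := hf p hp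
    have hw := idx_le hp
    have := hl.integral_bound (t := t) (y := fun x => Dw (none :: Wd p.1 p.2) U (t, x))
      (B := K * Z) fun p' q' h1 h2 h3 h4 h5 =>
        ⟨(((h.schw p' t).mul (h.schw q' t)).mul (h.schw _ t)).integrable,
          htri a b κ T U h t ht p' q' _ h1 h2 h3 h4 h5 (by simp) (by simp; omega)⟩
    refine ⟨this.1, this.2.trans ?_⟩
    have hl2 : (l : ℝ) ≤ ((srcCount n m + (1 + n) : ℕ) : ℝ) := by exact_mod_cast hl'
    gcongr
  have hi : ∀ p ∈ idx n m, Integrable fun x => wt p.1 p.2 *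
      (2 * f p (t, x) * Dw (none :: Wd p.1 p.2) U (t, x)) := by
    intro p hp
    simp only [mul_assoc (2 : ℝ)]
    exact ((key p hp).1.const_mul 2).const_mul _
  have hQi : Integrable fun x => Qs U m f (t, x) := integrable_finsetSum _ hi
  refine ⟨hQi, ?_⟩
  calc ∫ x, |Qs U m f (t, x)|
      ≤ ∫ x, ∑ p ∈ idx n m, |wt p.1 p.2 * (2 * f p (t, x) * Dw (none :: Wd p.1 p.2) U (t, x))| :=
        integral_mono hQi.abs (integrable_finsetSum _ fun p hp => (hi p hp).abs)
          fun x => Finset.abs_sum_le_sum_abs _ _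
    _ = ∑ p ∈ idx n m, ∫ x, |wt p.1 p.2 * (2 * f p (t, x) * Dw (none :: Wd p.1 p.2) U (t, x))| :=
        integral_finsetSum _ fun p hp => (hi p hp).abs
    _ ≤ (idx n m).card • (2 * ((srcCount n m + (1 + n) : ℕ) * (κ * (K * Z)))) := by
        refine Finset.sum_le_card_nsmul _ _ _ fun p hp => ?_
        simp only [mul_assoc (2 : ℝ), abs_mul (wt _ _), abs_mul (2 : ℝ), integral_const_mul]
        rw [abs_of_pos (wt_pos _ _), abs_of_pos (by norm_num : (0 : ℝ) < 2)]
        have h2 := mul_le_mul_of_nonneg_left (key p hp).2 (by norm_num : (0 : ℝ) ≤ 2)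
        refine (mul_le_mul_of_nonneg_left h2 (wt_pos _ _).le).trans ?_
        exact mul_le_of_le_one_left (by positivity) (wt_le_one _ _)
    _ ≤ _ := by
        rw [nsmul_eq_mul]
        have : (0 : ℝ) ≤ 2 * ((srcCount n m + (1 + n) : ℕ) * (κ * (K * Z))) := by positivity
        nlinarith

/-- Removing the cutoff by letting its radius tend to infinity. -/
lemma tendsto_cut {g : (Fin n → ℝ) → ℝ} (hg : Integrable g) {Λ : ℝ} (hΛ : 0 ≤ Λ) (t : ℝ) :
    Filter.Tendsto (fun ρ => ∫ x, cut Λ ρ 1 0 (t, x) * g x) Filter.atTop (nhds (∫ x, g x)) := by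
  refine tendsto_integral_filter_of_dominated_convergence (fun x => ‖g x‖)
    (Filter.Eventually.of_forall fun ρ => ?_) (Filter.Eventually.of_forall fun ρ =>
      Filter.Eventually.of_forall fun x => ?_) hg.norm (Filter.Eventually.of_forall fun x => ?_)
  · have hc := (cut_isCut hΛ one_pos ρ (0 : Fin n → ℝ)).smooth.continuous
    exact (by fun_prop : Continuous fun x => cut Λ ρ 1 0 (t, x)).aestronglyMeasurable.mul
      hg.aestronglyMeasurable
  · have hχ := cut_isCut hΛ one_pos ρ (0 : Fin n → ℝ)
    rw [norm_mul, Real.norm_of_nonneg (hχ.nonneg _)]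
    exact mul_le_of_le_one_left (norm_nonneg _) (hχ.le_one _)
  · refine tendsto_const_nhds.congr' ?_
    filter_upwards [Filter.eventually_ge_atTop (‖x‖ + Λ * t + 1)] with ρ hρ
    rw [cut_eq_one one_pos, one_mul]
    intro i
    have := norm_le_pi_norm x i
    rw [Real.norm_eq_abs] at this
    simp only [Pi.zero_apply, sub_zero]
    linarith

lemma cut_le_FE (h : Sol a b c κ T U) (N : ℕ) {Λ : ℝ} (hΛ : 0 ≤ Λ) (ρ : ℝ) {t : ℝ}
    (ht : t ∈ Set.Icc 0 T) : ∫ x, cut Λ ρ 1 0 (t, x) * eN a c U N (t, x) ≤ FE a c U N t := by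
  refine integral_mono (cut_integrable (eN_smooth a c h.hU N).continuous hΛ one_pos 0 t)
    (eN_schwartz h.hu a c N t).integrable fun x => ?_
  exact mul_le_of_le_one_left (eN_nonneg (h.lo (t, x) ht))
    ((cut_isCut hΛ one_pos ρ 0).le_one _)

lemma Em_le_FE (h : Sol a b c κ T U) (N : ℕ) {t : ℝ} (ht : t ∈ Set.Icc 0 T) :
    min (1 / 2) (c ^ 2) * Em N (fun t x => U (t, x)) t ≤ FE a c U N t :=
  le_FE h.hu N fun x => h.lo (t, x) ht

/-- The energies stay bounded on the time strip. -/
lemma Em_bounded (h : Sol a b c κ T U) {N : ℕ} (hN : 1 ≤ N) :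
    ∃ C : ℝ, ∀ t ∈ Set.Icc 0 T, Em N (fun t x => U (t, x)) t ≤ C := by
  obtain ⟨M, hM, hMb⟩ := strip_bound h (N + 2)
  obtain ⟨C, hC, hg⟩ := local_gronwall h hN (k := N + 2) (by omega) hM
  have hc := h.hc
  have hmin : 0 < min (1 / 2) (c ^ 2) := by positivity
  set Λ := (|b| * M + c ^ 2) / min (1 / 2) (c ^ 2) with hΛd
  have hΛ : 0 ≤ Λ := by positivity
  have hΛ' : |b| * M + c ^ 2 ≤ Λ * min (1 / 2) (c ^ 2) := by
    rw [hΛd, div_mul_cancel₀ _ hmin.ne']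
  have h0 : (0 : ℝ) ∈ Set.Icc 0 T := ⟨le_rfl, h.hT.le⟩
  refine ⟨exp (C * T) * FE a c U N 0 / min (1 / 2) (c ^ 2), fun t ht => ?_⟩
  rw [le_div_iff₀ hmin, mul_comm]
  refine (Em_le_FE h N ht).trans ?_
  refine le_of_tendsto (tendsto_cut (eN_schwartz h.hu a c N t).integrable hΛ t)
    (Filter.Eventually.of_forall fun ρ => ?_)
  refine (hg Λ ρ 1 0 hΛ one_pos hΛ' T le_rfl (fun s hs x _ w h1 h2 => hMb s hs x w h1 h2) t ht).trans
    ?_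
  have hFE : 0 ≤ FE a c U N 0 := integral_nonneg fun x => eN_nonneg (h.lo (0, x) h0)
  refine mul_le_mul (exp_le_exp.2 (by gcongr; exact ht.2)) (cut_le_FE h N hΛ ρ h0)
    (integral_nonneg fun x => mul_nonneg ((cut_isCut hΛ one_pos ρ 0).nonneg _)
      (eN_nonneg (h.lo (0, x) h0))) (exp_pos _).le

lemma Em_measurable (h : Sol a b c κ T U) (N : ℕ) : Measurable (Em N fun t x => U (t, x)) := by
  have hX : ∀ w, Measurable fun t => XX U t w := by
    intro w
    have : StronglyMeasurable (Function.uncurry fun (t : ℝ) (x : Fin n → ℝ) => Dw w U (t, x) ^ 2) :=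
      ((Dw_cont w h.hU).pow 2).stronglyMeasurable
    exact this.integral_prod_right.measurable
  have : (Em N fun t x => U (t, x)) = fun t => _ := funext fun t => Em_eq h.hu N t
  rw [this]
  exact (Finset.measurable_fun_sum _ fun A _ => Finset.measurable_fun_sum _ fun j _ => hX _).add
    (Finset.measurable_fun_sum _ fun i _ => Finset.measurable_fun_sum _ fun A _ => hX _)

/-- The integrand on the right-hand side is integrable, so its time integral carries no junk value. -/
lemma rhs_integrable (h : Sol a b c κ T U) {m : ℕ} (hm : 2 ≤ m) :
    IntegrableOn (fun τ => √(Em (m - 1) (fun t x => U (t, x)) τ) * Em m (fun t x => U (t, x)) τ)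
      (Set.Icc 0 T) := by
  obtain ⟨C1, h1⟩ := Em_bounded h (N := m - 1) (by omega)
  obtain ⟨C2, h2⟩ := Em_bounded h (N := m) (by omega)
  refine Measure.integrableOn_of_bounded (M := √C1 * C2) measure_Icc_lt_top.ne
    ((Em_measurable h _).sqrt.mul (Em_measurable h _)).aestronglyMeasurable ?_
  filter_upwards [ae_restrict_mem measurableSet_Icc] with t ht
  rw [Real.norm_of_nonneg (mul_nonneg (sqrt_nonneg _) (Em_nonneg h.hu _ _))]
  exact mul_le_mul (sqrt_le_sqrt (h1 t ht)) (h2 t ht) (Em_nonneg h.hu _ _) (sqrt_nonneg _)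

/-- The integrated energy inequality. -/
lemma FE_growth (hn : 1 ≤ n) (hc : 0 < c) {m : ℕ} (hm : n / 2 + 3 ≤ m) :
    ∃ K : ℝ, 0 < K ∧ ∀ (a b κ T : ℝ) (U : ℝ × (Fin n → ℝ) → ℝ), Sol a b c κ T U →
      ∀ t ∈ Set.Icc 0 T, FE a c U m t ≤ FE a c U m 0 + K * κ * ∫ τ in (0 : ℝ)..t,
        √(Em (m - 1) (fun t x => U (t, x)) τ) * Em m (fun t x => U (t, x)) τ := by
  obtain ⟨K, hK, hprod⟩ := production_bound hn hc hm
  refine ⟨K, hK, fun a b κ T U h t ht => ?_⟩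
  obtain ⟨f, hf, hd⟩ := local_energy h (N := m) (by omega)
  obtain ⟨M, hM, hMb⟩ := strip_bound h 1
  have hmin : 0 < min (1 / 2) (c ^ 2) := by positivity
  set Λ := (|b| * M + c ^ 2) / min (1 / 2) (c ^ 2) with hΛd
  have hΛ : 0 ≤ Λ := by positivity
  have hΛ' : |b| * M + c ^ 2 ≤ Λ * min (1 / 2) (c ^ 2) := by
    rw [hΛd, div_mul_cancel₀ _ hmin.ne']
  have h0 : (0 : ℝ) ∈ Set.Icc 0 T := ⟨le_rfl, h.hT.le⟩
  refine le_of_tendsto (tendsto_cut (eN_schwartz h.hu a c m t).integrable hΛ t)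
    (Filter.Eventually.of_forall fun ρ => ?_)
  set Y : ℝ → ℝ := fun s => ∫ x, cut Λ ρ 1 0 (s, x) * eN a c U m (s, x) with hY
  have hder : ∀ s ∈ Set.Icc 0 t, ∃ y, HasDerivAt Y y s ∧ y ≤
      K * κ * (√(Em (m - 1) (fun t x => U (t, x)) s) * Em m (fun t x => U (t, x)) s) := by
    intro s hs
    have hsT : s ∈ Set.Icc 0 T := ⟨hs.1, hs.2.trans ht.2⟩
    obtain ⟨y, hy, hle⟩ := hd Λ M ρ 1 0 hΛ one_pos hΛ' s hsT fun x _ j =>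
      hMb s hsT x [some j] (by simp) (by simp)
    obtain ⟨hQ1, hQ2⟩ := hprod a b κ T U h f hf s hsT
    refine ⟨y, hy, hle.trans (le_trans ?_ hQ2)⟩
    refine integral_mono (cut_integrable (Qs_smooth h.hU hf).continuous hΛ one_pos 0 s) hQ1.abs
      fun x => ?_
    have hχ := cut_isCut hΛ one_pos ρ (0 : Fin n → ℝ)
    refine (le_abs_self _).trans ?_
    rw [abs_mul, abs_of_nonneg (hχ.nonneg _)]
    exact mul_le_of_le_one_left (abs_nonneg _) (hχ.le_one _)
  choose! Y' hY' hle using hder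
  have hInteg := (rhs_integrable h (m := m) (by omega)).mono_set (Set.Icc_subset_Icc_right ht.2)
  have := intervalIntegral.sub_le_integral_of_hasDeriv_right_of_le ht.1
    (fun s hs => (hY' s hs).continuousAt.continuousWithinAt)
    (fun s hs => (hY' s (Set.Ioo_subset_Icc_self hs)).hasDerivWithinAt) (hInteg.const_mul (K * κ))
    (fun s hs => hle s (Set.Ioo_subset_Icc_self hs))
  rw [intervalIntegral.integral_const_mul] at this
  have h1 := cut_le_FE h m hΛ ρ h0
  change Y t ≤ _
  change Y 0 ≤ _ at h1
  linarith

end trilinear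

/-! ### The a priori estimate -/

/-- A solution of the Kuznetsov equation satisfying the smallness condition on `∂_t u` solves the
associated quasilinear equation with coefficient `1 - αε ∂_t u` in `[1/2, 3/2]`. -/
lemma sol_of_kuznetsov {n : ℕ} {c α β ε T : ℝ} (hc : 0 < c) (hα : 0 < α) (hβ : 0 < β) (hε : 0 < ε)
    (hT : 0 < T) {u : ℝ → (Fin n → ℝ) → ℝ} (hu : SmoothSchwartz u)
    (hpde : ∀ t ∈ Set.Icc (0 : ℝ) T, InviscidKuznetsov c α β ε u t)
    (hsmall : ∀ t ∈ Set.Icc (0 : ℝ) T, supNorm (fun x => dt u t x) ≤ 1 / (2 * α * ε)) :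
    Sol (α * ε) (β * ε) c (max α β * ε) T (fun p => u p.1 p.2) := by
  set U : ℝ × (Fin n → ℝ) → ℝ := fun p => u p.1 p.2 with hUd
  have hU : ContDiff ℝ (⊤ : ℕ∞) U := hu.1
  have hdt : ∀ t, dt u t = fun x => D none U (t, x) := fun t => funext fun x =>
    (hasDerivAt_time hU t x).deriv
  have hb : ∀ z : ℝ × (Fin n → ℝ), z.1 ∈ Set.Icc 0 T → |α * ε * D none U z| ≤ 1 / 2 := by
    rintro ⟨t, x⟩ ht
    obtain ⟨M, hM⟩ := (schwartz_Dw hu [none] t).bdd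
    have h1 : |D none U (t, x)| ≤ 1 / (2 * α * ε) := by
      refine le_trans ?_ (hsmall t ht)
      simp only [supNorm, hdt]
      exact le_ciSup (f := fun x => |D none U (t, x)|) ⟨M, by rintro _ ⟨y, rfl⟩; exact hM y⟩ x
    rw [abs_mul, abs_of_pos (mul_pos hα hε)]
    refine (mul_le_mul_of_nonneg_left h1 (mul_pos hα hε).le).trans (le_of_eq ?_)
    field_simp
  refine ⟨hT, hc, ?_, ?_, hu, ?_, fun z hz => ?_, fun z hz => ?_⟩
  · rw [abs_of_pos (mul_pos hα hε)]; gcongr; exact le_max_left _ _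
  · rw [abs_of_pos (mul_pos hβ hε)]; gcongr; exact le_max_right _ _
  · rintro ⟨t, x⟩ ht
    have h := hpde t ht x
    have h2 : dtIter 2 u t x = D none (D none U) (t, x) :=
      congrFun (dtIter_slice u hu.1 2 t) x
    have hp : ∀ i, pd i (u t) = fun x => D (some i) U (t, x) := fun i => pd_slice hU t i
    have hpp : ∀ i, pd i (fun x => D (some i) U (t, x)) =
        fun x => D (some i) (D (some i) U) (t, x) := fun i => pd_slice (D_smooth _ hU) t i
    have hpd : ∀ i, pd i (fun x => D none U (t, x)) = fun x => D (some i) (D none U) (t, x) :=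
      fun i => pd_slice (D_smooth _ hU) t i
    simp only [lap, gradDot, hdt, hp, hpp, hpd, h2] at h
    simp only [Lop]
    linarith
  · have := (abs_le.1 (hb z hz)).2; linarith
  · have := (abs_le.1 (hb z hz)).1; linarith

/-- Second a priori estimate for the inviscid Kuznetsov equation (Proposition 2): for
`m ≥ ⌊n/2⌋ + 3` there is a constant `D_m > 0` depending only on `m`, `n` and `c` such that
every smooth spatially-Schwartz solution `u` on `[0,T]` with
`‖∂_t u(t)‖_∞ ≤ 1/(2αε)` satisfies, with `B = (3 + 2c²)/min(1/2, c²)`,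
`E_m[u](t) ≤ B E_m[u](0) + D_m max(α,β) ε ∫₀ᵗ E_{m-1}[u](τ)^{1/2} E_m[u](τ) dτ`. -/
theorem kuznetsov_second_apriori_estimate (n : ℕ) (hn : 1 ≤ n) (c : ℝ) (hc : 0 < c)
    (m : ℕ) (hm : n / 2 + 3 ≤ m) :
    ∃ Dm > (0 : ℝ), ∀ α β ε T : ℝ, 0 < α → 0 < β → 0 < ε → 0 < T →
      ∀ u : ℝ → (Fin n → ℝ) → ℝ, SmoothSchwartz u →
        (∀ t ∈ Set.Icc (0 : ℝ) T, InviscidKuznetsov c α β ε u t) →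
        (∀ t ∈ Set.Icc (0 : ℝ) T, supNorm (fun x => dt u t x) ≤ 1 / (2 * α * ε)) →
        ∀ t ∈ Set.Icc (0 : ℝ) T,
          Em m u t ≤ (3 + 2 * c ^ 2) / min (1 / 2) (c ^ 2) * Em m u 0 +
            Dm * max α β * ε *
              ∫ τ in (0 : ℝ)..t, Real.sqrt (Em (m - 1) u τ) * Em m u τ := by
  obtain ⟨K, hK, hFE⟩ := FE_growth hn hc hm
  have hmin : 0 < min (1 / 2) (c ^ 2) := by positivity
  refine ⟨K / min (1 / 2) (c ^ 2), by positivity, ?_⟩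
  intro α β ε T hα hβ hε hT u hu hpde hsmall t ht
  have h := sol_of_kuznetsov hc hα hβ hε hT hu hpde hsmall
  have h0 : (0 : ℝ) ∈ Set.Icc 0 T := ⟨le_rfl, hT.le⟩
  have h1 : min (1 / 2) (c ^ 2) * Em m u t ≤ _ := Em_le_FE h m ht
  have h2 := hFE _ _ _ _ _ h t ht
  have h3 : _ ≤ (3 / 2 + 2 * c ^ 2) * Em m u 0 := FE_le hu (a := α * ε) (c := c) m
    fun x => h.hi (0, x) h0
  have h4 : 0 ≤ Em m u 0 := Em_nonneg hu m 0
  have h5 : Em m u t ≤ ((3 + 2 * c ^ 2) * Em m u 0 + K * (max α β * ε) *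
      ∫ τ in (0 : ℝ)..t, √(Em (m - 1) u τ) * Em m u τ) / min (1 / 2) (c ^ 2) := by
    rw [le_div_iff₀ hmin, mul_comm]
    refine h1.trans (h2.trans ?_)
    gcongr
    exact h3.trans (by nlinarith)
  refine h5.trans (le_of_eq ?_)
  ring
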